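/- Let V be a nontrivial simple cuspidal weight 𝔮-module. Then Q_j v = 0 for all j ∈ ℤ and all v ∈ V, and every weight space of V is at most one-dimensional (so V is a module of the intermediate series over the twisted Heisenberg–Virasoro algebra spanned by the L_m and H_m). -/

import Mathlib

open Submodule

/-- A module over the Lie superalgebra `𝔮` (with even part the twisted
Heisenberg–Virasoro algebra and odd part spanned by the `Q_m`): a `ℤ/2`-graded
complex vector space with parity-preserving operators `L m`, `H m`,
parity-reversing operators `Q m`, and a scalar `c₀` (the action of the central
element `C`), subject to the defining relations. -/
structure QRep (V : Type) [AddCommGroup V] [Module ℂ V] : Type where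
  L : ℤ → V →ₗ[ℂ] V
  H : ℤ → V →ₗ[ℂ] V
  Q : ℤ → V →ₗ[ℂ] V
  c₀ : ℂ
  even : Submodule ℂ V
  odd : Submodule ℂ V
  grading : IsCompl even odd
  L_even : ∀ (m : ℤ), ∀ v ∈ even, L m v ∈ even
  L_odd : ∀ (m : ℤ), ∀ v ∈ odd, L m v ∈ odd
  H_even : ∀ (m : ℤ), ∀ v ∈ even, H m v ∈ even
  H_odd : ∀ (m : ℤ), ∀ v ∈ odd, H m v ∈ odd
  Q_even : ∀ (m : ℤ), ∀ v ∈ even, Q m v ∈ odd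
  Q_odd : ∀ (m : ℤ), ∀ v ∈ odd, Q m v ∈ even
  rel_LL : ∀ (m n : ℤ) (v : V),
    L m (L n v) - L n (L m v) =
      ((n : ℂ) - (m : ℂ)) • L (m + n) v +
        ((1 / 12 : ℂ) * ((n : ℂ) ^ 3 - (n : ℂ)) *
          (if m + n = 0 then (1 : ℂ) else 0) * c₀) • v
  rel_HH : ∀ (m n : ℤ) (v : V),
    H m (H n v) - H n (H m v) =
      ((1 / 3 : ℂ) * (m : ℂ) * (if m + n = 0 then (1 : ℂ) else 0) * c₀) • v
  rel_LH : ∀ (m n : ℤ) (v : V),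
    L m (H n v) - H n (L m v) = (n : ℂ) • H (m + n) v
  rel_LQ : ∀ (m p : ℤ) (v : V),
    L m (Q p v) - Q p (L m v) = ((p : ℂ) - (m : ℂ) / 2) • Q (p + m) v
  rel_HQ : ∀ (m p : ℤ) (v : V),
    H m (Q p v) - Q p (H m v) = Q (m + p) v
  rel_QQ : ∀ (p q : ℤ) (v : V), Q p (Q q v) + Q q (Q p v) = 0

namespace QRep

variable {V : Type} [AddCommGroup V] [Module ℂ V]

/-- The composite operator `Q_{r₁} Q_{r₂} ⋯ Q_{r_k}` applied to a vector, for a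
list `[r₁, r₂, …, r_k]` of indices. -/
def Qcomp (ρ : QRep V) : List ℤ → V → V
  | [], v => v
  | r :: rs, v => ρ.Q r (ρ.Qcomp rs v)

/-- The weight space `V_μ = {v ∈ V : L₀ v = μ v}`. -/
def wt (ρ : QRep V) (μ : ℂ) : Submodule ℂ V :=
  Module.End.eigenspace (ρ.L 0) μ

/-- The parity components, indexed by `ZMod 2`. -/
def parity (ρ : QRep V) (τ : ZMod 2) : Submodule ℂ V :=
  if τ = 0 then ρ.even else ρ.odd

/-- `V` is a weight module: it is the sum of its weight spaces. -/
def IsWeight (ρ : QRep V) : Prop := (⨆ μ : ℂ, ρ.wt μ) = ⊤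

/-- `V` is cuspidal: a weight module with uniformly bounded weight multiplicities
in each parity. -/
def Cuspidal (ρ : QRep V) : Prop :=
  ρ.IsWeight ∧ ∃ p : ℕ, ∀ (μ : ℂ) (τ : ZMod 2),
    Module.rank ℂ ↥(ρ.wt μ ⊓ ρ.parity τ) ≤ (p : Cardinal)

/-- A subspace invariant under all the operators. -/
def IsSubmod (ρ : QRep V) (W : Submodule ℂ V) : Prop :=
  (∀ (m : ℤ), ∀ v ∈ W, ρ.L m v ∈ W) ∧ (∀ (m : ℤ), ∀ v ∈ W, ρ.H m v ∈ W) ∧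
    (∀ (m : ℤ), ∀ v ∈ W, ρ.Q m v ∈ W)

/-- A graded subspace invariant under all the operators. -/
def IsGradedSubmod (ρ : QRep V) (W : Submodule ℂ V) : Prop :=
  ρ.IsSubmod W ∧ W = (W ⊓ ρ.even) ⊔ (W ⊓ ρ.odd)

/-- The trivial representation: all operators act by zero. -/
def IsTrivialRep (ρ : QRep V) : Prop :=
  ∀ (m : ℤ) (v : V), ρ.L m v = 0 ∧ ρ.H m v = 0 ∧ ρ.Q m v = 0

/-- `V` is simple: nontrivial, and its only graded submodules are `⊥` and `⊤`. -/
def IsSimple (ρ : QRep V) : Prop :=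
  ¬ ρ.IsTrivialRep ∧
    ∀ W : Submodule ℂ V, ρ.IsGradedSubmod W → W = ⊥ ∨ W = ⊤

end QRep


namespace QRep

variable {V : Type} [AddCommGroup V] [Module ℂ V]

/-! ### Basic facts -/

theorem mem_wt (ρ : QRep V) {μ : ℂ} {v : V} : v ∈ ρ.wt μ ↔ ρ.L 0 v = μ • v :=
  Module.End.mem_eigenspace_iff

theorem LL (ρ : QRep V) (m n : ℤ) (h : m + n ≠ 0) (v : V) :
    ρ.L m (ρ.L n v) = ρ.L n (ρ.L m v) + ((n : ℂ) - (m : ℂ)) • ρ.L (m + n) v := by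
  have := ρ.rel_LL m n v
  rw [if_neg h] at this
  simp only [mul_zero, zero_mul, zero_smul, add_zero] at this
  rw [← this]; abel

theorem HH (ρ : QRep V) (m n : ℤ) (h : m + n ≠ 0) (v : V) :
    ρ.H m (ρ.H n v) = ρ.H n (ρ.H m v) := by
  have := ρ.rel_HH m n v
  rw [if_neg h] at this
  simp only [mul_zero, zero_mul, zero_smul] at this
  exact sub_eq_zero.mp this

theorem LH (ρ : QRep V) (m n : ℤ) (v : V) :
    ρ.L m (ρ.H n v) = ρ.H n (ρ.L m v) + (n : ℂ) • ρ.H (m + n) v := by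
  rw [← ρ.rel_LH m n v]; abel

theorem HL (ρ : QRep V) (m n : ℤ) (v : V) :
    ρ.H n (ρ.L m v) = ρ.L m (ρ.H n v) - (n : ℂ) • ρ.H (m + n) v := by
  rw [← ρ.rel_LH m n v]; abel

theorem LQ (ρ : QRep V) (m n : ℤ) (v : V) :
    ρ.L m (ρ.Q n v) = ρ.Q n (ρ.L m v) + ((n : ℂ) - (m : ℂ) / 2) • ρ.Q (n + m) v := by
  rw [← ρ.rel_LQ m n v]; abel

theorem HQ (ρ : QRep V) (m n : ℤ) (v : V) :
    ρ.H m (ρ.Q n v) = ρ.Q n (ρ.H m v) + ρ.Q (m + n) v := by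
  rw [← ρ.rel_HQ m n v]; abel

theorem QQ (ρ : QRep V) (m n : ℤ) (v : V) :
    ρ.Q m (ρ.Q n v) = - ρ.Q n (ρ.Q m v) :=
  eq_neg_of_add_eq_zero_left (ρ.rel_QQ m n v)

theorem L0L (ρ : QRep V) (n : ℤ) (v : V) :
    ρ.L 0 (ρ.L n v) = ρ.L n (ρ.L 0 v) + (n : ℂ) • ρ.L n v := by
  by_cases h : n = 0
  · subst h; simp
  · have := ρ.LL 0 n (by simpa using h) v
    simpa using this

theorem L_wt (ρ : QRep V) {μ : ℂ} {v : V} (hv : v ∈ ρ.wt μ) (k : ℤ) :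
    ρ.L k v ∈ ρ.wt (μ + k) := by
  rw [mem_wt] at *
  rw [L0L, hv, map_smul, add_smul]

theorem H_wt (ρ : QRep V) {μ : ℂ} {v : V} (hv : v ∈ ρ.wt μ) (k : ℤ) :
    ρ.H k v ∈ ρ.wt (μ + k) := by
  rw [mem_wt] at *
  rw [LH, hv, map_smul, add_smul, zero_add]

theorem Q_wt (ρ : QRep V) {μ : ℂ} {v : V} (hv : v ∈ ρ.wt μ) (k : ℤ) :
    ρ.Q k v ∈ ρ.wt (μ + k) := by
  rw [mem_wt] at *
  rw [LQ, hv, map_smul, add_smul]; simp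

theorem L_wt' (ρ : QRep V) {μ : ℂ} {v : V} (hv : v ∈ ρ.wt μ) (k : ℤ) {τ : ℂ}
    (h : τ = μ + k) : ρ.L k v ∈ ρ.wt τ := h ▸ ρ.L_wt hv k

theorem H_wt' (ρ : QRep V) {μ : ℂ} {v : V} (hv : v ∈ ρ.wt μ) (k : ℤ) {τ : ℂ}
    (h : τ = μ + k) : ρ.H k v ∈ ρ.wt τ := h ▸ ρ.H_wt hv k

theorem Q_wt' (ρ : QRep V) {μ : ℂ} {v : V} (hv : v ∈ ρ.wt μ) (k : ℤ) {τ : ℂ}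
    (h : τ = μ + k) : ρ.Q k v ∈ ρ.wt τ := h ▸ ρ.Q_wt hv k

/-- The parity involution. -/
noncomputable def sg (ρ : QRep V) : V →ₗ[ℂ] V :=
  LinearMap.ofIsCompl ρ.grading ρ.even.subtype (-ρ.odd.subtype)

theorem sg_even (ρ : QRep V) {v : V} (hv : v ∈ ρ.even) : ρ.sg v = v := by
  have := LinearMap.ofIsCompl_apply_left ρ.grading (φ := ρ.even.subtype)
    (ψ := (-ρ.odd.subtype)) ⟨v, hv⟩
  simpa [sg] using this

theorem sg_odd (ρ : QRep V) {v : V} (hv : v ∈ ρ.odd) : ρ.sg v = -v := by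
  have := LinearMap.ofIsCompl_apply_right ρ.grading (φ := ρ.even.subtype)
    (ψ := (-ρ.odd.subtype)) ⟨v, hv⟩
  simpa [sg] using this

theorem exists_dec (ρ : QRep V) (v : V) : ∃ a ∈ ρ.even, ∃ b ∈ ρ.odd, v = a + b := by
  have : v ∈ ρ.even ⊔ ρ.odd := by rw [ρ.grading.sup_eq_top]; trivial
  obtain ⟨a, ha, b, hb, h⟩ := Submodule.mem_sup.mp this
  exact ⟨a, ha, b, hb, h.symm⟩

theorem sg_L (ρ : QRep V) (k : ℤ) (v : V) : ρ.L k (ρ.sg v) = ρ.sg (ρ.L k v) := by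
  obtain ⟨a, ha, b, hb, rfl⟩ := ρ.exists_dec v
  simp only [map_add, ρ.sg_even ha, ρ.sg_odd hb, ρ.sg_even (ρ.L_even k a ha),
    ρ.sg_odd (ρ.L_odd k b hb), map_neg]

theorem sg_H (ρ : QRep V) (k : ℤ) (v : V) : ρ.H k (ρ.sg v) = ρ.sg (ρ.H k v) := by
  obtain ⟨a, ha, b, hb, rfl⟩ := ρ.exists_dec v
  simp only [map_add, ρ.sg_even ha, ρ.sg_odd hb, ρ.sg_even (ρ.H_even k a ha),
    ρ.sg_odd (ρ.H_odd k b hb), map_neg]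

theorem sg_Q (ρ : QRep V) (k : ℤ) (v : V) : ρ.Q k (ρ.sg v) = - ρ.sg (ρ.Q k v) := by
  obtain ⟨a, ha, b, hb, rfl⟩ := ρ.exists_dec v
  simp only [map_add, ρ.sg_even ha, ρ.sg_odd hb, ρ.sg_even (ρ.Q_odd k b hb),
    ρ.sg_odd (ρ.Q_even k a ha), map_neg]
  abel

theorem sg_wt (ρ : QRep V) {μ : ℂ} {v : V} (hv : v ∈ ρ.wt μ) : ρ.sg v ∈ ρ.wt μ := by
  rw [mem_wt] at *
  rw [sg_L, hv, map_smul]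

theorem comp_mem (ρ : QRep V) {W : Submodule ℂ V} (hs : ∀ v ∈ W, ρ.sg v ∈ W) {a b : V}
    (ha : a ∈ ρ.even) (hb : b ∈ ρ.odd) (h : a + b ∈ W) : a ∈ W ∧ b ∈ W := by
  have h1 := hs _ h
  rw [map_add, ρ.sg_even ha, ρ.sg_odd hb] at h1
  constructor
  · have := W.smul_mem (1/2 : ℂ) (W.add_mem h h1)
    convert this using 1
    module
  · have := W.smul_mem (1/2 : ℂ) (W.sub_mem h h1)
    convert this using 1
    module

theorem graded_of_sg (ρ : QRep V) (W : Submodule ℂ V) (hs : ∀ v ∈ W, ρ.sg v ∈ W) :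
    W = (W ⊓ ρ.even) ⊔ (W ⊓ ρ.odd) := by
  apply le_antisymm
  · intro v hv
    obtain ⟨a, ha, b, hb, rfl⟩ := ρ.exists_dec v
    obtain ⟨h1, h2⟩ := ρ.comp_mem hs ha hb hv
    exact Submodule.add_mem_sup ⟨h1, ha⟩ ⟨h2, hb⟩
  · exact sup_le inf_le_left inf_le_left

theorem IsSimple.cases {ρ : QRep V} (hS : ρ.IsSimple) (W : Submodule ℂ V)
    (hL : ∀ (m : ℤ), ∀ v ∈ W, ρ.L m v ∈ W) (hH : ∀ (m : ℤ), ∀ v ∈ W, ρ.H m v ∈ W)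
    (hQ : ∀ (m : ℤ), ∀ v ∈ W, ρ.Q m v ∈ W) (hs : ∀ v ∈ W, ρ.sg v ∈ W) : W = ⊥ ∨ W = ⊤ :=
  hS.2 W ⟨⟨hL, hH, hQ⟩, ρ.graded_of_sg W hs⟩

/-- Finite dimensionality of weight spaces, uniformly. -/
theorem Cuspidal.bound {ρ : QRep V} (hC : ρ.Cuspidal) : ∃ D : ℕ, ∀ μ : ℂ,
    FiniteDimensional ℂ (ρ.wt μ) ∧ Module.finrank ℂ (ρ.wt μ) ≤ D := by
  obtain ⟨-, p, hp⟩ := hC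
  refine ⟨p + p, fun μ => ?_⟩
  have h0 := hp μ 0
  have h1 := hp μ 1
  simp only [parity] at h0 h1
  have hle : Module.rank ℂ (ρ.wt μ) ≤ ((p + p : ℕ) : Cardinal) := by
    rw [ρ.graded_of_sg (ρ.wt μ) (fun v hv => ρ.sg_wt hv)]
    refine (Submodule.rank_add_le_rank_add_rank _ _).trans ?_
    push_cast
    exact add_le_add h0 h1
  have hfd : FiniteDimensional ℂ (ρ.wt μ) :=
    Module.rank_lt_aleph0_iff.mp (hle.trans_lt (Cardinal.natCast_lt_aleph0))
  refine ⟨hfd, ?_⟩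
  rw [← Module.finrank_eq_rank] at hle
  exact_mod_cast hle

/-- The flipped module. -/
noncomputable def flip (ρ : QRep V) : QRep V where
  L n := - ρ.L (-n)
  H n := ρ.H (-n)
  Q n := ρ.Q (-n)
  c₀ := - ρ.c₀
  even := ρ.even
  odd := ρ.odd
  grading := ρ.grading
  L_even m v hv := ρ.even.neg_mem (ρ.L_even _ v hv)
  L_odd m v hv := ρ.odd.neg_mem (ρ.L_odd _ v hv)
  H_even m v hv := ρ.H_even _ v hv
  H_odd m v hv := ρ.H_odd _ v hv
  Q_even m v hv := ρ.Q_even _ v hv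
  Q_odd m v hv := ρ.Q_odd _ v hv
  rel_LL m n v := by
    have := ρ.rel_LL (-m) (-n) v
    simp only [LinearMap.neg_apply, map_neg, neg_neg]
    rw [this, show -m + -n = -(m + n) by ring]
    simp only [neg_eq_zero]
    push_cast
    split_ifs <;> module
  rel_HH m n v := by
    have := ρ.rel_HH (-m) (-n) v
    rw [this, show -m + -n = -(m + n) by ring]
    simp only [neg_eq_zero]
    push_cast
    split_ifs <;> module
  rel_LH m n v := by
    have := ρ.rel_LH (-m) (-n) v
    simp only [LinearMap.neg_apply, map_neg]
    rw [show -(m + n) = -m + -n by ring]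
    push_cast at this
    rw [← neg_inj, ← neg_smul, ← this]; abel
  rel_LQ m n v := by
    have := ρ.rel_LQ (-m) (-n) v
    simp only [LinearMap.neg_apply, map_neg]
    rw [show -(n + m) = -n + -m by ring]
    push_cast at this
    rw [← neg_inj, ← neg_smul,
      show -((n:ℂ) - m / 2) = (-(n:ℂ) - -(m:ℂ) / 2) by ring, ← this]; abel
  rel_HQ m n v := by
    have := ρ.rel_HQ (-m) (-n) v
    rw [show -(m + n) = -m + -n by ring]
    exact this
  rel_QQ m n v := ρ.rel_QQ _ _ v

theorem flip_wt (ρ : QRep V) (μ : ℂ) : ρ.flip.wt μ = ρ.wt (-μ) := by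
  ext v
  rw [mem_wt, mem_wt]
  simp only [flip, neg_zero, LinearMap.neg_apply, neg_smul]
  rw [neg_eq_iff_eq_neg]

theorem flip_simple {ρ : QRep V} (hS : ρ.IsSimple) : ρ.flip.IsSimple := by
  refine ⟨fun h => hS.1 fun m v => ?_, fun W hW => hS.2 W ?_⟩
  · have := h (-m) v
    simpa [flip] using this
  · obtain ⟨⟨h1, h2, h3⟩, h4⟩ := hW
    refine ⟨⟨fun m v hv => ?_, fun m v hv => ?_, fun m v hv => ?_⟩, h4⟩
    · have := W.neg_mem (h1 (-m) v hv)
      simpa [flip] using this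
    · have := (h2 (-m) v hv)
      simpa [flip] using this
    · have := (h3 (-m) v hv)
      simpa [flip] using this

theorem flip_cusp {ρ : QRep V} (hC : ρ.Cuspidal) : ρ.flip.Cuspidal := by
  obtain ⟨h, p, hp⟩ := hC
  refine ⟨?_, p, fun μ τ => ?_⟩
  · unfold IsWeight at *
    rw [← h]
    apply le_antisymm
    · refine iSup_le fun μ => ?_
      rw [flip_wt]
      exact le_iSup ρ.wt (-μ)
    · refine iSup_le fun μ => ?_
      have := le_iSup ρ.flip.wt (-μ)
      rwa [flip_wt, neg_neg] at this
  · rw [flip_wt]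
    exact hp (-μ) τ

theorem eq_top_of_wt {ρ : QRep V} (hC : ρ.Cuspidal) (W : Submodule ℂ V)
    (h : ∀ μ, ρ.wt μ ≤ W) : W = ⊤ :=
  top_le_iff.mp (hC.1 ▸ iSup_le h)

theorem wt_disj (ρ : QRep V) {μ τ : ℂ} (h : μ ≠ τ) {v : V} (h1 : v ∈ ρ.wt μ)
    (h2 : v ∈ ρ.wt τ) : v = 0 := by
  rw [mem_wt] at *
  rw [h1] at h2
  have : (μ - τ) • v = 0 := by rw [sub_smul, h2, sub_self]
  exact (smul_eq_zero.mp this).resolve_left (sub_ne_zero.mpr h)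

end QRep

namespace QRep

variable {V : Type} [AddCommGroup V] [Module ℂ V]

/-! ### Infinite tail -/

theorem step0 {ρ : QRep V} (hS : ρ.IsSimple) (hC : ρ.Cuspidal) :
    ∃ μ : ℂ, {n : ℕ | ρ.wt (μ - n) ≠ ⊥}.Infinite ∨ {n : ℕ | ρ.wt (μ + n) ≠ ⊥}.Infinite := by
  by_contra hcon
  push Not at hcon
  have key : ∀ μ : ℂ, μ ≠ 0 → ∀ v ∈ ρ.wt μ, v = 0 := by
    intro μ hμ v hv
    by_contra hv0
    obtain ⟨h1, h2⟩ := hcon μ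
    obtain ⟨a1, ha1⟩ := h1.bddAbove
    obtain ⟨a2, ha2⟩ := h2.bddAbove
    have hz : ∀ k : ℕ, a1 + a2 < k → ρ.L (-(k : ℤ)) v = 0 ∧ ρ.L (k : ℤ) v = 0 := by
      intro k hk
      constructor
      · by_contra hne
        have : k ∈ {n : ℕ | ρ.wt (μ - n) ≠ ⊥} := by
          intro hb
          apply hne
          have := ρ.L_wt' hv (-(k : ℤ)) (τ := μ - k) (by push_cast; ring)
          rw [hb] at this
          simpa using this
        have := ha1 this
        omega
      · by_contra hne
        have : k ∈ {n : ℕ | ρ.wt (μ + n) ≠ ⊥} := by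
          intro hb
          apply hne
          have := ρ.L_wt' hv (k : ℤ) (τ := μ + k) (by push_cast; ring)
          rw [hb] at this
          simpa using this
        have := ha2 this
        omega
    have hz2 : ∀ k : ℕ, a1 + a2 < k →
        -2 * (k : ℂ) * μ + (1 / 12) * (-(k : ℂ) ^ 3 + k) * ρ.c₀ = 0 := by
      intro k hk
      have := ρ.rel_LL k (-(k : ℤ)) v
      rw [(hz k hk).1, (hz k hk).2, map_zero, map_zero, sub_zero] at this
      simp only [add_neg_cancel, if_true] at this
      rw [(ρ.mem_wt).mp hv, smul_smul, ← add_smul] at this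
      have := (smul_eq_zero.mp this.symm).resolve_right hv0
      push_cast at this
      rw [← this]; ring
    have e1 := hz2 (a1 + a2 + 1) (by omega)
    have e2 := hz2 (2 * (a1 + a2 + 1)) (by omega)
    have hne : (((a1 + a2 + 1 : ℕ)) : ℂ) ≠ 0 :=
      Nat.cast_ne_zero.mpr (Nat.succ_ne_zero _)
    generalize hx : (((a1 + a2 + 1 : ℕ)) : ℂ) = x at *
    rw [Nat.cast_mul, hx] at e2
    push_cast at e2
    have hc : x ^ 3 * ρ.c₀ = 0 := by linear_combination (-2) * e2 + 4 * e1
    have hc0 : ρ.c₀ = 0 := (mul_eq_zero.mp hc).resolve_left (pow_ne_zero _ hne)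
    rw [hc0] at e1
    have : x * μ = 0 := by linear_combination (-1/2) * e1
    exact hμ ((mul_eq_zero.mp this).resolve_left hne)
  have htop : ρ.wt 0 = ⊤ := by
    apply eq_top_of_wt hC
    intro μ v hv
    by_cases h : μ = 0
    · rwa [← h]
    · rw [key μ h v hv]; exact zero_mem _
  have hall : ∀ v, v ∈ ρ.wt 0 := fun v => htop ▸ Submodule.mem_top
  have hcast : ∀ m : ℤ, m ≠ 0 → (0 : ℂ) + m ≠ 0 := by
    intro m hm; simpa using hm
  have hL : ∀ (m : ℤ) v, ρ.L m v = 0 := by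
    intro m v
    by_cases hm : m = 0
    · subst hm
      have := ρ.mem_wt.mp (hall v)
      simpa using this
    · exact key _ (hcast m hm) _ (ρ.L_wt (hall v) m)
  have hH : ∀ (m : ℤ) v, ρ.H m v = 0 := by
    intro m v
    by_cases hm : m = 0
    · subst hm
      have := ρ.rel_LH 1 (-1) v
      simpa [hL] using this
    · exact key _ (hcast m hm) _ (ρ.H_wt (hall v) m)
  apply hS.1
  intro m v
  refine ⟨hL m v, hH m v, ?_⟩
  have := ρ.rel_HQ 0 m v
  simpa [hH] using this.symm

/-! ### Powers of `L (-1)` -/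

/-- Powers of `L_{-1}`. -/
noncomputable def D (ρ : QRep V) (n : ℕ) : V →ₗ[ℂ] V := ρ.L (-1) ^ n

theorem D_zero (ρ : QRep V) (v : V) : ρ.D 0 v = v := by simp [D]

theorem D_succ (ρ : QRep V) (n : ℕ) (v : V) : ρ.D (n + 1) v = ρ.L (-1) (ρ.D n v) := by
  simp [D, pow_succ', Module.End.mul_apply]

theorem D_succ' (ρ : QRep V) (n : ℕ) (v : V) : ρ.D (n + 1) v = ρ.D n (ρ.L (-1) v) := by
  simp [D, pow_succ, Module.End.mul_apply]

theorem D_add (ρ : QRep V) (m n : ℕ) (v : V) : ρ.D (m + n) v = ρ.D m (ρ.D n v) := by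
  simp [D, pow_add, Module.End.mul_apply]

theorem D_wt (ρ : QRep V) {μ : ℂ} {v : V} (hv : v ∈ ρ.wt μ) (n : ℕ) :
    ρ.D n v ∈ ρ.wt (μ - n) := by
  induction n with
  | zero => simpa [D_zero] using hv
  | succ n ih =>
    rw [D_succ]
    exact ρ.L_wt' ih (-1) (by push_cast; ring)

/-- The tail property. -/
structure Tail (ρ : QRep V) (ν : ℂ) : Prop where
  inj : ∀ (n : ℕ), ∀ v ∈ ρ.wt (ν - n), ρ.L (-1) v = 0 → v = 0
  surj : ∀ (n : ℕ), ∀ w ∈ ρ.wt (ν - n - 1), ∃ v ∈ ρ.wt (ν - n), ρ.L (-1) v = w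
  ne : ρ.wt ν ≠ ⊥

theorem sl2_rel (ρ : QRep V) {ν : ℂ} {v : V} (hv : v ∈ ρ.wt ν) (h : ρ.L (-1) v = 0) (k : ℕ) :
    ρ.L (-1) ((ρ.L 1 ^ (k + 1)) v) =
      ((k + 1 : ℂ) * (2 * ν + k)) • (ρ.L 1 ^ k) v ∧ (ρ.L 1 ^ k) v ∈ ρ.wt (ν + k) := by
  have comm : ∀ w : V, ρ.L (-1) (ρ.L 1 w) = ρ.L 1 (ρ.L (-1) w) + (2 : ℂ) • ρ.L 0 w := by
    intro w
    have := ρ.rel_LL (-1) 1 w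
    norm_num at this
    rw [← this]; abel
  induction k with
  | zero =>
    refine ⟨?_, by simpa using hv⟩
    simp only [zero_add, pow_one, pow_zero, Module.End.one_apply]
    rw [comm, h, map_zero, ρ.mem_wt.mp hv, smul_smul]
    simp
  | succ k ih =>
    obtain ⟨ih1, ih2⟩ := ih
    have hw : (ρ.L 1 ^ (k + 1)) v ∈ ρ.wt (ν + (k + 1 : ℕ)) := by
      rw [pow_succ', Module.End.mul_apply]
      exact ρ.L_wt' ih2 1 (by push_cast; ring)
    refine ⟨?_, hw⟩
    have e : (ρ.L 1 ^ (k + 1 + 1)) v = ρ.L 1 ((ρ.L 1 ^ (k + 1)) v) := by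
      rw [pow_succ', Module.End.mul_apply]
    rw [e, comm, ih1, map_smul, ρ.mem_wt.mp hw]
    have e : (ρ.L 1 ^ (k + 1)) v = ρ.L 1 ((ρ.L 1 ^ k) v) := by
      rw [pow_succ', Module.End.mul_apply]
    rw [← e, smul_smul, ← add_smul]
    congr 1
    push_cast; ring

/-- The Casimir operator. -/
noncomputable def Cas (ρ : QRep V) : V →ₗ[ℂ] V :=
  ρ.L 1 ∘ₗ ρ.L (-1) - ρ.L 0 ∘ₗ ρ.L 0 + ρ.L 0

theorem Cas_L1 (ρ : QRep V) (v : V) : ρ.Cas (ρ.L 1 v) = ρ.L 1 (ρ.Cas v) := by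
  have c1 : ∀ w : V, ρ.L (-1) (ρ.L 1 w) = ρ.L 1 (ρ.L (-1) w) + (2 : ℂ) • ρ.L 0 w := by
    intro w
    have := ρ.rel_LL (-1) 1 w
    norm_num at this
    rw [← this]; abel
  have c2 : ∀ w : V, ρ.L 0 (ρ.L 1 w) = ρ.L 1 (ρ.L 0 w) + ρ.L 1 w := by
    intro w
    have := ρ.L0L 1 w
    simpa using this
  simp only [Cas, LinearMap.add_apply, LinearMap.sub_apply, LinearMap.comp_apply, c1, c2, map_add,
    map_sub, map_smul]
  module

theorem Cas_pow (ρ : QRep V) (k : ℕ) (v : V) :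
    ρ.Cas ((ρ.L 1 ^ k) v) = (ρ.L 1 ^ k) (ρ.Cas v) := by
  induction k with
  | zero => simp
  | succ k ih =>
    rw [pow_succ', Module.End.mul_apply, Module.End.mul_apply, Cas_L1, ih]

theorem bad_finite {ρ : QRep V} (hC : ρ.Cuspidal) (μ : ℂ) :
    {n : ℕ | ∃ v ∈ ρ.wt (μ - n), v ≠ 0 ∧ ρ.L (-1) v = 0}.Finite := by
  obtain ⟨D, hD⟩ := hC.bound
  obtain ⟨n₁, hn₁⟩ := exists_nat_gt (|2 * μ.re| + 2)
  have hre : ∀ n m : ℕ, n₁ ≤ n → 0 ≤ m → m ≤ 2 * n → (n₁ ≤ m) → (2 * μ - (n : ℂ) - m - 1 ≠ 0) := by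
    intro n m hn hm hmn hm' h
    have := congrArg Complex.re h
    simp at this
    have h1 : (n₁ : ℝ) ≤ n := by exact_mod_cast hn
    have h2 : (0 : ℝ) ≤ m := by exact_mod_cast hm
    have := le_abs_self (2 * μ.re)
    linarith
  have := (hD (μ - n₁)).1
  have hst : ∀ v ∈ ρ.wt (μ - n₁), ρ.Cas v ∈ ρ.wt (μ - n₁) := by
    intro v hv
    refine Submodule.add_mem _ (Submodule.sub_mem _ ?_ ?_) ?_
    · exact ρ.L_wt' (ρ.L_wt hv (-1)) 1 (by push_cast; ring)
    · exact ρ.L_wt' (ρ.L_wt hv 0) 0 (by push_cast; ring)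
    · exact ρ.L_wt' hv 0 (by push_cast; ring)
  let f : Module.End ℂ (ρ.wt (μ - n₁)) := ρ.Cas.restrict hst
  have hfin : {c : ℂ | f.HasEigenvalue c}.Finite := Module.End.finite_hasEigenvalue f
  have hfin2 : ((fun n : ℕ => -(μ - n) ^ 2 + (μ - n)) ⁻¹' {c : ℂ | f.HasEigenvalue c} ∩
      {n | n₁ ≤ n}).Finite := by
    apply Set.Finite.of_injOn (f := (fun n : ℕ => -(μ - n) ^ 2 + (μ - n)))
      (t := {c : ℂ | f.HasEigenvalue c})
    · exact fun n hn => hn.1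
    · intro n hn m hm h
      by_contra hne
      have hnm : ((n : ℂ) - m) ≠ 0 := by
        rw [sub_ne_zero]; exact_mod_cast hne
      have h3 : ((n : ℂ) - m) * (2 * μ - n - m - 1) = 0 := by
        simp only at h
        linear_combination h
      have h4 := (mul_eq_zero.mp h3).resolve_left hnm
      have := congrArg Complex.re h4
      simp at this
      have h1 : (n₁ : ℝ) ≤ n := by exact_mod_cast hn.2
      have h2 : (0 : ℝ) ≤ m := Nat.cast_nonneg m
      have := le_abs_self (2 * μ.re)
      linarith
    · exact hfin
  refine (hfin2.union (Set.finite_lt_nat n₁)).subset ?_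
  rintro n ⟨v, hv, hv0, hLv⟩
  by_cases hn : n < n₁
  · right; exact hn
  left
  push Not at hn
  refine ⟨?_, hn⟩
  have hnz : ∀ k : ℕ, k ≤ n - n₁ → (ρ.L 1 ^ k) v ≠ 0 := by
    intro k
    induction k with
    | zero => intro _; simpa using hv0
    | succ k ih =>
      intro hk h0
      have := (ρ.sl2_rel hv hLv k).1
      rw [h0, map_zero] at this
      have h5 := (smul_eq_zero.mp this.symm).resolve_right (ih (by omega))
      have h6 := (mul_eq_zero.mp h5).resolve_left (by exact_mod_cast Nat.succ_ne_zero k)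
      have := congrArg Complex.re h6
      simp at this
      have h1 : (n₁ : ℝ) ≤ n := by exact_mod_cast hn
      have h2 : (k : ℝ) + n₁ ≤ n := by
        have : k + n₁ ≤ n := by omega
        exact_mod_cast this
      have := le_abs_self (2 * μ.re)
      linarith
  have hmem : (ρ.L 1 ^ (n - n₁)) v ∈ ρ.wt (μ - n₁) := by
    have := (ρ.sl2_rel hv hLv (n - n₁)).2
    rw [Nat.cast_sub hn] at this
    convert this using 2; ring
  refine Module.End.hasEigenvalue_of_hasEigenvector (x := ⟨_, hmem⟩) ⟨?_, ?_⟩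
  · rw [Module.End.mem_eigenspace_iff]
    ext
    simp only [f, LinearMap.coe_restrict_apply, Submodule.coe_smul]
    rw [Cas_pow, ← map_smul]
    congr 1
    have h0 := ρ.mem_wt.mp hv
    simp only [Cas, LinearMap.add_apply, LinearMap.sub_apply, LinearMap.comp_apply, hLv, h0,
      map_zero, map_smul]
    module
  · intro h
    exact hnz _ le_rfl (congrArg Subtype.val h)

theorem exists_tail {ρ : QRep V} (hC : ρ.Cuspidal) {μ : ℂ}
    (hinf : {n : ℕ | ρ.wt (μ - n) ≠ ⊥}.Infinite) : ∃ ν, ρ.Tail ν := by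
  obtain ⟨B, hB⟩ := hC.bound
  obtain ⟨n₁, hn₁⟩ := (bad_finite hC μ).bddAbove
  have hinj : ∀ n : ℕ, n₁ < n → ∀ v ∈ ρ.wt (μ - n), ρ.L (-1) v = 0 → v = 0 := by
    intro n hn v hv h
    by_contra h0
    have := hn₁ (show n ∈ _ from ⟨v, hv, h0, h⟩)
    omega
  have hmap : ∀ n : ℕ, ∀ v ∈ ρ.wt (μ - n), ρ.L (-1) v ∈ ρ.wt (μ - (n + 1 : ℕ)) := by
    intro n v hv
    exact ρ.L_wt' hv (-1) (by push_cast; ring)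
  let g : ∀ n : ℕ, ρ.wt (μ - n) →ₗ[ℂ] ρ.wt (μ - (n + 1 : ℕ)) :=
    fun n => (ρ.L (-1)).restrict (hmap n)
  have hg : ∀ n, n₁ < n → Function.Injective (g n) := by
    intro n hn
    rw [← LinearMap.ker_eq_bot, LinearMap.ker_eq_bot']
    rintro ⟨v, hv⟩ h
    ext
    exact hinj n hn v hv (congrArg Subtype.val h)
  have hmono : ∀ n, n₁ < n →
      Module.finrank ℂ (ρ.wt (μ - n)) ≤ Module.finrank ℂ (ρ.wt (μ - (n + 1 : ℕ))) := by
    intro n hn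
    have := (hB (μ - (n + 1 : ℕ))).1
    exact LinearMap.finrank_le_finrank_of_injective (hg n hn)
  -- choose the index with maximal dimension
  let d : ℕ → ℕ := fun k => Module.finrank ℂ (ρ.wt (μ - (k + n₁ + 1 : ℕ)))
  have hd : Monotone d := monotone_nat_of_le_succ fun k => by
    have := hmono (k + n₁ + 1) (by omega)
    simp only [d]
    rw [show k + 1 + n₁ + 1 = k + n₁ + 1 + 1 by omega]
    exact this
  have hconst : ∃ N, ∀ k, N ≤ k → d k = d N := by
    have hb : BddAbove (Set.range d) := ⟨B, by rintro _ ⟨k, rfl⟩; exact (hB _).2⟩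
    obtain ⟨N, hN⟩ := Nat.sSup_mem (Set.range_nonempty d) hb
    refine ⟨N, fun k hk => le_antisymm ?_ (hd hk)⟩
    rw [hN]
    exact le_csSup hb ⟨k, rfl⟩
  obtain ⟨N, hN⟩ := hconst
  obtain ⟨n₂, hn₂, hn₂'⟩ := hinf.exists_gt (N + n₁ + 1)
  refine ⟨μ - n₂, ?_, ?_, hn₂⟩
  · intro n v hv h
    refine hinj (n₂ + n) (by omega) v ?_ h
    convert hv using 2; push_cast; ring
  · intro n w hw
    have e : Module.finrank ℂ (ρ.wt (μ - (n₂ + n : ℕ))) =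
        Module.finrank ℂ (ρ.wt (μ - (n₂ + n + 1 : ℕ))) := by
      have e1 := hN (n₂ + n - (n₁ + 1)) (by omega)
      have e2 := hN (n₂ + n + 1 - (n₁ + 1)) (by omega)
      simp only [d] at e1 e2
      rw [show n₂ + n - (n₁ + 1) + n₁ + 1 = n₂ + n by omega] at e1
      rw [show n₂ + n + 1 - (n₁ + 1) + n₁ + 1 = n₂ + n + 1 by omega] at e2
      rw [e1, e2]
    have := (hB (μ - (n₂ + n + 1 : ℕ))).1
    have := (hB (μ - (n₂ + n : ℕ))).1
    have hs := (LinearMap.injective_iff_surjective_of_finrank_eq_finrank e (f := g (n₂ + n))).mp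
      (hg _ (by omega))
    obtain ⟨⟨v, hv⟩, h⟩ := hs ⟨w, by convert hw using 2; push_cast; ring⟩
    refine ⟨v, by convert hv using 2; push_cast; ring, congrArg Subtype.val h⟩

end QRep

namespace QRep

variable {V : Type} [AddCommGroup V] [Module ℂ V]

theorem Tail.D_inj {ρ : QRep V} {ν : ℂ} (T : ρ.Tail ν) {v : V} (hv : v ∈ ρ.wt ν) (n : ℕ)
    (h : ρ.D n v = 0) : v = 0 := by
  induction n with
  | zero => rwa [D_zero] at h
  | succ n ih =>
    rw [D_succ] at h
    exact ih (T.inj n _ (ρ.D_wt hv n) h)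

theorem Tail.D_surj {ρ : QRep V} {ν : ℂ} (T : ρ.Tail ν) (n : ℕ) :
    ∀ w ∈ ρ.wt (ν - n), ∃ e ∈ ρ.wt ν, ρ.D n e = w := by
  induction n with
  | zero => intro w hw; exact ⟨w, by simpa using hw, ρ.D_zero w⟩
  | succ n ih =>
    intro w hw
    obtain ⟨v, hv, rfl⟩ := T.surj n w (by convert hw using 2; push_cast; ring)
    obtain ⟨e, he, rfl⟩ := ih v hv
    exact ⟨e, he, ρ.D_succ n e⟩

/-- Vectors killed by `L_{-k}, H_{-k}, Q_{-k}` for `k ≥ r`. -/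
def Kr (ρ : QRep V) (r : ℤ) : Submodule ℂ V where
  carrier := {v | ∀ k : ℤ, r ≤ k → ρ.L (-k) v = 0 ∧ ρ.H (-k) v = 0 ∧ ρ.Q (-k) v = 0}
  zero_mem' := by intro k _; simp
  add_mem' := by
    intro a b ha hb k hk
    obtain ⟨h1, h2, h3⟩ := ha k hk
    obtain ⟨h4, h5, h6⟩ := hb k hk
    simp [h1, h2, h3, h4, h5, h6]
  smul_mem' := by
    intro c a ha k hk
    obtain ⟨h1, h2, h3⟩ := ha k hk
    simp [h1, h2, h3]

theorem mem_Kr {ρ : QRep V} {r : ℤ} {v : V} : v ∈ ρ.Kr r ↔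
    ∀ k : ℤ, r ≤ k → ρ.L (-k) v = 0 ∧ ρ.H (-k) v = 0 ∧ ρ.Q (-k) v = 0 := Iff.rfl

theorem Kr_mono (ρ : QRep V) : Monotone ρ.Kr := fun _ _ h _ hv k hk => hv k (h.trans hk)

/-- The union of the `Kr`. -/
def Km (ρ : QRep V) : Submodule ℂ V where
  carrier := {v | ∃ r, v ∈ ρ.Kr r}
  zero_mem' := ⟨0, zero_mem _⟩
  add_mem' := by
    rintro a b ⟨r, hr⟩ ⟨s, hs⟩
    exact ⟨max r s, add_mem (ρ.Kr_mono (le_max_left _ _) hr) (ρ.Kr_mono (le_max_right _ _) hs)⟩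
  smul_mem' := by
    rintro c a ⟨r, hr⟩
    exact ⟨r, Submodule.smul_mem _ _ hr⟩

theorem mem_Km {ρ : QRep V} {v : V} : v ∈ ρ.Km ↔ ∃ r, v ∈ ρ.Kr r := Iff.rfl

theorem unif {p : ℤ → Submodule ℂ V} (hp : Monotone p) {E : Submodule ℂ V} (hE : E.FG)
    (h : ∀ v ∈ E, ∃ r, v ∈ p r) : ∃ r, E ≤ p r := by
  classical
  obtain ⟨s, hs⟩ := hE
  have h' : ∀ v : V, ∃ r, v ∈ E → v ∈ p r := by
    intro v
    by_cases hv : v ∈ E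
    · obtain ⟨r, hr⟩ := h v hv
      exact ⟨r, fun _ => hr⟩
    · exact ⟨0, fun h => absurd h hv⟩
  choose f hf using h'
  obtain ⟨M, hM⟩ := (s.image f).exists_le
  refine ⟨M, ?_⟩
  rw [← hs, Submodule.span_le]
  intro x hx
  exact hp (hM _ (Finset.mem_image_of_mem f hx)) (hf x (hs ▸ Submodule.subset_span hx))

theorem Km_cases {ρ : QRep V} (hS : ρ.IsSimple) : ρ.Km = ⊥ ∨ ρ.Km = ⊤ := by
  apply hS.cases
  · rintro m v ⟨r, hr⟩
    refine ⟨|r| + |m| + 1, fun k hk => ?_⟩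
    have h1 := le_abs_self r
    have h2 := le_abs_self m
    have h3 := neg_abs_le m
    have h4 := abs_nonneg r
    have e1 := hr k (by omega)
    have e2 := hr (k - m) (by omega)
    refine ⟨?_, ?_, ?_⟩
    · rw [LL _ _ _ (by omega), e1.1, show -k + m = -(k - m) by ring, e2.1]; simp
    · rw [HL, e1.2.1, show m + -k = -(k - m) by ring, e2.2.1]; simp
    · have := ρ.LQ m (-k) v
      rw [e1.2.2, show -k + m = -(k - m) by ring, e2.2.2] at this
      simpa using this.symm
  · rintro m v ⟨r, hr⟩
    refine ⟨|r| + |m| + 1, fun k hk => ?_⟩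
    have h1 := le_abs_self r
    have h2 := le_abs_self m
    have h3 := neg_abs_le m
    have h4 := abs_nonneg r
    have e1 := hr k (by omega)
    have e2 := hr (k - m) (by omega)
    refine ⟨?_, ?_, ?_⟩
    · rw [LH, e1.1, show -k + m = -(k - m) by ring, e2.2.1]; simp
    · rw [HH _ _ _ (by omega), e1.2.1]; simp
    · have := ρ.HQ m (-k) v
      rw [e1.2.2, show m + -k = -(k - m) by ring, e2.2.2] at this
      simpa using this.symm
  · rintro m v ⟨r, hr⟩
    refine ⟨|r| + |m| + 1, fun k hk => ?_⟩
    have h1 := le_abs_self r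
    have h2 := le_abs_self m
    have h3 := neg_abs_le m
    have h4 := abs_nonneg r
    have e1 := hr k (by omega)
    have e2 := hr (k - m) (by omega)
    refine ⟨?_, ?_, ?_⟩
    · rw [LQ, e1.1, show m + -k = -(k - m) by ring, e2.2.2]; simp
    · rw [HQ, e1.2.1, show -k + m = -(k - m) by ring, e2.2.2]; simp
    · rw [QQ, e1.2.2]; simp
  · rintro v ⟨r, hr⟩
    refine ⟨r, fun k hk => ?_⟩
    have e1 := hr k hk
    rw [sg_L, sg_H, sg_Q, e1.1, e1.2.1, e1.2.2]
    simp

theorem Tail.Km_eq_bot {ρ : QRep V} {ν : ℂ} (hS : ρ.IsSimple) (hC : ρ.Cuspidal)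
    (T : ρ.Tail ν) : ρ.Km = ⊥ := by
  refine (Km_cases hS).resolve_right fun htop => ?_
  obtain ⟨B, hB⟩ := hC.bound
  have hfg : (ρ.wt ν).FG := by
    have := (hB ν).1
    exact Module.Finite.iff_fg.mp this
  obtain ⟨r, hr⟩ := unif ρ.Kr_mono hfg (fun v _ => mem_Km.mp (htop ▸ Submodule.mem_top))
  -- all tail vectors are killed
  have key : ∀ (n : ℕ), ∀ e ∈ ρ.wt ν, ∀ i : ℤ, |r| + 2 ≤ i → ρ.L (-i) (ρ.D n e) = 0 := by
    intro n e he
    induction n with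
    | zero =>
      intro i hi
      rw [D_zero]
      exact (hr he i (by have := le_abs_self r; omega)).1
    | succ n ih =>
      intro i hi
      have := abs_nonneg r
      rw [D_succ, LL _ _ _ (by omega), ih i hi, show -i + -1 = -(i + 1) by ring,
        ih (i + 1) (by omega)]
      simp
  obtain ⟨i, hi⟩ : ∃ i : ℕ, (i : ℤ) = |r| + 2 :=
    ⟨(|r| + 2).toNat, Int.toNat_of_nonneg (by have := abs_nonneg r; omega)⟩
  have hi0 : (i : ℂ) ≠ 0 := by
    have := abs_nonneg r
    have : i ≠ 0 := by omega
    exact_mod_cast this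
  obtain ⟨v, hv, hv0⟩ := (Submodule.ne_bot_iff _).mp T.ne
  have hn : ∀ n : ℕ, i ≤ n →
      -2 * (i : ℂ) * (ν - n) + (1 / 12) * (-(i : ℂ) ^ 3 + i) * ρ.c₀ = 0 := by
    intro n hn
    have hw := ρ.D_wt hv n
    have hw0 : ρ.D n v ≠ 0 := fun h => hv0 (T.D_inj hv n h)
    have := ρ.rel_LL i (-(i : ℤ)) (ρ.D n v)
    rw [key n v hv i (by omega), map_zero] at this
    obtain ⟨e, he, h⟩ := T.D_surj (n - i) (ρ.L i (ρ.D n v))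
      (ρ.L_wt' hw i (by rw [Nat.cast_sub hn]; push_cast; ring))
    rw [← h, key (n - i) e he i (by omega)] at this
    simp only [add_neg_cancel, if_true] at this
    rw [ρ.mem_wt.mp hw, smul_smul, ← add_smul, sub_zero] at this
    have := (smul_eq_zero.mp this.symm).resolve_right hw0
    push_cast at this
    rw [← this]; ring
  have e1 := hn i le_rfl
  have e2 := hn (i + 1) (by omega)
  push_cast at e2
  apply hi0
  linear_combination (1/2) * e2 - (1/2) * e1

theorem H0L (ρ : QRep V) (m : ℤ) (v : V) : ρ.H 0 (ρ.L m v) = ρ.L m (ρ.H 0 v) := by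
  rw [HL]; simp

theorem H0H (ρ : QRep V) (m : ℤ) (v : V) : ρ.H 0 (ρ.H m v) = ρ.H m (ρ.H 0 v) := by
  have := ρ.rel_HH 0 m v
  simp only [Int.cast_zero, mul_zero, zero_mul, zero_smul] at this
  exact sub_eq_zero.mp this

theorem H0D (ρ : QRep V) (n : ℕ) (v : V) : ρ.H 0 (ρ.D n v) = ρ.D n (ρ.H 0 v) := by
  induction n with
  | zero => simp [D_zero]
  | succ n ih => rw [D_succ, D_succ, H0L, ih]

theorem Tail.exists_max_eig {ρ : QRep V} {ν : ℂ} (hC : ρ.Cuspidal) (T : ρ.Tail ν) :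
    ∃ l : ℂ, (∃ v ∈ ρ.wt ν, v ≠ 0 ∧ ρ.H 0 v = l • v) ∧
      ∀ v ∈ ρ.wt ν, ρ.H 0 v = (l + 1) • v → v = 0 := by
  obtain ⟨B, hB⟩ := hC.bound
  have := (hB ν).1
  have hst : ∀ v ∈ ρ.wt ν, ρ.H 0 v ∈ ρ.wt ν := fun v hv => ρ.H_wt' hv 0 (by simp)
  have : Nontrivial (ρ.wt ν) := (Submodule.nontrivial_iff_ne_bot).mpr T.ne
  let f : Module.End ℂ (ρ.wt ν) := (ρ.H 0).restrict hst
  have hfin : {c : ℂ | f.HasEigenvalue c}.Finite := Module.End.finite_hasEigenvalue f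
  obtain ⟨l, hl, hmax⟩ := Set.exists_max_image _ Complex.re hfin (Module.End.exists_eigenvalue f)
  refine ⟨l, ?_, ?_⟩
  · obtain ⟨⟨v, hv⟩, h⟩ := Module.End.HasEigenvalue.exists_hasEigenvector hl
    refine ⟨v, hv, fun h0 => h.2 (by ext; exact h0), ?_⟩
    exact congrArg Subtype.val h.apply_eq_smul
  · intro v hv h
    by_contra h0
    have : f.HasEigenvalue (l + 1) := by
      refine Module.End.hasEigenvalue_of_hasEigenvector (x := ⟨v, hv⟩) ⟨?_, ?_⟩
      · rw [Module.End.mem_eigenspace_iff]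
        ext
        exact h
      · intro h; exact h0 (congrArg Subtype.val h)
    have := hmax _ this
    simp at this
    linarith

theorem Tail.Q_eq_zero {ρ : QRep V} {ν : ℂ} (hS : ρ.IsSimple) (hC : ρ.Cuspidal)
    (T : ρ.Tail ν) : ∀ k v, ρ.Q k v = 0 := by
  obtain ⟨l, ⟨v, hv, hv0, hlv⟩, hmax⟩ := T.exists_max_eig hC
  have hQ : ∀ (n : ℕ) (k : ℤ), k ≤ n → ∀ x ∈ ρ.wt (ν - n), ρ.H 0 x = l • x → ρ.Q k x = 0 := by
    intro n k hk x hx hlx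
    obtain ⟨m, hm⟩ : ∃ m : ℕ, (m : ℤ) = n - k := ⟨(n - k).toNat, Int.toNat_of_nonneg (by omega)⟩
    have hm' : (m : ℂ) = n - k := by exact_mod_cast congrArg (Int.cast : ℤ → ℂ) hm
    obtain ⟨e, he, h⟩ := T.D_surj m (ρ.Q k x) (ρ.Q_wt' hx k (by rw [hm']; ring))
    have h1 : ρ.H 0 (ρ.Q k x) = (l + 1) • ρ.Q k x := by
      rw [HQ, hlx, map_smul, add_smul]; simp
    have h2 : ρ.H 0 e = (l + 1) • e := by
      rw [← h, H0D, ← map_smul, ← sub_eq_zero, ← map_sub] at h1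
      exact sub_eq_zero.mp (T.D_inj
        (Submodule.sub_mem _ (ρ.H_wt' he 0 (by simp)) (Submodule.smul_mem _ _ he)) m h1)
    rw [← h, hmax e he h2, map_zero]
  have hv' : v ∈ ρ.wt (ν - (0 : ℕ)) := by simpa using hv
  have hkill : ∀ k : ℤ, ρ.Q k v = 0 := by
    intro k
    have : ρ.Q k v ∈ ρ.Km := by
      refine ⟨|k|, fun i hi => ?_⟩
      have h1 := le_abs_self k
      have h2 := abs_nonneg k
      obtain ⟨n, hn⟩ : ∃ n : ℕ, (n : ℤ) = i := ⟨i.toNat, Int.toNat_of_nonneg (by omega)⟩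
      subst hn
      refine ⟨?_, ?_, ?_⟩
      · rw [LQ, hQ n k (by omega) _ (ρ.L_wt' hv (-n) (by push_cast; ring))
          (by rw [H0L, hlv, map_smul]), hQ 0 (k + -n) (by omega) v hv' hlv]
        simp
      · rw [HQ, hQ n k (by omega) _ (ρ.H_wt' hv (-n) (by push_cast; ring))
          (by rw [H0H, hlv, map_smul]), hQ 0 (-n + k) (by omega) v hv' hlv]
        simp
      · rw [QQ, hQ 0 (-n) (by omega) v hv' hlv]; simp
    rw [T.Km_eq_bot hS hC] at this
    simpa using this
  let W : Submodule ℂ V := ⨅ k, LinearMap.ker (ρ.Q k)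
  have hW : ∀ x, x ∈ W ↔ ∀ k, ρ.Q k x = 0 := by intro x; simp [W]
  have := hS.cases W
    (by
      intro m x hx
      rw [hW] at *
      intro k
      have := ρ.LQ m k x
      simpa [hx] using this.symm)
    (by
      intro m x hx
      rw [hW] at *
      intro k
      have := ρ.HQ m k x
      simpa [hx] using this.symm)
    (by
      intro m x hx
      rw [hW] at *
      intro k
      simp [hx])
    (by
      intro x hx
      rw [hW] at *
      intro k
      rw [sg_Q, hx]; simp)
  rcases this with h | h
  · have : v ∈ W := (hW v).mpr hkill
    rw [h] at this
    exact absurd (by simpa using this) hv0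
  · intro k x
    exact (hW x).mp (h ▸ Submodule.mem_top) k

/-- Simplicity with respect to `L` and `H` only. -/
def Simple2 (ρ : QRep V) : Prop := ∀ W : Submodule ℂ V,
  (∀ (m : ℤ), ∀ v ∈ W, ρ.L m v ∈ W) → (∀ (m : ℤ), ∀ v ∈ W, ρ.H m v ∈ W) → W = ⊥ ∨ W = ⊤

theorem Tail.simple2 {ρ : QRep V} {ν : ℂ} (hS : ρ.IsSimple) (hC : ρ.Cuspidal)
    (T : ρ.Tail ν) : ρ.Simple2 := by
  have hQ := T.Q_eq_zero hS hC
  have hsg : (∀ v, ρ.sg v = v) ∨ (∀ v, ρ.sg v = -v) := by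
    have := hS.cases ρ.even ρ.L_even ρ.H_even (by intro m v _; rw [hQ]; exact zero_mem _)
      (by intro v hv; rwa [ρ.sg_even hv])
    rcases this with h | h
    · right
      have h2 := ρ.grading.sup_eq_top
      rw [h, bot_sup_eq] at h2
      exact fun v => ρ.sg_odd (h2 ▸ Submodule.mem_top)
    · left
      exact fun v => ρ.sg_even (h ▸ Submodule.mem_top)
  intro W h1 h2
  refine hS.cases W h1 h2 (by intro m v _; rw [hQ]; exact zero_mem _) ?_
  intro v hv
  rcases hsg with h | h
  · rwa [h]
  · rw [h]; exact neg_mem hv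

theorem Tail.H0_scalar {ρ : QRep V} {ν : ℂ} (hS : ρ.IsSimple) (hC : ρ.Cuspidal)
    (T : ρ.Tail ν) : ∃ F : ℂ, ∀ v, ρ.H 0 v = F • v := by
  obtain ⟨l, ⟨v, hv, hv0, hlv⟩, -⟩ := T.exists_max_eig hC
  refine ⟨l, ?_⟩
  have := T.simple2 hS hC (Module.End.eigenspace (ρ.H 0) l)
    (by
      intro m x hx
      rw [Module.End.mem_eigenspace_iff] at *
      rw [H0L, hx, map_smul])
    (by
      intro m x hx
      rw [Module.End.mem_eigenspace_iff] at *
      rw [H0H, hx, map_smul])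
  rcases this with h | h
  · exact absurd h ((Submodule.ne_bot_iff _).mpr ⟨v, Module.End.mem_eigenspace_iff.mpr hlv, hv0⟩)
  · intro x
    exact Module.End.mem_eigenspace_iff.mp (h ▸ Submodule.mem_top)

end QRep

/-! ### Abstract module theory over `ℂ[X]` -/

section Abstract

open Polynomial

theorem theta_poly {S : Type} [AddCommGroup S] [Module ℂ S] [Module ℂ[X] S]
    [IsScalarTower ℂ ℂ[X] S] (th : S →ₗ[ℂ] S)
    (hth : ∀ m, th ((X : ℂ[X]) • m) = (X : ℂ[X]) • th m + ((1 - X) * X : ℂ[X]) • m) (p : ℂ[X]) :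
    ∃ q : ℂ[X], ∀ m, th (p • m) = p • th m + ((1 - X) * q) • m := by
  induction p using Polynomial.induction_on' with
  | add p q hp hq =>
    obtain ⟨a, ha⟩ := hp
    obtain ⟨b, hb⟩ := hq
    refine ⟨a + b, fun m => ?_⟩
    rw [add_smul, map_add, ha, hb]
    module
  | monomial n c =>
    induction n with
    | zero =>
      refine ⟨0, fun m => ?_⟩
      have : ∀ x : S, (Polynomial.monomial 0 c : ℂ[X]) • x = c • x := by
        intro x
        rw [Polynomial.monomial_zero_left, ← algebraMap_eq, algebraMap_smul]
      rw [this, this, map_smul]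
      simp
    | succ n ih =>
      obtain ⟨q, hq⟩ := ih
      refine ⟨X * q + X * (Polynomial.monomial n c), fun m => ?_⟩
      have e : (Polynomial.monomial (n + 1) c : ℂ[X]) = X * Polynomial.monomial n c := by
        rw [Polynomial.X_mul_monomial]
      rw [e, mul_smul, hth, hq]
      module

theorem exists_J {S : Type} [AddCommGroup S] [Module ℂ S] [Module ℂ[X] S]
    [IsScalarTower ℂ ℂ[X] S] (htf : ∀ (p : ℂ[X]) (m : S), p ≠ 0 → p • m = 0 → m = 0)
    (th : S →ₗ[ℂ] S)
    (hth : ∀ m, th ((X : ℂ[X]) • m) = (X : ℂ[X]) • th m + ((1 - X) * X : ℂ[X]) • m)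
    (M : Submodule ℂ[X] S) (hfg : M.FG) (hne : M ≠ ⊥) (hM : ∀ m ∈ M, th m ∈ M) :
    ∃ (r : ℂ) (J : Submodule ℂ[X] S), J ≤ M ∧ (∃ m ∈ M, m ∉ J) ∧
      (∀ m ∈ J, th m ∈ J) ∧ (∀ m ∈ M, (1 - X : ℂ[X]) • m ∈ J) ∧ ∀ m ∈ M, th m - r • m ∈ J := by
  classical
  have hsc : ∀ (c : ℂ) (x : S), (C c : ℂ[X]) • x = c • x := by
    intro c x
    rw [← algebraMap_eq, algebraMap_smul]
  let Mc : Submodule ℂ S := M.restrictScalars ℂ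
  let f : Module.End ℂ Mc := th.restrict (p := Mc) (q := Mc) hM
  let mulT : Mc →ₗ[ℂ] Mc :=
    { toFun := fun m => ⟨(1 - X : ℂ[X]) • (m : S), M.smul_mem _ m.2⟩
      map_add' := by intro a b; ext; simp [smul_add]
      map_smul' := by
        intro c a; ext
        simp only [Submodule.coe_smul, RingHom.id_apply]
        rw [smul_comm] }
  let J0 : Submodule ℂ Mc := LinearMap.range mulT
  -- Nakayama
  have hJ0 : J0 ≠ ⊤ := by
    intro htop
    have hle : M ≤ (Ideal.span {(1 - X : ℂ[X])}) • M := by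
      intro m hm
      have : (⟨m, hm⟩ : Mc) ∈ J0 := htop ▸ Submodule.mem_top
      obtain ⟨a, ha⟩ := this
      have : (1 - X : ℂ[X]) • (a : S) = m := congrArg Subtype.val ha
      rw [← this]
      exact Submodule.smul_mem_smul (Ideal.subset_span rfl) a.2
    obtain ⟨r, hr, hr0⟩ :=
      Submodule.exists_sub_one_mem_and_smul_eq_zero_of_fg_of_le_smul _ M hfg hle
    have hrne : r ≠ 0 := by
      intro h0
      rw [h0, Ideal.mem_span_singleton] at hr
      obtain ⟨q, hq⟩ := hr
      have := congrArg (Polynomial.eval 1) hq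
      simp at this
    apply hne
    rw [Submodule.eq_bot_iff]
    intro m hm
    exact htf r m hrne (hr0 m hm)
  have hfJ : J0 ≤ J0.comap f := by
    rintro _ ⟨a, rfl⟩
    refine ⟨f a - ⟨(X : ℂ[X]) • (a : S), M.smul_mem _ a.2⟩, ?_⟩
    ext
    change (1 - X : ℂ[X]) • (th a - (X : ℂ[X]) • (a : S)) = th ((1 - X : ℂ[X]) • (a : S))
    rw [sub_smul _ _ (a : S), one_smul, map_sub, hth]
    module
  let g : Module.End ℂ (Mc ⧸ J0) := J0.mapQ J0 f hfJ
  have hnt : Nontrivial (Mc ⧸ J0) := Submodule.Quotient.nontrivial_iff.mpr hJ0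
  have hfin : FiniteDimensional ℂ (Mc ⧸ J0) := by
    obtain ⟨s, hs⟩ := hfg
    have hsM : ∀ x ∈ s, x ∈ M := fun x hx => hs ▸ Submodule.subset_span hx
    let φ : s → (Mc ⧸ J0) := fun x => J0.mkQ ⟨x, hsM x x.2⟩
    have hspan : Submodule.span ℂ (Set.range φ) = ⊤ := by
      rw [eq_top_iff]
      intro z _
      obtain ⟨⟨m, hm⟩, rfl⟩ := J0.mkQ_surjective z
      have hm' : m ∈ Submodule.span ℂ[X] (s : Set S) := by rw [hs]; exact hm
      induction hm' using Submodule.span_induction with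
      | mem x hx => exact Submodule.subset_span ⟨⟨x, hx⟩, rfl⟩
      | zero =>
        have : (⟨0, hm⟩ : Mc) = 0 := rfl
        rw [this, map_zero]; exact zero_mem _
      | add x y hx hy ihx ihy =>
        have hx' : x ∈ M := hs ▸ hx
        have hy' : y ∈ M := hs ▸ hy
        have : (⟨x + y, hm⟩ : Mc) = ⟨x, hx'⟩ + ⟨y, hy'⟩ := rfl
        rw [this, map_add]
        exact add_mem (ihx hx' trivial) (ihy hy' trivial)
      | smul p x hx ihx =>
        have hx' : x ∈ M := hs ▸ hx
        have hdvd := Polynomial.X_sub_C_dvd_sub_C_eval (a := (1 : ℂ)) (p := p)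
        obtain ⟨q, hq⟩ := hdvd
        have : J0.mkQ (⟨p • x, hm⟩ : Mc) = (p.eval 1) • J0.mkQ ⟨x, hx'⟩ := by
          rw [← map_smul, ← sub_eq_zero, ← map_sub]
          refine (Submodule.Quotient.mk_eq_zero _).mpr ?_
          refine ⟨⟨(-q) • x, M.smul_mem _ hx'⟩, ?_⟩
          ext
          change (1 - X : ℂ[X]) • ((-q) • x) = p • x - (p.eval 1) • x
          rw [← hsc, ← sub_smul, hq, smul_smul]
          congr 1
          rw [map_one]; ring
        rw [this]
        exact Submodule.smul_mem _ _ (ihx hx' trivial)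
    have : (Submodule.span ℂ (Set.range φ)).FG := by
      exact Submodule.fg_span (Set.finite_range φ)
    rw [hspan] at this
    exact ⟨this⟩
  obtain ⟨r, hr⟩ := Module.End.exists_eigenvalue g
  have hns : ¬ Function.Surjective (g - algebraMap ℂ (Module.End ℂ (Mc ⧸ J0)) r : Module.End ℂ (Mc ⧸ J0)) := by
    intro hsurj
    have hinj := LinearMap.injective_iff_surjective.mpr hsurj
    obtain ⟨z, hz⟩ := hr.exists_hasEigenvector
    apply hz.2
    apply hinj
    rw [map_zero, LinearMap.sub_apply, hz.apply_eq_smul]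
    simp [Module.algebraMap_end_apply]
  let J : Submodule ℂ[X] S :=
    { carrier := {m | ∃ a ∈ M, ∃ b ∈ M, m = (1 - X : ℂ[X]) • a + (th b - r • b)}
      zero_mem' := ⟨0, zero_mem _, 0, zero_mem _, by simp⟩
      add_mem' := by
        rintro _ _ ⟨a, ha, b, hb, rfl⟩ ⟨a', ha', b', hb', rfl⟩
        refine ⟨a + a', add_mem ha ha', b + b', add_mem hb hb', ?_⟩
        rw [map_add]; module
      smul_mem' := by
        rintro p _ ⟨a, ha, b, hb, rfl⟩
        obtain ⟨q, hq⟩ := theta_poly th hth p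
        refine ⟨p • a - q • b, sub_mem (M.smul_mem _ ha) (M.smul_mem _ hb), p • b,
          M.smul_mem _ hb, ?_⟩
        rw [hq, smul_comm r p b]
        module }
  have hJmem : ∀ m, m ∈ J ↔ ∃ a ∈ M, ∃ b ∈ M, m = (1 - X : ℂ[X]) • a + (th b - r • b) :=
    fun m => Iff.rfl
  have hrM : ∀ b ∈ M, r • b ∈ M := fun b hb => by rw [← hsc]; exact M.smul_mem _ hb
  refine ⟨r, J, ?_, ?_, ?_, ?_, ?_⟩
  · rintro _ ⟨a, ha, b, hb, rfl⟩
    exact add_mem (M.smul_mem _ ha) (sub_mem (hM _ hb) (hrM _ hb))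
  · by_contra hcon
    push Not at hcon
    apply hns
    intro z
    obtain ⟨⟨m, hm⟩, rfl⟩ := J0.mkQ_surjective z
    obtain ⟨a, ha, b, hb, h⟩ := hcon m hm
    refine ⟨J0.mkQ ⟨b, hb⟩, ?_⟩
    have : (g - algebraMap ℂ (Module.End ℂ (Mc ⧸ J0)) r : Module.End ℂ (Mc ⧸ J0)) (J0.mkQ ⟨b, hb⟩) = J0.mkQ (f ⟨b, hb⟩ - r • ⟨b, hb⟩) := by
      rw [LinearMap.sub_apply, Module.algebraMap_end_apply, map_sub, map_smul]
      rfl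
    rw [this, ← sub_eq_zero, ← map_sub]
    refine (Submodule.Quotient.mk_eq_zero _).mpr ?_
    refine ⟨⟨-a, neg_mem ha⟩, ?_⟩
    ext
    change (1 - X : ℂ[X]) • (-a) = (th b - r • b) - m
    rw [h]; module
  · rintro _ ⟨a, ha, b, hb, rfl⟩
    refine ⟨th a - (X : ℂ[X]) • a, sub_mem (hM _ ha) (M.smul_mem _ ha), th b, hM _ hb, ?_⟩
    rw [sub_smul _ _ a, one_smul, map_add, map_sub, hth, map_sub, map_smul]
    module
  · intro m hm
    exact ⟨m, hm, 0, zero_mem _, by simp⟩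
  · intro m hm
    exact ⟨0, zero_mem _, m, hm, by simp⟩

theorem burnside_gen {E : Type} [AddCommGroup E] [Module ℂ E] [FiniteDimensional ℂ E] [Nontrivial E]
    (G : Set (Module.End ℂ E))
    (hirr : ∀ W : Submodule ℂ E, (∀ g ∈ G, ∀ w ∈ W, g w ∈ W) → W = ⊥ ∨ W = ⊤) :
    Algebra.adjoin ℂ G = ⊤ := by
  let A := Algebra.adjoin ℂ G
  have hA : ∀ (a : A) (x : E), a • x = (a : Module.End ℂ E) x := fun a x => rfl
  have : IsSimpleModule A E := by
    refine { toNontrivial := ?_, eq_bot_or_eq_top := ?_ }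
    · infer_instance
    · intro W
      rcases hirr (W.restrictScalars ℂ)
        (fun g hg w hw => W.smul_mem (⟨g, Algebra.subset_adjoin hg⟩ : A) hw) with h | h
      · left
        exact (Submodule.restrictScalars_eq_bot_iff _ _ _).mp h
      · right
        exact (Submodule.restrictScalars_eq_top_iff _ _ _).mp h
  -- Schur
  have schur : ∀ φ : Module.End A E, ∃ c : ℂ, ∀ x, φ x = c • x := by
    intro φ
    let φc : Module.End ℂ E := φ.restrictScalars ℂ
    obtain ⟨c, hc⟩ := Module.End.exists_eigenvalue φc
    obtain ⟨x, hx⟩ := hc.exists_hasEigenvector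
    refine ⟨c, ?_⟩
    let ψ : Module.End A E := φ - c • (LinearMap.id : E →ₗ[A] E)
    rcases LinearMap.bijective_or_eq_zero ψ with h | h
    · exfalso
      apply hx.2
      apply h.1
      rw [map_zero]
      change φc x - c • x = 0
      rw [hx.apply_eq_smul, sub_self]
    · intro y
      have := LinearMap.congr_fun h y
      exact sub_eq_zero.mp this
  rw [eq_top_iff]
  intro f _
  let F : Module.End (Module.End A E) E :=
    { toFun := f
      map_add' := map_add f
      map_smul' := by
        intro φ x
        obtain ⟨c, hc⟩ := schur φ
        simp only [Module.End.smul_def, hc, map_smul, RingHom.id_apply] }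
  obtain ⟨s, hs⟩ := (Module.Finite.fg_top : (⊤ : Submodule ℂ E).FG)
  obtain ⟨a, ha⟩ := jacobson_density (R := A) F s
  have : f = (a : Module.End ℂ E) := by
    apply LinearMap.ext_on (s := (s : Set E)) hs
    intro x hx
    exact ha x hx
  rw [this]; exact a.2

/-- A relational version of a character on `End E` forces `dim E = 1`. -/
theorem dim_one_of_char {E : Type} [AddCommGroup E] [Module ℂ E] [FiniteDimensional ℂ E]
    [Nontrivial E] (P : Module.End ℂ E → ℂ → Prop)
    (hall : ∀ y, ∃ c, P y c) (hmul : ∀ y y' c c', P y c → P y' c' → P (y * y') (c * c'))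
    (hadd : ∀ y y' c c', P y c → P y' c' → P (y + y') (c + c'))
    (hsm : ∀ c : ℂ, P (algebraMap ℂ _ c) c)
    (huniq : ∀ y c c', P y c → P y c' → c = c') : Module.finrank ℂ E = 1 := by
  by_contra hne
  have hpos : 0 < Module.finrank ℂ E := Module.finrank_pos
  let b := Module.finBasis ℂ E
  choose χ hχ using hall
  have χmul : ∀ y y', χ (y * y') = χ y * χ y' :=
    fun y y' => huniq _ _ _ (hχ _) (hmul _ _ _ _ (hχ y) (hχ y'))
  have χadd : ∀ y y', χ (y + y') = χ y + χ y' :=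
    fun y y' => huniq _ _ _ (hχ _) (hadd _ _ _ _ (hχ y) (hχ y'))
  have χ0 : χ 0 = 0 := by
    have := hsm 0; rw [map_zero] at this
    exact huniq _ _ _ (hχ _) this
  have χ1 : χ 1 = 1 := by
    have := hsm 1; rw [map_one] at this
    exact huniq _ _ _ (hχ _) this
  let e : Matrix (Fin (Module.finrank ℂ E)) (Fin (Module.finrank ℂ E)) ℂ ≃ₐ[ℂ] Module.End ℂ E :=
    (LinearMap.toMatrixAlgEquiv b).symm
  let Y : Fin (Module.finrank ℂ E) → Fin (Module.finrank ℂ E) → ℂ :=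
    fun i j => χ (e (Matrix.single i j 1))
  have hoff : ∀ i j, i ≠ j → Y i j = 0 := by
    intro i j hij
    have : Y i j * Y i j = 0 := by
      simp only [Y]
      rw [← χmul, ← map_mul, Matrix.single_mul_single_of_ne _ _ _ _ hij.symm, map_zero, χ0]
    exact mul_self_eq_zero.mp this
  have hdiag : ∀ i, Y i i = 0 := by
    intro i
    obtain ⟨j, hj⟩ : ∃ j : Fin (Module.finrank ℂ E), i ≠ j := by
      have : Nontrivial (Fin (Module.finrank ℂ E)) := Fin.nontrivial_iff_two_le.mpr (by omega)
      obtain ⟨j, hj⟩ := exists_ne i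
      exact ⟨j, hj.symm⟩
    have : Y i i = Y i j * Y j i := by
      simp only [Y]
      rw [← χmul, ← map_mul, Matrix.single_mul_single_same, mul_one]
    rw [this, hoff i j hj, zero_mul]
  have hsum : ∀ (s : Finset (Fin (Module.finrank ℂ E))),
      χ (e (∑ i ∈ s, Matrix.single i i 1)) = 0 := by
    intro s
    induction s using Finset.induction_on with
    | empty => simp [χ0]
    | insert a s ha ih =>
      rw [Finset.sum_insert ha, map_add, χadd, ih, add_zero]
      exact hdiag a
  have h1 : (∑ i, Matrix.single i i (1 : ℂ)) =
      (1 : Matrix (Fin (Module.finrank ℂ E)) (Fin (Module.finrank ℂ E)) ℂ) := by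
    rw [Matrix.sum_single_one]
  have := hsum Finset.univ
  rw [h1, map_one, χ1] at this
  exact one_ne_zero this

end Abstract

section SeqSpace

open Polynomial

theorem lin_poly {S S' : Type} [AddCommGroup S] [Module ℂ S] [Module ℂ[X] S]
    [IsScalarTower ℂ ℂ[X] S] [AddCommGroup S'] [Module ℂ S'] [Module ℂ[X] S']
    [IsScalarTower ℂ ℂ[X] S'] (f : S →ₗ[ℂ] S')
    (hf : ∀ m, f ((X : ℂ[X]) • m) = (X : ℂ[X]) • f m) (p : ℂ[X]) (m : S) :
    f (p • m) = p • f m := by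
  induction p using Polynomial.induction_on' with
  | add p q hp hq => rw [add_smul, map_add, hp, hq, add_smul]
  | monomial n c =>
    induction n with
    | zero =>
      rw [Polynomial.monomial_zero_left, ← algebraMap_eq, algebraMap_smul, algebraMap_smul,
        map_smul]
    | succ n ih =>
      have e : (Polynomial.monomial (n + 1) c : ℂ[X]) = X * Polynomial.monomial n c := by
        rw [Polynomial.X_mul_monomial]
      rw [e, mul_smul, hf, ih, mul_smul]

/-- Sequences with values in `E`, a module over `ℂ[X]` with `X` acting by the shift. -/
def Sq (E : Type) : Type := ℕ → E

variable {E : Type} [AddCommGroup E] [Module ℂ E]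

noncomputable instance : AddCommGroup (Sq E) := inferInstanceAs (AddCommGroup (ℕ → E))

noncomputable instance : Module ℂ (Sq E) := inferInstanceAs (Module ℂ (ℕ → E))

/-- The shift. -/
noncomputable def sqShift : Module.End ℂ (Sq E) where
  toFun m := fun j => Nat.casesOn j (0 : E) (fun i => m i)
  map_add' a b := by
    funext j
    cases j
    · exact (add_zero (0 : E)).symm
    · rfl
  map_smul' c a := by
    funext j
    cases j
    · exact (smul_zero c).symm
    · rfl

noncomputable instance sqModule : Module ℂ[X] (Sq E) :=
  Module.compHom (Sq E) (Polynomial.aeval (sqShift (E := E))).toRingHom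

theorem sq_smul (p : ℂ[X]) (m : Sq E) : p • m = (Polynomial.aeval (sqShift (E := E)) p) m := rfl

noncomputable instance : IsScalarTower ℂ ℂ[X] (Sq E) where
  smul_assoc c p m := by
    rw [sq_smul, sq_smul, map_smul]; rfl

theorem sq_X_zero (m : Sq E) : ((X : ℂ[X]) • m) 0 = 0 := by
  rw [sq_smul, Polynomial.aeval_X]; rfl

theorem sq_X_succ (m : Sq E) (j : ℕ) : ((X : ℂ[X]) • m) (j + 1) = m j := by
  rw [sq_smul, Polynomial.aeval_X]; rfl

theorem sq_add (a b : Sq E) (j : ℕ) : (a + b) j = a j + b j := rfl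

theorem sq_sub (a b : Sq E) (j : ℕ) : (a - b) j = a j - b j := rfl

theorem sq_csmul (c : ℂ) (a : Sq E) (j : ℕ) : (c • a) j = c • a j := rfl

/-- Multiplication by the index. -/
noncomputable def sqDel : Sq E →ₗ[ℂ] Sq E where
  toFun m := fun j => (j : ℂ) • m j
  map_add' a b := by funext j; exact smul_add _ _ _
  map_smul' c a := by funext j; exact smul_comm _ _ _

theorem sqDel_apply (m : Sq E) (j : ℕ) : sqDel m j = (j : ℂ) • m j := rfl

theorem sqDel_X (m : Sq E) :
    sqDel ((X : ℂ[X]) • m) = (X : ℂ[X]) • sqDel m + (X : ℂ[X]) • m := by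
  funext j
  rw [sq_add]
  cases j with
  | zero => rw [sqDel_apply, sq_X_zero, sq_X_zero]; simp
  | succ j =>
    rw [sqDel_apply, sq_X_succ, sq_X_succ, sqDel_apply]
    push_cast
    module

/-- The operator `ϑ = (1 - T) δ`. -/
noncomputable def sqTh : Sq E →ₗ[ℂ] Sq E where
  toFun m := (1 - X : ℂ[X]) • sqDel m
  map_add' a b := by rw [map_add, smul_add]
  map_smul' c a := by rw [map_smul, smul_comm]; rfl

theorem sqTh_apply (m : Sq E) : sqTh m = (1 - X : ℂ[X]) • sqDel m := rfl

theorem sqTh_X (m : Sq E) :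
    sqTh ((X : ℂ[X]) • m) = (X : ℂ[X]) • sqTh m + ((1 - X) * X : ℂ[X]) • m := by
  rw [sqTh_apply, sqDel_X, sqTh_apply]
  module

/-- Pointwise action of an endomorphism. -/
noncomputable def sqAct (x : Module.End ℂ E) : Sq E →ₗ[ℂ] Sq E where
  toFun m := fun j => x (m j)
  map_add' a b := by funext j; exact map_add _ _ _
  map_smul' c a := by funext j; exact map_smul _ _ _

theorem sqAct_apply (x : Module.End ℂ E) (m : Sq E) (j : ℕ) : sqAct x m j = x (m j) := rfl

theorem sqAct_poly (x : Module.End ℂ E) (p : ℂ[X]) (m : Sq E) :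
    sqAct x (p • m) = p • sqAct x m := by
  refine lin_poly (sqAct x) (fun m => ?_) p m
  funext j
  cases j with
  | zero => rw [sqAct_apply, sq_X_zero, sq_X_zero, map_zero]
  | succ j => rw [sqAct_apply, sq_X_succ, sq_X_succ, sqAct_apply]

theorem sqAct_th (x : Module.End ℂ E) (m : Sq E) : sqTh (sqAct x m) = sqAct x (sqTh m) := by
  rw [sqTh_apply, sqTh_apply, sqAct_poly]
  congr 1
  funext j
  rw [sqDel_apply, sqAct_apply, sqAct_apply, sqDel_apply, map_smul]

theorem sq_tf (p : ℂ[X]) (m : Sq E) (hp : p ≠ 0) (h : p • m = 0) : m = 0 := by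
  have key : ∀ φ : E →ₗ[ℂ] ℂ, ∀ j, φ (m j) = 0 := by
    intro φ
    let Φ : Sq E →ₗ[ℂ] PowerSeries ℂ :=
      { toFun := fun m => PowerSeries.mk fun j => φ (m j)
        map_add' := by
          intro a b; ext j; simp [sq_add]
        map_smul' := by
          intro c a; ext j; simp [sq_csmul] }
    have hΦ : ∀ (m : Sq E) j, PowerSeries.coeff j (Φ m) = φ (m j) := by
      intro m j; exact PowerSeries.coeff_mk (R := ℂ) j (fun j => φ (m j))
    have hX : ∀ f : PowerSeries ℂ, (X : ℂ[X]) • f = PowerSeries.X * f := by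
      intro f
      rw [Algebra.smul_def]
      congr 1
      simp [PowerSeries.algebraMap_apply']
    have := lin_poly Φ (fun m => by
      rw [hX]
      ext j
      cases j with
      | zero => rw [hΦ, sq_X_zero, map_zero, PowerSeries.coeff_zero_X_mul]
      | succ j => rw [hΦ, sq_X_succ, PowerSeries.coeff_succ_X_mul, hΦ]) p m
    rw [h, map_zero, Algebra.smul_def] at this
    have h2 := (mul_eq_zero.mp this.symm).resolve_left (by
      intro h0
      apply hp
      simpa [PowerSeries.algebraMap_apply'] using h0)
    intro j
    rw [← hΦ, h2, map_zero]
  funext j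
  exact (Module.forall_dual_apply_eq_zero_iff ℂ (m j)).mp (fun φ => key φ j)

theorem sq_C (c : ℂ) (x : Sq E) : c • x = (C c : ℂ[X]) • x := by
  rw [← algebraMap_eq, algebraMap_smul]

theorem th2 (m : Sq E) : sqTh (sqTh m) =
    ((1 - X) ^ 2 : ℂ[X]) • sqDel (sqDel m) - (X : ℂ[X]) • sqTh m := by
  rw [sqTh_apply, sqTh_apply, sub_smul _ _ (sqDel m), one_smul, map_sub, sqDel_X]
  module

theorem th3 (m : Sq E) : sqTh (sqTh (sqTh m)) =
    ((1 - X) ^ 3 : ℂ[X]) • sqDel (sqDel (sqDel m))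
      - (3 * X * (1 - X) ^ 2 : ℂ[X]) • sqDel (sqDel m) - (X - 2 * X ^ 2 : ℂ[X]) • sqTh m := by
  rw [th2 m, map_sub, sqTh_X, th2 m]
  have e : ∀ n : Sq E, sqTh (((1 - X) ^ 2 : ℂ[X]) • n) =
      ((1 - X) ^ 3 : ℂ[X]) • sqDel n - (2 * X * (1 - X) ^ 2 : ℂ[X]) • n := by
    intro n
    have : ((1 - X) ^ 2 : ℂ[X]) • n = n - (X : ℂ[X]) • n - (X : ℂ[X]) • n
        + (X : ℂ[X]) • (X : ℂ[X]) • n := by module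
    rw [this, sqTh_apply]
    simp only [map_sub, map_add, sqDel_X, smul_add]
    module
  rw [e, sqTh_apply]
  module

end SeqSpace

section DAbs

open Polynomial

theorem D_abs {E : Type} [AddCommGroup E] [Module ℂ E] [FiniteDimensional ℂ E] [Nontrivial E]
    (C1 C2 h : Module.End ℂ E)
    (hirr : ∀ W : Submodule ℂ E, (∀ w ∈ W, C1 w ∈ W) → (∀ w ∈ W, C2 w ∈ W) →
      (∀ w ∈ W, h w ∈ W) → W = ⊥ ∨ W = ⊤)
    (u st r : ℕ → Module.End ℂ E) (ν F s : ℂ)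
    (st0 : st 0 = u 0) (st1 : ∀ j, st (j + 1) = st j + u (j + 1))
    (r0 : r 0 = st 0) (r1 : ∀ j, r (j + 1) = r j + st (j + 1))
    (R1 : ∀ (j : ℕ) (e : E), C1 (st j e) = (-((j - 2 * s) * (j + 1))) • u (j + 1) e + u j (C1 e)
      + (-2 * (j - s) * ν + (j + 1 - s) * (j - s)) • u j e)
    (R2 : ∀ (j : ℕ) (e : E), C2 (r j e) = ((j - 3 * s) * (j + 1) * (j + 2)) • u (j + 2) e
      + u j (C2 e) - (3 * (j - s)) • u j (C1 e)
      + (3 * (j + 1 - s) * (j - s) * ν - (j + 2 - s) * (j + 1 - s) * (j - s)) • u j e)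
    (R3 : ∀ (j : ℕ) (e : E), h (st j e) = u j (h e) - ((j - s) * F) • u j e)
    (hu : ∃ j e, u j e ≠ 0) :
    ∃ t : ℂ, ∀ e, C1 e = (-t * (t - 1 + 2 * ν)) • e ∧
      C2 e = (t * (t + 1) * (2 * t - 2 + 3 * ν)) • e ∧ h e = (-F * t) • e := by
  classical
  let U : E → Sq E := fun e j => u j e
  let St : E → Sq E := fun e j => st j e
  let Rr : E → Sq E := fun e j => r j e
  have hU : ∀ e j, U e j = u j e := fun _ _ => rfl
  have hSt : ∀ e j, St e j = st j e := fun _ _ => rfl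
  have hRr : ∀ e j, Rr e j = r j e := fun _ _ => rfl
  have hUadd : ∀ e e', U (e + e') = U e + U e' := by
    intro e e'; funext j; rw [sq_add, hU, hU, hU, map_add]
  have hUsmul : ∀ (c : ℂ) e, U (c • e) = (C c : ℂ[X]) • U e := by
    intro c e; rw [← sq_C]; funext j; rw [sq_csmul, hU, hU, map_smul]
  have tSt : ∀ e, (1 - X : ℂ[X]) • St e = U e := by
    intro e
    rw [sub_smul, one_smul]
    funext j
    rw [sq_sub]
    cases j with
    | zero => rw [sq_X_zero, hSt, hU, st0, sub_zero]
    | succ j => rw [sq_X_succ, hSt, hSt, hU, st1, LinearMap.add_apply]; abel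
  have tRr : ∀ e, (1 - X : ℂ[X]) • Rr e = St e := by
    intro e
    rw [sub_smul, one_smul]
    funext j
    rw [sq_sub]
    cases j with
    | zero => rw [sq_X_zero, hRr, hSt, r0, sub_zero]
    | succ j => rw [sq_X_succ, hRr, hRr, hSt, r1, LinearMap.add_apply]; abel
  -- the three sequence equations
  have E1 : ∀ e, (X : ℂ[X]) • sqAct C1 (U e) = - sqTh (sqTh (U e)) - (X : ℂ[X]) • sqTh (U e)
      + (C (1 + 2 * s) : ℂ[X]) • sqTh (U e) + (C (1 - 2 * s - 2 * ν) * X : ℂ[X]) • sqTh (U e)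
      + (1 - X : ℂ[X]) • ((X : ℂ[X]) •
        (U (C1 e) + (C (2 * s * ν + s * (s - 1)) : ℂ[X]) • U e)) := by
    intro e
    have e0 : (X : ℂ[X]) • sqAct C1 (St e) = - sqDel (sqDel (U e))
        + (1 + 2 * s) • sqDel (U e)
        + (X : ℂ[X]) • (U (C1 e) + (2 * s * ν + s * (s - 1)) • U e
          + (1 - 2 * s - 2 * ν) • sqDel (U e) + sqDel (sqDel (U e))) := by
      have : - sqDel (sqDel (U e)) = (-1 : ℂ) • sqDel (sqDel (U e)) := by module
      rw [this]
      funext j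
      cases j with
      | zero =>
        simp only [sq_add, sq_X_zero, sq_csmul, sqDel_apply]
        simp
      | succ j =>
        simp only [sq_add, sq_X_succ, sq_csmul, sqDel_apply, sqAct_apply, hSt, hU]
        rw [R1]
        push_cast
        module
    have e1 : (X : ℂ[X]) • sqAct C1 (U e) = (1 - X : ℂ[X]) • ((X : ℂ[X]) • sqAct C1 (St e)) := by
      rw [← tSt, sqAct_poly, smul_comm]
    rw [e1, e0, th2]
    simp only [sqTh_apply, sq_C]
    simp only [map_add, map_sub, map_mul, map_one, map_ofNat]
    module
  have E2 : ∀ e, (X ^ 2 : ℂ[X]) • sqAct C2 (U e) =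
      (1 + X : ℂ[X]) • (sqTh (sqTh (sqTh (U e)))
        + (3 * X : ℂ[X]) • (sqTh (sqTh (U e)) + (X : ℂ[X]) • sqTh (U e))
        + (X - 2 * X ^ 2 : ℂ[X]) • sqTh (U e))
      + (- C (3 + 3 * s) - X ^ 2 * C (3 - 3 * s) + C (3 * ν) * X ^ 2 : ℂ[X]) •
          (sqTh (sqTh (U e)) + (X : ℂ[X]) • sqTh (U e))
      + (1 - X : ℂ[X]) • ((C (2 + 3 * s) : ℂ[X]) • sqTh (U e)
        + (X ^ 2 * (1 - X) : ℂ[X]) • U (C2 e) - (3 * X ^ 2 : ℂ[X]) • sqTh (U (C1 e))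
        + (C (3 * s) * X ^ 2 * (1 - X) : ℂ[X]) • U (C1 e)
        + (C (3 * ν * (1 - 2 * s) - (3 * s ^ 2 - 6 * s + 2)) * X ^ 2 : ℂ[X]) • sqTh (U e)
        + (C (- 3 * ν * s * (1 - s) - (- s ^ 3 + 3 * s ^ 2 - 2 * s)) * X ^ 2 * (1 - X) : ℂ[X])
          • U e) := by
    intro e
    have e0 : (X : ℂ[X]) • (X : ℂ[X]) • sqAct C2 (Rr e) =
        sqDel (sqDel (sqDel (U e))) + (- (3 + 3 * s)) • sqDel (sqDel (U e))
          + (2 + 3 * s) • sqDel (U e)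
        + (X : ℂ[X]) • (X : ℂ[X]) • (U (C2 e) + (-3 : ℂ) • sqDel (U (C1 e)) + (3 * s) • U (C1 e)
          + (-1 : ℂ) • sqDel (sqDel (sqDel (U e)))
          + (3 * ν - (3 - 3 * s)) • sqDel (sqDel (U e))
          + (3 * ν * (1 - 2 * s) - (3 * s ^ 2 - 6 * s + 2)) • sqDel (U e)
          + (- 3 * ν * s * (1 - s) - (- s ^ 3 + 3 * s ^ 2 - 2 * s)) • U e) := by
      funext j
      rcases j with _ | _ | j
      · simp only [sq_add, sq_X_zero, sq_csmul, sqDel_apply]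
        simp
      · simp only [sq_add, sq_X_succ, sq_X_zero, sq_csmul, sqDel_apply]
        push_cast
        module
      · simp only [sq_add, sq_X_succ, sq_csmul, sqDel_apply, sqAct_apply, hRr, hU]
        rw [R2]
        push_cast
        module
    have e1 : (X ^ 2 : ℂ[X]) • sqAct C2 (U e) =
        ((1 - X) ^ 2 : ℂ[X]) • ((X : ℂ[X]) • (X : ℂ[X]) • sqAct C2 (Rr e)) := by
      rw [← tSt, ← tRr, sqAct_poly, sqAct_poly]
      module
    rw [e1, e0, th3, th2]
    simp only [sqTh_apply, sq_C]
    simp only [map_add, map_sub, map_mul, map_one, map_ofNat, map_neg, map_pow]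
    module
  have E3 : ∀ e, sqAct h (U e) = - (C F : ℂ[X]) • sqTh (U e)
      + (1 - X : ℂ[X]) • (U (h e) + (C (s * F) : ℂ[X]) • U e) := by
    intro e
    have e0 : sqAct h (St e) = U (h e) + (-F) • sqDel (U e) + (s * F) • U e := by
      funext j
      simp only [sq_add, sq_csmul, sqDel_apply, sqAct_apply, hSt, hU]
      rw [R3]
      module
    have e1 : sqAct h (U e) = (1 - X : ℂ[X]) • sqAct h (St e) := by
      rw [← tSt, sqAct_poly]
    rw [e1, e0]
    simp only [sqTh_apply, sq_C]
    simp only [map_mul, map_neg]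
    module
  -- the module `M`
  let PS : Set (Submodule ℂ[X] (Sq E)) := {P | (∀ m ∈ P, sqTh m ∈ P) ∧ ∀ e, U e ∈ P}
  let M : Submodule ℂ[X] (Sq E) := sInf PS
  have hMth : ∀ m ∈ M, sqTh m ∈ M := by
    intro m hm
    rw [Submodule.mem_sInf] at *
    intro P hP
    exact hP.1 m (hm P hP)
  have hMU : ∀ e, U e ∈ M := by
    intro e
    rw [Submodule.mem_sInf]
    intro P hP
    exact hP.2 e
  have hMmin : ∀ P ∈ PS, M ≤ P := fun P hP => sInf_le hP
  -- the bigger module `N`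
  let N : Submodule ℂ[X] (Sq E) := Submodule.span ℂ[X]
    {m | ∃ (x : Module.End ℂ E) (e : E), m = sqAct x (U e) ∨ m = sqAct x (sqTh (U e))}
  have hN1 : ∀ x e, sqAct x (U e) ∈ N := fun x e => Submodule.subset_span ⟨x, e, Or.inl rfl⟩
  have hN2 : ∀ x e, sqAct x (sqTh (U e)) ∈ N :=
    fun x e => Submodule.subset_span ⟨x, e, Or.inr rfl⟩
  have hact1 : ∀ m : Sq E, sqAct 1 m = m := fun m => rfl
  have hNth : ∀ m ∈ N, sqTh m ∈ N := by
    intro m hm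
    induction hm using Submodule.span_induction with
    | mem m hm =>
      obtain ⟨x, e, rfl | rfl⟩ := hm
      · rw [sqAct_th]; exact hN2 x e
      · rw [sqAct_th]
        have : sqTh (sqTh (U e)) = - ((X : ℂ[X]) • sqAct C1 (U e)) - (X : ℂ[X]) • sqTh (U e)
            + (C (1 + 2 * s) : ℂ[X]) • sqTh (U e) + (C (1 - 2 * s - 2 * ν) * X : ℂ[X]) • sqTh (U e)
            + (1 - X : ℂ[X]) • ((X : ℂ[X]) •
              (U (C1 e) + (C (2 * s * ν + s * (s - 1)) : ℂ[X]) • U e)) := by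
          rw [E1]; module
        rw [this]
        simp only [map_add, map_sub, map_neg, sqAct_poly]
        have hx : sqAct x (sqAct C1 (U e)) = sqAct (x * C1) (U e) := rfl
        rw [hx]
        refine N.add_mem (N.add_mem (N.add_mem (N.sub_mem (N.neg_mem (N.smul_mem _ (hN1 _ _)))
          (N.smul_mem _ (hN2 _ _))) (N.smul_mem _ (hN2 _ _))) (N.smul_mem _ (hN2 _ _)))
          (N.smul_mem _ (N.smul_mem _ (N.add_mem (hN1 _ _) (N.smul_mem _ (hN1 _ _)))))
    | zero => rw [map_zero]; exact zero_mem _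
    | add a b _ _ ha hb => rw [map_add]; exact add_mem ha hb
    | smul p a ha' ha =>
      obtain ⟨q, hq⟩ := theta_poly (S := Sq E) sqTh sqTh_X p
      rw [hq]
      exact N.add_mem (N.smul_mem _ ha) (N.smul_mem _ ha')
  have hMN : M ≤ N := hMmin N ⟨hNth, fun e => hact1 (U e) ▸ hN1 1 e⟩
  have hNfg : N.FG := by
    let b := Module.finBasis ℂ E
    let bb := Module.finBasis ℂ (Module.End ℂ E)
    let N' : Submodule ℂ[X] (Sq E) := Submodule.span ℂ[X]
      ((Set.range fun p : Fin _ × Fin _ => sqAct (bb p.1) (U (b p.2))) ∪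
       (Set.range fun p : Fin _ × Fin _ => sqAct (bb p.1) (sqTh (U (b p.2)))))
    have hN' : N'.FG := Submodule.fg_span ((Set.finite_range _).union (Set.finite_range _))
    have h1 : ∀ i j, sqAct (bb i) (U (b j)) ∈ N' :=
      fun i j => Submodule.subset_span (Or.inl ⟨(i, j), rfl⟩)
    have h2 : ∀ i j, sqAct (bb i) (sqTh (U (b j))) ∈ N' :=
      fun i j => Submodule.subset_span (Or.inr ⟨(i, j), rfl⟩)
    let Uc : E →ₗ[ℂ] Sq E :=
      { toFun := U
        map_add' := hUadd
        map_smul' := by intro c e; rw [hUsmul, ← sq_C]; rfl }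
    let ac : Module.End ℂ E →ₗ[ℂ] Sq E →ₗ[ℂ] Sq E :=
      { toFun := sqAct
        map_add' := fun x y => rfl
        map_smul' := fun c x => rfl }
    have h3 : ∀ x e, sqAct x (U e) ∈ N'.restrictScalars ℂ := by
      intro x e
      have : sqAct x (U e) = ac x (Uc e) := rfl
      rw [this, ← bb.sum_repr x, ← b.sum_repr e]
      simp only [map_sum, map_smul, LinearMap.sum_apply, LinearMap.smul_apply]
      refine Submodule.sum_mem _ fun i _ => ?_
      refine Submodule.smul_mem _ _ (Submodule.sum_mem _ fun j _ => Submodule.smul_mem _ _ ?_)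
      exact h1 _ _
    have h4 : ∀ x e, sqAct x (sqTh (U e)) ∈ N'.restrictScalars ℂ := by
      intro x e
      have : sqAct x (sqTh (U e)) = ac x (sqTh (Uc e)) := rfl
      rw [this, ← bb.sum_repr x, ← b.sum_repr e]
      simp only [map_sum, map_smul, LinearMap.sum_apply, LinearMap.smul_apply]
      refine Submodule.sum_mem _ fun i _ => ?_
      refine Submodule.smul_mem _ _ (Submodule.sum_mem _ fun j _ => Submodule.smul_mem _ _ ?_)
      exact h2 _ _
    have : N = N' := by
      apply le_antisymm
      · rw [Submodule.span_le]
        rintro _ ⟨x, e, rfl | rfl⟩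
        · exact h3 x e
        · exact h4 x e
      · rw [Submodule.span_le]
        rintro _ (⟨p, rfl⟩ | ⟨p, rfl⟩)
        · exact hN1 _ _
        · exact hN2 _ _
    rw [this]; exact hN'
  have hMfg : M.FG := by
    have : IsNoetherian ℂ[X] N := isNoetherian_of_fg_of_noetherian N hNfg
    exact Submodule.FG.of_le_of_isNoetherian hMN
  have hMne : M ≠ ⊥ := by
    obtain ⟨j, e, hje⟩ := hu
    intro hb
    have := hMU e
    rw [hb, Submodule.mem_bot] at this
    exact hje (congrFun this j)
  obtain ⟨t, J, hJM, ⟨m0, hm0, hm0J⟩, hJth, hJ1, hJt⟩ :=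
    exists_J (S := Sq E) sq_tf sqTh sqTh_X M hMfg hMne hMth
  -- congruences modulo J
  have hpoly : ∀ (p : ℂ[X]), ∀ m ∈ M, p • m - (C (p.eval 1) : ℂ[X]) • m ∈ J := by
    intro p m hm
    obtain ⟨q, hq⟩ := Polynomial.X_sub_C_dvd_sub_C_eval (a := (1 : ℂ)) (p := p)
    rw [← sub_smul, hq, map_one, show (X - 1) * q = (-q) * (1 - X) by ring, mul_smul]
    exact J.smul_mem _ (hJ1 m hm)
  have ht : ∀ m ∈ M, sqTh m - (C t : ℂ[X]) • m ∈ J := fun m hm => by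
    rw [← sq_C]; exact hJt m hm
  let P : Module.End ℂ E → ℂ → Prop := fun y c =>
    ∃ a : ℕ, ∀ m ∈ M, (X ^ a : ℂ[X]) • sqAct y m - (C c : ℂ[X]) • m ∈ J
  -- the quotient map
  let π := J.mkQ
  have hπ : ∀ a b : Sq E, π a = π b ↔ a - b ∈ J := fun a b => Submodule.Quotient.eq J
  have hπp : ∀ (p : ℂ[X]), ∀ m ∈ M, p • π m = (C (p.eval 1) : ℂ[X]) • π m := by
    intro p m hm
    rw [← map_smul, ← map_smul, hπ]
    exact hpoly p m hm
  have hπt : ∀ m ∈ M, π (sqTh m) = (C t : ℂ[X]) • π m := by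
    intro m hm
    rw [← map_smul, hπ]
    exact ht m hm
  have hπ1 : ∀ m ∈ M, (1 - X : ℂ[X]) • π m = 0 := by
    intro m hm
    rw [hπp _ m hm]
    simp
  have hπtt : ∀ m ∈ M, π (sqTh (sqTh m)) = (C (t * t) : ℂ[X]) • π m := by
    intro m hm
    rw [hπt _ (hMth m hm), hπt m hm, smul_smul, ← map_mul]
  have hπttt : ∀ m ∈ M, π (sqTh (sqTh (sqTh m))) = (C (t * (t * t)) : ℂ[X]) • π m := by
    intro m hm
    rw [hπt _ (hMth _ (hMth m hm)), hπtt m hm, smul_smul, ← map_mul]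
  have key : ∀ (y : Module.End ℂ E) (c : ℂ) (a : ℕ),
      (∀ e, π ((X ^ a : ℂ[X]) • sqAct y (U e)) = (C c : ℂ[X]) • π (U e)) → P y c := by
    intro y c a hy
    refine ⟨a, ?_⟩
    let W : Submodule ℂ[X] (Sq E) :=
      { carrier := {m | m ∈ M ∧ (X ^ a : ℂ[X]) • sqAct y m - (C c : ℂ[X]) • m ∈ J}
        add_mem' := by
          rintro m n ⟨hm, hm'⟩ ⟨hn, hn'⟩
          refine ⟨add_mem hm hn, ?_⟩
          have := add_mem hm' hn'
          rw [map_add]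
          convert this using 1
          module
        zero_mem' := by
          refine ⟨zero_mem _, ?_⟩
          simp
        smul_mem' := by
          rintro p m ⟨hm, hm'⟩
          refine ⟨M.smul_mem p hm, ?_⟩
          have := J.smul_mem p hm'
          rw [sqAct_poly]
          convert this using 1
          module }
    have hW : M ≤ W := by
      apply hMmin
      refine ⟨?_, ?_⟩
      · rintro m ⟨hm, hm'⟩
        refine ⟨hMth m hm, ?_⟩
        have h1 := hJth _ hm'
        have hq : ∀ n : Sq E, sqTh ((X ^ a : ℂ[X]) • n) = (X ^ a : ℂ[X]) • sqTh n
            + ((1 - X) * ((a : ℂ[X]) * X ^ a) : ℂ[X]) • n := by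
          clear hy hm hm' h1
          intro n
          induction a with
          | zero => simp
          | succ a ih =>
            rw [pow_succ', mul_smul, sqTh_X, ih]
            push_cast
            module
        rw [map_sub, hq, ← sq_C, map_smul, sq_C, sqAct_th] at h1
        have h2 : (X ^ a : ℂ[X]) • sqAct y m ∈ M := by
          have := add_mem (hJM hm') (M.smul_mem (C c) hm)
          rwa [sub_add_cancel] at this
        have h3 := hJ1 _ (M.smul_mem (a : ℂ[X]) h2)
        have h4 := sub_mem h1 h3
        convert h4 using 1
        module
      · intro e
        refine ⟨hMU e, ?_⟩
        rw [← hπ, map_smul π (C c)]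
        exact hy e
    intro m hm
    exact (hW hm).2
  have PC1 : P C1 (-t * (t - 1 + 2 * ν)) := by
    apply key C1 _ 1
    intro e
    rw [pow_one, E1]
    have hz : U (C1 e) + (C (2 * s * ν + s * (s - 1)) : ℂ[X]) • U e ∈ M :=
      add_mem (hMU _) (M.smul_mem _ (hMU _))
    have hz' := hπ1 _ (M.smul_mem X hz)
    rw [← map_smul] at hz'
    rw [map_add, hz', add_zero]
    simp only [map_add, map_sub, map_neg, map_smul, hπt _ (hMU e), hπtt _ (hMU e)]
    have h5 := hπp (-C (t * t) - X * C t + C (1 + 2 * s) * C t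
      + C (1 - 2 * s - 2 * ν) * X * C t) (U e) (hMU e)
    have h6 : eval 1 (-C (t * t) - X * C t + C (1 + 2 * s) * C t
      + C (1 - 2 * s - 2 * ν) * X * C t) = -t * (t - 1 + 2 * ν) := by
      simp only [eval_add, eval_mul, eval_sub, eval_neg, eval_X, eval_C, one_mul]
      ring
    rw [h6] at h5
    rw [← h5]
    simp only [map_add, map_sub]
    module
  have PC2 : P C2 (t * (t + 1) * (2 * t - 2 + 3 * ν)) := by
    apply key C2 _ 2
    intro e
    rw [E2]
    have hz : (C (2 + 3 * s) : ℂ[X]) • sqTh (U e)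
        + (X ^ 2 * (1 - X) : ℂ[X]) • U (C2 e) - (3 * X ^ 2 : ℂ[X]) • sqTh (U (C1 e))
        + (C (3 * s) * X ^ 2 * (1 - X) : ℂ[X]) • U (C1 e)
        + (C (3 * ν * (1 - 2 * s) - (3 * s ^ 2 - 6 * s + 2)) * X ^ 2 : ℂ[X]) • sqTh (U e)
        + (C (- 3 * ν * s * (1 - s) - (- s ^ 3 + 3 * s ^ 2 - 2 * s)) * X ^ 2 * (1 - X) : ℂ[X])
          • U e ∈ M := by
      refine add_mem (add_mem (add_mem (sub_mem (add_mem ?_ ?_) ?_) ?_) ?_) ?_ <;>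
        apply M.smul_mem <;> first | exact hMU _ | exact hMth _ (hMU _)
    have hz' := hπ1 _ hz
    rw [← map_smul] at hz'
    rw [map_add, hz', add_zero]
    simp only [map_add, map_smul, hπt _ (hMU e), hπtt _ (hMU e), hπttt _ (hMU e)]
    have h5 := hπp ((1 + X) * (C (t * (t * t)) + 3 * X * (C (t * t) + X * C t)
      + (X - 2 * X ^ 2) * C t)
      + (- C (3 + 3 * s) - X ^ 2 * C (3 - 3 * s) + C (3 * ν) * X ^ 2) *
          (C (t * t) + X * C t)) (U e) (hMU e)
    have h6 : eval 1 ((1 + X) * (C (t * (t * t)) + 3 * X * (C (t * t) + X * C t)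
      + (X - 2 * X ^ 2) * C t)
      + (- C (3 + 3 * s) - X ^ 2 * C (3 - 3 * s) + C (3 * ν) * X ^ 2) *
          (C (t * t) + X * C t)) = t * (t + 1) * (2 * t - 2 + 3 * ν) := by
      simp only [eval_add, eval_mul, eval_sub, eval_neg, eval_X, eval_C, one_mul, eval_pow,
        eval_one, eval_ofNat]
      ring
    rw [h6] at h5
    simp only [map_add, map_sub, map_mul, map_one, map_ofNat] at h5 ⊢
    rw [← h5]
    module
  have Ph : P h (-F * t) := by
    apply key h _ 0
    intro e
    rw [pow_zero, one_smul, E3]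
    have hz : U (h e) + (C (s * F) : ℂ[X]) • U e ∈ M :=
      add_mem (hMU _) (M.smul_mem _ (hMU _))
    have hz' := hπ1 _ hz
    rw [← map_smul] at hz'
    rw [map_add, hz', add_zero]
    simp only [map_smul, hπt _ (hMU e), map_mul, map_neg]
    module
  have Psm : ∀ c : ℂ, P (algebraMap ℂ _ c) c := by
    intro c
    refine ⟨0, fun m hm => ?_⟩
    have : sqAct (algebraMap ℂ (Module.End ℂ E) c) m = c • m := rfl
    rw [this, sq_C, pow_zero, one_smul, sub_self]
    exact zero_mem _
  have Padd : ∀ y y' c c', P y c → P y' c' → P (y + y') (c + c') := by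
    rintro y y' c c' ⟨a, ha⟩ ⟨b, hb⟩
    refine ⟨a + b, fun m hm => ?_⟩
    have h1 := J.smul_mem (X ^ b) (ha m hm)
    have h2 := J.smul_mem (X ^ a) (hb m hm)
    have h3 := hpoly (X ^ b * C c + X ^ a * C c') m hm
    have h4 := add_mem (add_mem h1 h2) h3
    have : sqAct (y + y') m = sqAct y m + sqAct y' m := rfl
    rw [this]
    convert h4 using 1
    simp only [eval_add, eval_mul, eval_pow, eval_X, eval_C, one_pow, one_mul]
    module
  have Pmul : ∀ y y' c c', P y c → P y' c' → P (y * y') (c * c') := by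
    rintro y y' c c' ⟨a, ha⟩ ⟨b, hb⟩
    refine ⟨a + b, fun m hm => ?_⟩
    have h1 := hb m hm
    have h2 := ha _ (hJM h1)
    have h3 := add_mem h2 (J.smul_mem (C c) h1)
    have h4 := add_mem h3 (J.smul_mem (C c') (ha m hm))
    have : sqAct (y * y') m = sqAct y (sqAct y' m) := rfl
    rw [this]
    convert h4 using 1
    simp only [map_sub, sqAct_poly, map_mul]
    module
  have Puniq : ∀ y c c', P y c → P y c' → c = c' := by
    rintro y c c' ⟨a, ha⟩ ⟨b, hb⟩
    by_contra hcc
    apply hm0J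
    have h1 := J.smul_mem (X ^ b) (ha m0 hm0)
    have h2 := J.smul_mem (X ^ a) (hb m0 hm0)
    have h3 := hpoly (X ^ b * C c - X ^ a * C c') m0 hm0
    have h4 := sub_mem (sub_mem h2 h1) h3
    have h5 := J.smul_mem (C (c - c')⁻¹) h4
    convert h5 using 1
    simp only [eval_sub, eval_mul, eval_pow, eval_X, eval_C, one_pow, one_mul]
    have : (m0 : Sq E) = (C (c - c')⁻¹ * C (c - c') : ℂ[X]) • m0 := by
      rw [← map_mul, inv_mul_cancel₀ (sub_ne_zero.mpr hcc), map_one, one_smul]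
    conv_lhs => rw [this]
    module
  have Pall : ∀ y, ∃ c, P y c := by
    have hb := burnside_gen ({C1, C2, h} : Set (Module.End ℂ E)) (by
      intro W hW
      exact hirr W (hW C1 (by simp)) (hW C2 (by simp)) (hW h (by simp)))
    intro y
    have hy : y ∈ Algebra.adjoin ℂ ({C1, C2, h} : Set (Module.End ℂ E)) := by rw [hb]; trivial
    induction hy using Algebra.adjoin_induction with
    | mem x hx =>
      rcases hx with rfl | rfl | rfl
      · exact ⟨_, PC1⟩
      · exact ⟨_, PC2⟩
      · exact ⟨_, Ph⟩
    | algebraMap c => exact ⟨c, Psm c⟩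
    | add x y _ _ hx hy =>
      obtain ⟨c, hc⟩ := hx
      obtain ⟨c', hc'⟩ := hy
      exact ⟨_, Padd _ _ _ _ hc hc'⟩
    | mul x y _ _ hx hy =>
      obtain ⟨c, hc⟩ := hx
      obtain ⟨c', hc'⟩ := hy
      exact ⟨_, Pmul _ _ _ _ hc hc'⟩
  have hdim := dim_one_of_char P Pall Pmul Padd Psm Puniq
  have hsc : ∀ y c, P y c → ∀ e, y e = c • e := by
    intro y c hy e
    obtain ⟨v, hv0, hv⟩ := finrank_eq_one_iff'.mp hdim
    obtain ⟨d, hd⟩ := hv (y v)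
    have hyd : y = algebraMap ℂ _ d := by
      ext w
      obtain ⟨k, hk⟩ := hv w
      rw [← hk, map_smul, ← hd, Module.algebraMap_end_apply, smul_comm]
    have := Puniq _ _ _ hy (hyd ▸ Psm d)
    rw [hyd, Module.algebraMap_end_apply, this]
  exact ⟨t, fun e => ⟨hsc _ _ PC1 e, hsc _ _ PC2 e, hsc _ _ Ph e⟩⟩

end DAbs

section DAlg

/-- The normalising scalars `(-1)^j / j!`. -/
noncomputable def kap (j : ℕ) : ℂ := (-1) ^ j / (j.factorial : ℂ)

theorem kap_zero : kap 0 = 1 := by simp [kap]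

theorem kap_succ (j : ℕ) : kap j = -((j + 1 : ℂ) * kap (j + 1)) := by
  have h1 : (j.factorial : ℂ) ≠ 0 := by exact_mod_cast j.factorial_ne_zero
  have h2 : (j + 1 : ℂ) ≠ 0 := by exact_mod_cast j.succ_ne_zero
  unfold kap
  rw [Nat.factorial_succ]
  push_cast
  field_simp
  ring

theorem kap_ne (j : ℕ) : kap j ≠ 0 := by
  unfold kap
  have h1 : (j.factorial : ℂ) ≠ 0 := by exact_mod_cast j.factorial_ne_zero
  exact div_ne_zero (pow_ne_zero _ (by norm_num)) h1

theorem D_alg {V : Type} [AddCommGroup V] [Module ℂ V] (C1 C2 h : Module.End ℂ V)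
    (x A B : ℕ → Module.End ℂ V) (s : ℕ) (ν F : ℂ)
    (E₀ : Submodule ℂ V) [FiniteDimensional ℂ E₀] (hne : E₀ ≠ ⊥)
    (hC1 : ∀ e ∈ E₀, C1 e ∈ E₀) (hC2 : ∀ e ∈ E₀, C2 e ∈ E₀) (hh : ∀ e ∈ E₀, h e ∈ E₀)
    (hmin : ∀ W ≤ E₀, (∀ w ∈ W, C1 w ∈ W) → (∀ w ∈ W, C2 w ∈ W) →
      (∀ w ∈ W, h w ∈ W) → W = ⊥ ∨ W = E₀)
    (A0 : A 0 = x 0) (A1 : ∀ j : ℕ, A (j + 1) = x (j + 1) - (j + 1 : ℂ) • A j)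
    (B0 : B 0 = A 0) (B1 : ∀ j : ℕ, B (j + 1) = A (j + 1) - (j + 1 : ℂ) • B j)
    (hx : ∀ j ≤ 2 * s + 1, ∀ e ∈ E₀, x j e ∈ E₀)
    (R1 : ∀ (j : ℕ), ∀ e ∈ E₀, C1 (A j e) = (j - 2 * s : ℂ) • x (j + 1) e + x j (C1 e)
      + (-2 * (j - s) * ν + (j + 1 - s) * (j - s)) • x j e)
    (R2 : ∀ (j : ℕ), ∀ e ∈ E₀, C2 (B j e) = (j - 3 * s : ℂ) • x (j + 2) e
      + x j (C2 e) - (3 * (j - s : ℂ)) • x j (C1 e)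
      + (3 * (j + 1 - s) * (j - s) * ν - (j + 2 - s) * (j + 1 - s) * (j - s)) • x j e)
    (R3 : ∀ (j : ℕ), ∀ e ∈ E₀, A j e ∈ E₀ → h (A j e) = x j (h e) - ((j - s) * F) • x j e)
    (hu : ∃ j, ∃ e ∈ E₀, x j e ≠ 0) :
    ∃ t : ℂ, ∀ e ∈ E₀, C1 e = (-t * (t - 1 + 2 * ν)) • e ∧
      C2 e = (t * (t + 1) * (2 * t - 2 + 3 * ν)) • e ∧ h e = (-F * t) • e := by
  have hxA : ∀ j, (∀ e ∈ E₀, x j e ∈ E₀) ∧ (∀ e ∈ E₀, A j e ∈ E₀) := by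
    intro j
    induction j with
    | zero => exact ⟨hx 0 (by omega), by rw [A0]; exact hx 0 (by omega)⟩
    | succ j ih =>
      have hx1 : ∀ e ∈ E₀, x (j + 1) e ∈ E₀ := by
        by_cases hj : j + 1 ≤ 2 * s + 1
        · exact hx _ hj
        · intro e he
          have hc : (j - 2 * s : ℂ) ≠ 0 := by
            rw [sub_ne_zero]
            intro h
            have : j = 2 * s := by exact_mod_cast h
            omega
          have h1 := R1 j e he
          have h2 : (j - 2 * s : ℂ) • x (j + 1) e = C1 (A j e) - x j (C1 e)
              - (-2 * (j - s) * ν + (j + 1 - s) * (j - s)) • x j e := by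
            rw [h1]; abel
          have h3 : (j - 2 * s : ℂ) • x (j + 1) e ∈ E₀ := by
            rw [h2]
            exact sub_mem (sub_mem (hC1 _ (ih.2 e he)) (ih.1 _ (hC1 e he)))
              (E₀.smul_mem _ (ih.1 e he))
          exact (E₀.smul_mem_iff hc).mp h3
      refine ⟨hx1, fun e he => ?_⟩
      rw [A1, LinearMap.sub_apply, LinearMap.smul_apply]
      exact sub_mem (hx1 e he) (E₀.smul_mem _ (ih.2 e he))
  have hB : ∀ j, ∀ e ∈ E₀, B j e ∈ E₀ := by
    intro j
    induction j with
    | zero => rw [B0]; exact (hxA 0).2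
    | succ j ih =>
      intro e he
      rw [B1, LinearMap.sub_apply, LinearMap.smul_apply]
      exact sub_mem ((hxA _).2 e he) (E₀.smul_mem _ (ih e he))
  have : Nontrivial E₀ := Submodule.nontrivial_iff_ne_bot.mpr hne
  obtain ⟨t, ht⟩ := D_abs (E := E₀) (C1.restrict hC1) (C2.restrict hC2) (h.restrict hh) (by
      intro W h1 h2 h3
      have := hmin (W.map E₀.subtype) (Submodule.map_subtype_le _ _) (by
          rintro _ ⟨w, hw, rfl⟩
          exact ⟨_, h1 w hw, rfl⟩) (by
          rintro _ ⟨w, hw, rfl⟩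
          exact ⟨_, h2 w hw, rfl⟩) (by
          rintro _ ⟨w, hw, rfl⟩
          exact ⟨_, h3 w hw, rfl⟩)
      rcases this with h | h
      · left
        rw [eq_bot_iff]
        intro w hw
        have : (w : V) ∈ W.map E₀.subtype := ⟨w, hw, rfl⟩
        rw [h, Submodule.mem_bot] at this
        exact (Submodule.mem_bot ℂ).mpr (Subtype.ext this)
      · right
        rw [eq_top_iff]
        rintro ⟨w, hw''⟩ -
        have hw := hw''
        rw [← h] at hw
        obtain ⟨w', hw', h''⟩ := hw
        have : w' = ⟨w, hw''⟩ := Subtype.ext h''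
        rw [← this]
        exact hw')
    (fun j => kap j • (x j).restrict (hxA j).1) (fun j => kap j • (A j).restrict (hxA j).2)
    (fun j => kap j • (B j).restrict (hB j)) ν F s
    (by
      ext e
      simp [A0])
    (by
      intro j
      ext e
      simp only [LinearMap.smul_apply, LinearMap.add_apply, Submodule.coe_add,
        Submodule.coe_smul, LinearMap.coe_restrict_apply, A1, LinearMap.sub_apply, kap_succ j]
      module)
    (by
      ext e
      simp [B0])
    (by
      intro j
      ext e
      simp only [LinearMap.smul_apply, LinearMap.add_apply, Submodule.coe_add,
        Submodule.coe_smul, LinearMap.coe_restrict_apply, B1, LinearMap.sub_apply, kap_succ j]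
      module)
    (by
      intro j e
      apply Subtype.ext
      simp only [LinearMap.smul_apply, Submodule.coe_add, map_smul, 
        Submodule.coe_smul, LinearMap.coe_restrict_apply]
      rw [R1 j _ e.2, kap_succ j]
      module)
    (by
      intro j e
      apply Subtype.ext
      simp only [LinearMap.smul_apply, Submodule.coe_add, map_smul, Submodule.coe_sub,
        Submodule.coe_smul, LinearMap.coe_restrict_apply]
      rw [R2 j _ e.2, kap_succ j, kap_succ (j + 1)]
      push_cast
      module)
    (by
      intro j e
      apply Subtype.ext
      simp only [LinearMap.smul_apply, map_smul, Submodule.coe_sub,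
        Submodule.coe_smul, LinearMap.coe_restrict_apply]
      rw [R3 j _ e.2 ((hxA j).2 _ e.2)]
      module)
    (by
      obtain ⟨j, e, he, h0⟩ := hu
      refine ⟨j, ⟨e, he⟩, fun h => h0 ?_⟩
      have := congrArg Subtype.val h
      simp only [LinearMap.smul_apply, Submodule.coe_smul, LinearMap.coe_restrict_apply,
        Submodule.coe_zero] at this
      exact (smul_eq_zero.mp this).resolve_left (kap_ne j))
  refine ⟨t, fun e he => ?_⟩
  obtain ⟨h1, h2, h3⟩ := ht ⟨e, he⟩
  exact ⟨congrArg Subtype.val h1, congrArg Subtype.val h2, congrArg Subtype.val h3⟩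

theorem exists_min {V : Type} [AddCommGroup V] [Module ℂ V] (E : Submodule ℂ V)
    [FiniteDimensional ℂ E] (hne : E ≠ ⊥) (p : Submodule ℂ V → Prop) (hp : p E) :
    ∃ E₀ ≤ E, E₀ ≠ ⊥ ∧ p E₀ ∧ ∀ W ≤ E₀, p W → W = ⊥ ∨ W = E₀ := by
  let S : Set ℕ := {n | ∃ W ≤ E, W ≠ ⊥ ∧ p W ∧ Module.finrank ℂ W = n}
  have hS : S.Nonempty := ⟨_, E, le_rfl, hne, hp, rfl⟩
  obtain ⟨E₀, h1, h2, h3, h4⟩ := Nat.sInf_mem hS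
  refine ⟨E₀, h1, h2, h3, fun W hW hpW => ?_⟩
  by_cases hb : W = ⊥
  · exact Or.inl hb
  · right
    have : FiniteDimensional ℂ E₀ := Submodule.finiteDimensional_of_le h1
    apply Submodule.eq_of_le_of_finrank_le hW
    rw [h4]
    exact Nat.sInf_le ⟨W, hW.trans h1, hb, hpW, rfl⟩

end DAlg

namespace QRep

variable {V : Type} [AddCommGroup V] [Module ℂ V]

theorem L_Lm1 (ρ : QRep V) (k : ℤ) (w : V) :
    ρ.L k (ρ.L (-1) w) = ρ.L (-1) (ρ.L k w) - ((k : ℂ) + 1) • ρ.L (k - 1) w := by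
  have := ρ.rel_LL k (-1) w
  have h0 : ((1 / 12 : ℂ) * ((((-1 : ℤ)) : ℂ) ^ 3 - (((-1 : ℤ)) : ℂ)) *
      (if k + -1 = 0 then (1 : ℂ) else 0) * ρ.c₀) = 0 := by norm_num
  rw [h0, zero_smul, add_zero, ← sub_eq_add_neg] at this
  rw [sub_eq_iff_eq_add.mp this]
  push_cast
  module

theorem D_one (ρ : QRep V) (v : V) : ρ.D 1 v = ρ.L (-1) v := by
  rw [D_succ, D_zero]

theorem L0D (ρ : QRep V) {ν : ℂ} {e : V} (he : e ∈ ρ.wt ν) (m : ℕ) :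
    ρ.L 0 (ρ.D m e) = (ν - m) • ρ.D m e := (ρ.mem_wt).mp (ρ.D_wt he m)

theorem L1D (ρ : QRep V) {ν : ℂ} {e : V} (he : e ∈ ρ.wt ν) (m : ℕ) :
    ρ.L 1 (ρ.D (m + 1) e) = ρ.D m (ρ.L 1 (ρ.L (-1) e)) + (-2 * m * ν + m * (m + 1)) • ρ.D m e := by
  induction m with
  | zero => simp [D_zero, D_one]
  | succ m ih =>
    rw [D_succ, L_Lm1, ih, sub_self, L0D ρ he, map_add, map_smul, ← D_succ, ← D_succ]
    push_cast
    module

theorem L2D (ρ : QRep V) {ν : ℂ} {e : V} (he : e ∈ ρ.wt ν) (m : ℕ) :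
    ρ.L 2 (ρ.D (m + 2) e) = ρ.D m (ρ.L 2 (ρ.D 2 e)) - (3 * m : ℂ) • ρ.D m (ρ.L 1 (ρ.L (-1) e))
      + (3 * (m + 1) * m * ν - (m + 2) * (m + 1) * m) • ρ.D m e := by
  induction m with
  | zero => simp [D_zero]
  | succ m ih =>
    have h1 := ρ.L1D he (m + 1)
    rw [show m + 1 + 2 = (m + 2) + 1 by ring, D_succ, L_Lm1, ih,
      show (2 : ℤ) - 1 = 1 by norm_num, show m + 2 = m + 1 + 1 by ring, h1]
    simp only [map_add, map_sub, map_smul, ← D_succ]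
    push_cast
    module

theorem H1D (ρ : QRep V) {F : ℂ} (hF : ∀ v, ρ.H 0 v = F • v) (e : V) (m : ℕ) :
    ρ.H 1 (ρ.D (m + 1) e) = ρ.D m (ρ.H 1 (ρ.L (-1) e)) - (m * F) • ρ.D m e := by
  induction m with
  | zero => simp [D_zero, D_one]
  | succ m ih =>
    rw [D_succ, HL, ih, show (-1 : ℤ) + 1 = 0 by norm_num, hF, map_sub, map_smul, ← D_succ,
      ← D_succ]
    push_cast
    module

/-- The recursion `A_{j+1} = x_{j+1} - (j+1) A_j`. -/
noncomputable def recA (x : ℕ → Module.End ℂ V) : ℕ → Module.End ℂ V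
  | 0 => x 0
  | j + 1 => x (j + 1) - (j + 1 : ℂ) • recA x j

theorem recA_G (ρ : QRep V) (G : ℕ → ℕ → Module.End ℂ V)
    (g0 : ∀ m v, G 0 (m + 1) v = ρ.L (-1) (G 0 m v))
    (g1 : ∀ j m v, G (j + 1) (m + 1) v = ρ.L (-1) (G (j + 1) m v) - (j + 1 : ℂ) • G j (m + 1) v)
    (j : ℕ) : (∀ v, ρ.L (-1) (recA (fun j => G j 0) j v) = G j 1 v) ∧
      ∀ v, ρ.D 2 (recA (recA (fun j => G j 0)) j v) = G j 2 v := by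
  have h1 : ∀ j v, ρ.L (-1) (recA (fun j => G j 0) j v) = G j 1 v := by
    intro j
    induction j with
    | zero => intro v; rw [recA, g0 0]
    | succ j ih =>
      intro v
      rw [recA, LinearMap.sub_apply, LinearMap.smul_apply, map_sub, map_smul, ih, g1 j 0]
  refine ⟨h1 j, ?_⟩
  induction j with
  | zero => intro v; rw [recA, D_succ', h1, D_one, g0 1]
  | succ j ih =>
    intro v
    rw [recA, LinearMap.sub_apply, LinearMap.smul_apply, map_sub, map_smul, ih, g1 j 1,
      D_succ', h1, D_one]

/-- The family for `H`. -/
noncomputable def GH (ρ : QRep V) (j m : ℕ) : Module.End ℂ V := ρ.H j ∘ₗ ρ.D (j + m)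

/-- The family for `L`. -/
noncomputable def GLf (ρ : QRep V) : ℕ → ℕ → Module.End ℂ V
  | 0, m => ρ.D m
  | j + 1, m => ρ.L j ∘ₗ ρ.D (j + m)

theorem GH_apply (ρ : QRep V) (j m : ℕ) (v : V) : ρ.GH j m v = ρ.H j (ρ.D (j + m) v) := rfl
theorem GL_zero (ρ : QRep V) (m : ℕ) (v : V) : ρ.GLf 0 m v = ρ.D m v := rfl
theorem GL_succ (ρ : QRep V) (j m : ℕ) (v : V) :
    ρ.GLf (j + 1) m v = ρ.L j (ρ.D (j + m) v) := rfl

theorem GH_rec (ρ : QRep V) (hF0 : ∃ F : ℂ, ∀ v, ρ.H 0 v = F • v) (j : ℕ) :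
    (∀ v, ρ.L (-1) (recA (fun j => ρ.GH j 0) j v) = ρ.GH j 1 v) ∧
      ∀ v, ρ.D 2 (recA (recA (fun j => ρ.GH j 0)) j v) = ρ.GH j 2 v := by
  obtain ⟨F, hF⟩ := hF0
  apply recA_G
  · intro m v
    rw [GH_apply, GH_apply, Nat.cast_zero, hF, hF, map_smul, ← D_succ]
    congr 3
  · intro j m v
    rw [GH_apply, GH_apply, GH_apply, show j + 1 + (m + 1) = (j + 1 + m) + 1 by ring, D_succ, HL,
      show j + (m + 1) = j + 1 + m by ring]
    push_cast
    rw [show (-1 : ℤ) + (j + 1) = j by ring]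

theorem GL_rec (ρ : QRep V) (j : ℕ) :
    (∀ v, ρ.L (-1) (recA (fun j => ρ.GLf j 0) j v) = ρ.GLf j 1 v) ∧
      ∀ v, ρ.D 2 (recA (recA (fun j => ρ.GLf j 0)) j v) = ρ.GLf j 2 v := by
  apply recA_G
  · intro m v
    rw [GL_zero, GL_zero, D_succ]
  · intro j m v
    cases j with
    | zero =>
      rw [GL_succ, GL_succ, GL_zero, zero_add, zero_add, D_succ, L_Lm1]
      simp
    | succ j =>
      rw [GL_succ, GL_succ, GL_succ, show j + 1 + (m + 1) = (j + 1 + m) + 1 by ring, D_succ, L_Lm1,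
        show j + (m + 1) = j + 1 + m by ring]
      push_cast
      rw [add_sub_cancel_right]

theorem Tail.D_main {ρ : QRep V} {ν F : ℂ} (hC : ρ.Cuspidal)
    (T : ρ.Tail ν) (hF : ∀ v, ρ.H 0 v = F • v) :
    ∃ β : ℂ, ∃ ε ∈ ρ.wt ν, ε ≠ 0 ∧ ρ.L 1 (ρ.L (-1) ε) = ((ν - β) * (ν - 1 + β)) • ε ∧
      ρ.L 2 (ρ.D 2 ε) = ((ν - β) * (ν - 1 - β) * (ν - 2 + 2 * β)) • ε ∧
      ρ.H 1 (ρ.L (-1) ε) = (F * (ν - β)) • ε := by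
  obtain ⟨B, hB⟩ := hC.bound
  have hfd := (hB ν).1
  let C1 : Module.End ℂ V := ρ.L 1 ∘ₗ ρ.L (-1)
  let C2 : Module.End ℂ V := ρ.L 2 ∘ₗ ρ.D 2
  let h : Module.End ℂ V := ρ.H 1 ∘ₗ ρ.L (-1)
  have aC1 : ∀ v, C1 v = ρ.L 1 (ρ.L (-1) v) := fun _ => rfl
  have aC2 : ∀ v, C2 v = ρ.L 2 (ρ.D 2 v) := fun _ => rfl
  have ah : ∀ v, h v = ρ.H 1 (ρ.L (-1) v) := fun _ => rfl
  obtain ⟨E₀, hE, hne, ⟨hC1, hC2, hh⟩, hmin⟩ := exists_min (ρ.wt ν) T.ne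
    (fun W => (∀ w ∈ W, C1 w ∈ W) ∧ (∀ w ∈ W, C2 w ∈ W) ∧ (∀ w ∈ W, h w ∈ W)) (by
      refine ⟨fun w hw => ?_, fun w hw => ?_, fun w hw => ?_⟩
      · exact ρ.L_wt' (ρ.L_wt hw (-1)) 1 (by push_cast; ring)
      · exact ρ.L_wt' (ρ.D_wt hw 2) 2 (by push_cast; ring)
      · exact ρ.H_wt' (ρ.L_wt hw (-1)) 1 (by push_cast; ring))
  have hfd0 : FiniteDimensional ℂ E₀ := Submodule.finiteDimensional_of_le hE
  have hmin' : ∀ W ≤ E₀, (∀ w ∈ W, C1 w ∈ W) → (∀ w ∈ W, C2 w ∈ W) →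
      (∀ w ∈ W, h w ∈ W) → W = ⊥ ∨ W = E₀ := fun W hW a b c => hmin W hW ⟨a, b, c⟩
  obtain ⟨ε, hε, hε0⟩ := Submodule.exists_mem_ne_zero_of_ne_bot hne
  have main : ∃ t : ℂ, ∀ e ∈ E₀, C1 e = (-t * (t - 1 + 2 * ν)) • e ∧
      C2 e = (t * (t + 1) * (2 * t - 2 + 3 * ν)) • e ∧ h e = (-F * t) • e := by
    by_cases hz : ∃ j, ∃ e ∈ E₀, ρ.GH j 0 e ≠ 0
    · refine D_alg C1 C2 h (fun j => ρ.GH j 0) (recA fun j => ρ.GH j 0)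
        (recA (recA fun j => ρ.GH j 0)) 0 ν F E₀ hne hC1 hC2 hh hmin' rfl (fun _ => rfl) rfl
        (fun _ => rfl) ?_ ?_ ?_ ?_ hz
      · intro j hj e he
        have : j = 0 ∨ j = 1 := by omega
        rcases this with rfl | rfl
        · show ρ.H ((0 : ℕ) : ℤ) (ρ.D 0 e) ∈ E₀
          rw [D_zero, Nat.cast_zero, hF]
          exact E₀.smul_mem _ he
        · show ρ.H ((1 : ℕ) : ℤ) (ρ.D 1 e) ∈ E₀
          rw [D_one, Nat.cast_one]
          exact hh e he
      · intro j e he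
        rw [aC1, (ρ.GH_rec ⟨F, hF⟩ j).1]
        simp only [GH_apply, add_zero, aC1]
        rw [LH, L1D ρ (hE he), map_add, map_smul, show (1 : ℤ) + j = ((j + 1 : ℕ) : ℤ) by
          push_cast; ring]
        push_cast
        module
      · intro j e he
        rw [aC2, (ρ.GH_rec ⟨F, hF⟩ j).2]
        simp only [GH_apply, add_zero, aC1, aC2]
        rw [LH, L2D ρ (hE he), map_add, map_sub, map_smul, map_smul,
          show (2 : ℤ) + j = ((j + 2 : ℕ) : ℤ) by push_cast; ring]
        push_cast
        module
      · intro j e he _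
        rw [ah, (ρ.GH_rec ⟨F, hF⟩ j).1]
        simp only [GH_apply, add_zero, ah]
        rw [HH _ _ _ (by omega), H1D ρ hF, map_sub, map_smul]
        push_cast
        module
    · push Not at hz
      have hF0 : F = 0 := by
        have := hz 0 ε hε
        rw [GH_apply, D_zero, Nat.cast_zero, hF] at this
        exact (smul_eq_zero.mp this).resolve_right hε0
      have hh0 : ∀ e ∈ E₀, h e = 0 := by
        intro e he
        have := hz 1 e he
        rwa [GH_apply, D_one, Nat.cast_one] at this
      refine D_alg C1 C2 h (fun j => ρ.GLf j 0) (recA fun j => ρ.GLf j 0)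
        (recA (recA fun j => ρ.GLf j 0)) 1 ν F E₀ hne hC1 hC2 hh hmin' rfl (fun _ => rfl) rfl
        (fun _ => rfl) ?_ ?_ ?_ ?_ ⟨0, ε, hε, by rw [GL_zero, D_zero]; exact hε0⟩
      · intro j hj e he
        have : j = 0 ∨ j = 1 ∨ j = 2 ∨ j = 3 := by omega
        rcases this with rfl | rfl | rfl | rfl
        · show ρ.D 0 e ∈ E₀
          rw [D_zero]; exact he
        · show ρ.L ((0 : ℕ) : ℤ) (ρ.D 0 e) ∈ E₀
          rw [D_zero, Nat.cast_zero, (ρ.mem_wt).mp (hE he)]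
          exact E₀.smul_mem _ he
        · show ρ.L ((1 : ℕ) : ℤ) (ρ.D 1 e) ∈ E₀
          rw [D_one, Nat.cast_one]
          exact hC1 e he
        · exact hC2 e he
      · intro j e he
        rw [aC1, (ρ.GL_rec j).1]
        cases j with
        | zero =>
          simp only [GL_zero, GL_succ, add_zero, aC1, D_zero, D_one, Nat.cast_zero,
            (ρ.mem_wt).mp (hE he)]
          push_cast
          module
        | succ j =>
          simp only [GL_succ, add_zero, aC1]
          rw [LL _ _ _ (by omega), L1D ρ (hE he), map_add, map_smul,
            show (1 : ℤ) + j = ((j + 1 : ℕ) : ℤ) by push_cast; ring]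
          push_cast
          module
      · intro j e he
        rw [aC2, (ρ.GL_rec j).2]
        cases j with
        | zero =>
          simp only [GL_zero, GL_succ, add_zero, zero_add, aC1, aC2, D_zero, D_one, Nat.cast_one]
          push_cast
          module
        | succ j =>
          simp only [GL_succ, add_zero, aC1, aC2]
          rw [LL _ _ _ (by omega), L2D ρ (hE he), map_add, map_sub, map_smul, map_smul,
            show (2 : ℤ) + j = ((j + 2 : ℕ) : ℤ) by push_cast; ring]
          push_cast
          module
      · intro j e he hA
        show h _ = ρ.GLf j 0 (h e) - ((j - ((1 : ℕ) : ℂ)) * F) • ρ.GLf j 0 e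
        rw [hh0 _ hA, hh0 e he, hF0]
        simp
  obtain ⟨t, ht⟩ := main
  obtain ⟨h1, h2, h3⟩ := ht ε hε
  refine ⟨ν + t, ε, hE hε, hε0, ?_, ?_, ?_⟩
  · rw [← aC1, h1]; congr 1; ring
  · rw [← aC2, h2]; congr 1; ring
  · rw [← ah, h3]; congr 1; ring

end QRep

section Large

open Polynomial

theorem poly_bd (p : ℂ[X]) (hp : p.natDegree ≤ 5) :
    ∃ B : ℝ, 0 ≤ B ∧ ∀ n : ℕ, 1 ≤ n → ‖p.eval (n : ℂ)‖ ≤ B * (n : ℝ) ^ 5 := by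
  refine ⟨∑ i ∈ Finset.range 6, ‖p.coeff i‖, Finset.sum_nonneg fun _ _ => norm_nonneg _, ?_⟩
  intro n hn
  rw [Polynomial.eval_eq_sum_range' (n := 6) (by omega), Finset.sum_mul]
  refine (norm_sum_le _ _).trans (Finset.sum_le_sum fun i hi => ?_)
  rw [norm_mul, norm_pow, Complex.norm_natCast]
  have h1 : (1 : ℝ) ≤ n := by exact_mod_cast hn
  have : i ≤ 5 := by have := Finset.mem_range.mp hi; omega
  gcongr

theorem op_bd {E : Type} [AddCommGroup E] [Module ℂ E] [FiniteDimensional ℂ E] {d : ℕ}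
    (φ : E ≃ₗ[ℂ] (Fin d → ℂ)) (K : Module.End ℂ E) :
    ∃ B : ℝ, 0 ≤ B ∧ ∀ e, ‖φ (K e)‖ ≤ B * ‖φ e‖ := by
  let f : (Fin d → ℂ) →L[ℂ] (Fin d → ℂ) :=
    LinearMap.toContinuousLinearMap (φ.toLinearMap ∘ₗ K ∘ₗ φ.symm.toLinearMap)
  refine ⟨‖f‖, norm_nonneg _, fun e => ?_⟩
  have := f.le_opNorm (φ e)
  have h2 : f (φ e) = φ (K e) := by simp [f]
  rwa [h2] at this

theorem large {E : Type} [AddCommGroup E] [Module ℂ E] [FiniteDimensional ℂ E]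
    {ι : Type} [Fintype ι] (K : ι → Module.End ℂ E) (p : ι → ℂ[X])
    (hp : ∀ i, (p i).natDegree ≤ 5) (c : ℂ) (hc : c ≠ 0) :
    ∃ N : ℕ, ∀ n : ℕ, N ≤ n → ∀ e : E,
      (c * (n : ℂ) ^ 6) • e + ∑ i, (p i).eval (n : ℂ) • K i e = 0 → e = 0 := by
  let φ := (Module.finBasis ℂ E).equivFun
  choose B hB0 hB using fun i => poly_bd (p i) (hp i)
  choose B' hB0' hB' using fun i => op_bd φ (K i)
  have hcn : 0 < ‖c‖ := norm_pos_iff.mpr hc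
  obtain ⟨N, hN⟩ := exists_nat_gt ((∑ i, B i * B' i) / ‖c‖)
  refine ⟨N + 1, fun n hn e he => ?_⟩
  by_contra hne
  have hφ : 0 < ‖φ e‖ := by
    rw [norm_pos_iff]
    intro h
    exact hne ((LinearEquiv.map_eq_zero_iff φ).mp h)
  have h1 : φ ((c * (n : ℂ) ^ 6) • e) = - ∑ i, (p i).eval (n : ℂ) • φ (K i e) := by
    rw [eq_neg_of_add_eq_zero_left he, map_neg, map_sum]
    simp
  have h2 : ‖φ ((c * (n : ℂ) ^ 6) • e)‖ ≤ ∑ i, (B i * (n : ℝ) ^ 5) * (B' i * ‖φ e‖) := by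
    rw [h1, norm_neg]
    refine (norm_sum_le _ _).trans (Finset.sum_le_sum fun i _ => ?_)
    rw [norm_smul]
    exact mul_le_mul (hB i n (by omega)) (hB' i e) (norm_nonneg _)
      (mul_nonneg (hB0 i) (by positivity))
  rw [map_smul, norm_smul, norm_mul, norm_pow, Complex.norm_natCast] at h2
  have h3 : ∑ i, (B i * (n : ℝ) ^ 5) * (B' i * ‖φ e‖) =
      (∑ i, B i * B' i) * ((n : ℝ) ^ 5 * ‖φ e‖) := by
    rw [Finset.sum_mul]
    refine Finset.sum_congr rfl fun i _ => by ring
  rw [h3] at h2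
  have hn0 : (0 : ℝ) < n := by
    have : 0 < n := by omega
    exact_mod_cast this
  have h4 : 0 < (n : ℝ) ^ 5 * ‖φ e‖ := by positivity
  have h5 : ‖c‖ * n ≤ ∑ i, B i * B' i := by
    have : (‖c‖ * n) * ((n : ℝ) ^ 5 * ‖φ e‖) ≤ (∑ i, B i * B' i) * ((n : ℝ) ^ 5 * ‖φ e‖) := by
      calc _ = ‖c‖ * (n : ℝ) ^ 6 * ‖φ e‖ := by ring
        _ ≤ _ := h2
    exact le_of_mul_le_mul_right this h4
  rw [div_lt_iff₀ hcn] at hN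
  have h6 : (N : ℝ) ≤ n := by
    have : N ≤ n := by omega
    exact_mod_cast this
  nlinarith

theorem y_large {E : Type} [AddCommGroup E] [Module ℂ E] [FiniteDimensional ℂ E]
    (C1 C2 C3 : Module.End ℂ E) (ν β J : ℂ) (hJ : J ≠ 0) : ∃ N : ℕ, ∀ n : ℕ, N ≤ n → ∀ e : E,
    ∀ x q0 q1 q2 R : ℂ, x = ν - n - 3 + J → q0 = -2 * n * ν + n * (n + 1) →
      q1 = -2 * (n + 1) * ν + (n + 1) * (n + 2) → q2 = -2 * (n + 2) * ν + (n + 2) * (n + 3) →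
      R = (x + β) * (x + 1 + β) * (x + 2 + β) →
      (x + 3 * β) • (C1 (C1 (C1 e)) + (q0 + q1 + q2) • C1 (C1 e)
        + (q0 * q1 + q0 * q2 + q1 * q2) • C1 e + (q0 * q1 * q2) • e)
      = R • (C3 e - (4 * n : ℂ) • C2 e + (6 * n * (n + 1) : ℂ) • C1 e
        + (-4 * n * (n + 1) * (n + 2) * ν + n * (n + 1) * (n + 2) * (n + 3)) • e) → e = 0 := by
  let k1 : ℂ := (-54) * J + (72) * J * β + (-132) * J * β * ν + (48) * J * β * ν ^ 2 + (-18) * J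
      * β ^ 2 + (24) * J * β ^ 2 * ν + (116) * J * ν + (-66) * J * ν ^ 2 + (8) * J * ν ^ 3 + (36)
      * J ^ 2 + (-18) * J ^ 2 * β + (24) * J ^ 2 * β * ν + (-66) * J ^ 2 * ν + (24) * J ^ 2 * ν ^
      2 + (-6) * J ^ 3 + (8) * J ^ 3 * ν + (-30) * β + (28) * β * ν + (30) * β * ν ^ 2 + (-24) * β
      * ν ^ 3 + (36) * β ^ 2 + (-66) * β ^ 2 * ν + (24) * β ^ 2 * ν ^ 2 + (-6) * β ^ 3 + (8) * β ^
      3 * ν + (30) * ν + (-64) * ν ^ 2 + (42) * ν ^ 3 + (-8) * ν ^ 4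
  let k2 : ℂ := (-153) * J + (168) * J * β + (-258) * J * β * ν + (72) * J * β * ν ^ 2 + (-33) *
      J * β ^ 2 + (36) * J * β ^ 2 * ν + (282) * J * ν + (-129) * J * ν ^ 2 + (12) * J * ν ^ 3 +
      (84) * J ^ 2 + (-33) * J ^ 2 * β + (36) * J ^ 2 * β * ν + (-129) * J ^ 2 * ν + (36) * J ^ 2
      * ν ^ 2 + (-11) * J ^ 3 + (12) * J ^ 3 * ν + (-73) * β + (54) * β * ν + (63) * β * ν ^ 2 +
      (-36) * β * ν ^ 3 + (84) * β ^ 2 + (-129) * β ^ 2 * ν + (36) * β ^ 2 * ν ^ 2 + (-11) * β ^ 3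
      + (12) * β ^ 3 * ν + (73) * ν + (-138) * ν ^ 2 + (77) * ν ^ 3 + (-12) * ν ^ 4
  let k3 : ℂ := (-165) * J + (138) * J * β + (-156) * J * β * ν + (24) * J * β * ν ^ 2 + (-18) *
      J * β ^ 2 + (12) * J * β ^ 2 * ν + (244) * J * ν + (-78) * J * ν ^ 2 + (4) * J * ν ^ 3 +
      (69) * J ^ 2 + (-18) * J ^ 2 * β + (12) * J ^ 2 * β * ν + (-78) * J ^ 2 * ν + (12) * J ^ 2 *
      ν ^ 2 + (-6) * J ^ 3 + (4) * J ^ 3 * ν + (-63) * β + (32) * β * ν + (42) * β * ν ^ 2 + (-12)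
      * β * ν ^ 3 + (69) * β ^ 2 + (-78) * β ^ 2 * ν + (12) * β ^ 2 * ν ^ 2 + (-6) * β ^ 3 + (4) *
      β ^ 3 * ν + (63) * ν + (-101) * ν ^ 2 + (42) * ν ^ 3 + (-4) * ν ^ 4
  let k4 : ℂ := (-85) * J + (48) * J * β + (-30) * J * β * ν + (-3) * J * β ^ 2 + (90) * J * ν +
      (-15) * J * ν ^ 2 + (24) * J ^ 2 + (-3) * J ^ 2 * β + (-15) * J ^ 2 * ν + (-1) * J ^ 3 +
      (-23) * β + (6) * β * ν + (9) * β * ν ^ 2 + (24) * β ^ 2 + (-15) * β ^ 2 * ν + (-1) * β ^ 3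
      + (23) * ν + (-30) * ν ^ 2 + (7) * ν ^ 3
  let k5 : ℂ := (-21) * J + (6) * J * β + (12) * J * ν + (3) * J ^ 2 + (-3) * β + (3) * β ^ 2 +
      (3) * ν + (-3) * ν ^ 2
  let px : ℂ[X] := C (ν - 3 + J) - X
  let pR : ℂ[X] := (C (ν - 3 + J + β) - X) * (C (ν - 3 + J + 1 + β) - X)
    * (C (ν - 3 + J + 2 + β) - X)
  let p0 : ℂ[X] := C (-2 * ν + 1) * X + X ^ 2
  let p1 : ℂ[X] := C (-2 * ν + 2) + C (-2 * ν + 3) * X + X ^ 2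
  let p2 : ℂ[X] := C (-4 * ν + 6) + C (-2 * ν + 5) * X + X ^ 2
  obtain ⟨N, hN⟩ := large (ι := Fin 6) ![1, C1, C1 * C1, C1 * C1 * C1, C2, C3]
    ![C k1 * X + C k2 * X ^ 2 + C k3 * X ^ 3 + C k4 * X ^ 4 + C k5 * X ^ 5,
      (px + C (3 * β)) * (p0 * p1 + p0 * p2 + p1 * p2) - pR * (C 6 * X * (X + C 1)),
      (px + C (3 * β)) * (p0 + p1 + p2), px + C (3 * β), pR * (C 4 * X), -pR]
    (by
      intro i
      fin_cases i
      · show natDegree (C k1 * X + C k2 * X ^ 2 + C k3 * X ^ 3 + C k4 * X ^ 4 + C k5 * X ^ 5) ≤ 5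
        compute_degree <;> norm_num
      · show natDegree ((px + C (3 * β)) * (p0 * p1 + p0 * p2 + p1 * p2)
          - pR * (C 6 * X * (X + C 1))) ≤ 5
        simp only [px, pR, p0, p1, p2]
        compute_degree <;> norm_num
      · show natDegree ((px + C (3 * β)) * (p0 + p1 + p2)) ≤ 5
        simp only [px, pR, p0, p1, p2]
        compute_degree <;> norm_num
      · show natDegree (px + C (3 * β)) ≤ 5
        simp only [px]
        compute_degree <;> norm_num
      · show natDegree (pR * (C 4 * X)) ≤ 5
        simp only [pR]
        compute_degree <;> norm_num
      · show natDegree (-pR) ≤ 5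
        simp only [pR]
        compute_degree <;> norm_num) (-2 * J) (by simpa using hJ)
  refine ⟨N, fun n hn e x q0 q1 q2 R hx h0 h1 h2 hR he => hN n hn e ?_⟩
  rw [← sub_eq_zero] at he
  rw [← he, Fin.sum_univ_six]
  show (-2 * J * (n : ℂ) ^ 6) • e
    + ((C k1 * X + C k2 * X ^ 2 + C k3 * X ^ 3 + C k4 * X ^ 4 + C k5 * X ^ 5).eval (n : ℂ) • e
      + ((px + C (3 * β)) * (p0 * p1 + p0 * p2 + p1 * p2)
          - pR * (C 6 * X * (X + C 1))).eval (n : ℂ) • C1 e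
      + ((px + C (3 * β)) * (p0 + p1 + p2)).eval (n : ℂ) • C1 (C1 e)
      + (px + C (3 * β)).eval (n : ℂ) • C1 (C1 (C1 e))
      + (pR * (C 4 * X)).eval (n : ℂ) • C2 e + (-pR).eval (n : ℂ) • C3 e) = _
  have ex : px.eval (n : ℂ) = x := by simp [px]; rw [hx]; ring
  have eR : pR.eval (n : ℂ) = R := by simp [pR]; rw [hR, hx]; ring
  have e0 : p0.eval (n : ℂ) = q0 := by simp [p0]; rw [h0]; ring
  have e1 : p1.eval (n : ℂ) = q1 := by simp [p1]; rw [h1]; ring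
  have e2 : p2.eval (n : ℂ) = q2 := by simp [p2]; rw [h2]; ring
  simp only [eval_add, eval_mul, eval_sub, eval_neg, eval_C, eval_X, eval_pow, ex, eR, e0, e1, e2]
  have key : -2 * J * (n : ℂ) ^ 6 + (k1 * n + k2 * n ^ 2 + k3 * n ^ 3 + k4 * n ^ 4 + k5 * n ^ 5) =
      (x + 3 * β) * (q0 * q1 * q2)
        - R * (-4 * n * (n + 1) * (n + 2) * ν + n * (n + 1) * (n + 2) * (n + 3)) := by
    simp only [k1, k2, k3, k4, k5, hR, h0, h1, h2, hx]
    ring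
  rw [← add_assoc, ← add_assoc, ← add_assoc, ← add_assoc, ← add_assoc, ← add_smul, key]
  module

end Large

namespace QRep

variable {V : Type} [AddCommGroup V] [Module ℂ V]

theorem L3D (ρ : QRep V) {ν : ℂ} {e : V} (he : e ∈ ρ.wt ν) (m : ℕ) :
    ρ.L 3 (ρ.D (m + 3) e) = ρ.D m (ρ.L 3 (ρ.D 3 e)) - (4 * m : ℂ) • ρ.D m (ρ.L 2 (ρ.D 2 e))
      + (6 * m * (m + 1) : ℂ) • ρ.D m (ρ.L 1 (ρ.L (-1) e))
      + (-4 * m * (m + 1) * (m + 2) * ν + m * (m + 1) * (m + 2) * (m + 3)) • ρ.D m e := by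
  induction m with
  | zero => simp [D_zero]
  | succ m ih =>
    have h1 := ρ.L2D he (m + 1)
    rw [show m + 1 + 3 = (m + 3) + 1 by ring, D_succ, L_Lm1, ih,
      show (3 : ℤ) - 1 = 2 by norm_num, show m + 3 = m + 1 + 2 by ring, h1]
    simp only [map_add, map_sub, map_smul, ← D_succ]
    push_cast
    module

theorem Tail.y_zero {ρ : QRep V} (hC : ρ.Cuspidal) {ν : ℂ} (T : ρ.Tail ν) (β : ℂ) (J : ℕ)
    (hJ : J ≠ 0) : ∃ N : ℤ, ∀ n : ℤ, N ≤ n → ∀ y ∈ ρ.wt (ν - n - J),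
      (ν - n + 3 * β) • ρ.L 1 (ρ.L 1 (ρ.L 1 y)) =
        ((ν - n + β) * (ν - n + 1 + β) * (ν - n + 2 + β)) • ρ.L 3 y → y = 0 := by
  obtain ⟨Dm, hD⟩ := hC.bound
  haveI := (hD ν).1
  have m1 : ∀ e ∈ ρ.wt ν, (ρ.L 1 ∘ₗ ρ.L (-1)) e ∈ ρ.wt ν := fun e he =>
    ρ.L_wt' (ρ.L_wt he (-1)) 1 (by push_cast; ring)
  have m2 : ∀ e ∈ ρ.wt ν, (ρ.L 2 ∘ₗ ρ.D 2) e ∈ ρ.wt ν := fun e he =>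
    ρ.L_wt' (ρ.D_wt he 2) 2 (by push_cast; ring)
  have m3 : ∀ e ∈ ρ.wt ν, (ρ.L 3 ∘ₗ ρ.D 3) e ∈ ρ.wt ν := fun e he =>
    ρ.L_wt' (ρ.D_wt he 3) 3 (by push_cast; ring)
  let C1 : Module.End ℂ (ρ.wt ν) := LinearMap.restrict _ m1
  let C2 : Module.End ℂ (ρ.wt ν) := LinearMap.restrict _ m2
  let C3 : Module.End ℂ (ρ.wt ν) := LinearMap.restrict _ m3
  have c1 : ∀ e : ρ.wt ν, ((C1 e : ρ.wt ν) : V) = ρ.L 1 (ρ.L (-1) e) := fun e => rfl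
  have c2 : ∀ e : ρ.wt ν, ((C2 e : ρ.wt ν) : V) = ρ.L 2 (ρ.D 2 e) := fun e => rfl
  have c3 : ∀ e : ρ.wt ν, ((C3 e : ρ.wt ν) : V) = ρ.L 3 (ρ.D 3 e) := fun e => rfl
  obtain ⟨N, hN⟩ := y_large C1 C2 C3 ν β (J : ℂ) (by exact_mod_cast hJ)
  refine ⟨N + 3, fun n hn y hy h => ?_⟩
  obtain ⟨m, hm⟩ : ∃ m : ℕ, (m : ℤ) = n + J - 3 := ⟨(n + J - 3).toNat, by omega⟩
  have hnm : (n : ℂ) = m + 3 - J := by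
    have : n = (m : ℤ) + 3 - J := by omega
    rw [this]; push_cast; ring
  have hy' : y ∈ ρ.wt (ν - (m + 3 : ℕ)) := by
    convert hy using 2
    rw [hnm]; push_cast; ring
  obtain ⟨e, he, rfl⟩ := T.D_surj (m + 3) y hy'
  have key : ∀ (j : ℕ) (w : ρ.wt ν), ρ.L 1 (ρ.D (j + 1) w) =
      ρ.D j ((C1 w + (-2 * j * ν + j * (j + 1) : ℂ) • w : ρ.wt ν) : V) := by
    intro j w
    rw [ρ.L1D w.2 j, Submodule.coe_add, Submodule.coe_smul, map_add, map_smul, c1]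
  have h3 := ρ.L3D he m
  have h1 := key (m + 2) ⟨e, he⟩
  have e0 : (⟨e, he⟩ : ρ.wt ν) = 0 := by
    refine hN m (by omega) _ (ν - n) (-2 * m * ν + m * (m + 1))
      (-2 * (m + 1) * ν + (m + 1) * (m + 2)) (-2 * (m + 2) * ν + (m + 2) * (m + 3)) _
      (by rw [hnm]; ring) rfl rfl rfl rfl ?_
    rw [h3, h1, key (m + 1), key m] at h
    rw [← sub_eq_zero] at h ⊢
    apply Subtype.ext
    refine T.D_inj (Subtype.prop _) m ?_
    rw [← h]
    simp only [Submodule.coe_add, Submodule.coe_sub, Submodule.coe_smul, map_add, map_smul,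
      map_sub, c1, c2, c3]
    push_cast
    module
  have : e = 0 := congrArg Subtype.val e0
  rw [this, map_zero]

theorem Tail.line1 {ρ : QRep V} (hC : ρ.Cuspidal) {ν F : ℂ} (T : ρ.Tail ν)
    (hF : ∀ v, ρ.H 0 v = F • v) : ∃ (β : ℂ) (v : ℤ → V) (N : ℤ), ∀ n : ℤ, N ≤ n →
      v n ≠ 0 ∧ v n ∈ ρ.wt (ν - n) ∧ ρ.L (-1) (v n) = (ν - n - β) • v (n + 1) ∧
      ρ.L 1 (v (n + 1)) = (ν - (n + 1) + β) • v n ∧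
      ρ.L 2 (v (n + 2)) = (ν - (n + 2) + 2 * β) • v n ∧ ρ.H 1 (v (n + 1)) = F • v n := by
  obtain ⟨β, ε, hε, hne, h1, h2, h3⟩ := T.D_main hC hF
  obtain ⟨i, hi⟩ : ∃ i : ℕ, ∀ n : ℕ, i ≤ n → ν - n - β ≠ 0 := by
    obtain ⟨i, hi⟩ := exists_nat_gt (‖ν - β‖)
    refine ⟨i, fun n hn h => ?_⟩
    have : ν - β = n := by linear_combination h
    rw [this, Complex.norm_natCast] at hi
    have : n < i := by exact_mod_cast hi
    omega
  let c : ℕ → ℂ := fun n => ∏ j ∈ Finset.range n, if i ≤ j then (ν - j - β)⁻¹ else 1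
  have c0 : ∀ n, c n ≠ 0 := by
    intro n
    refine Finset.prod_ne_zero_iff.mpr fun j _ => ?_
    split_ifs with hj
    · exact inv_ne_zero (hi j hj)
    · exact one_ne_zero
  have cs : ∀ n, i ≤ n → (ν - n - β) * c (n + 1) = c n := by
    intro n hn
    simp only [c, Finset.prod_range_succ]
    rw [if_pos hn]
    have := hi n hn
    field_simp
  refine ⟨β, fun n => c n.toNat • ρ.D n.toNat ε, i, fun n hn => ?_⟩
  obtain ⟨n, rfl⟩ : ∃ m : ℕ, n = m := ⟨n.toNat, by omega⟩
  have hn : i ≤ n := by exact_mod_cast hn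
  have t1 : ((n : ℤ) + 1).toNat = n + 1 := by omega
  have t2 : ((n : ℤ) + 2).toNat = n + 2 := by omega
  simp only [t1, t2, Int.toNat_natCast, Int.cast_natCast]
  refine ⟨?_, ?_, ?_, ?_, ?_, ?_⟩
  · exact smul_ne_zero (c0 n) fun h => hne (T.D_inj hε n h)
  · exact Submodule.smul_mem _ _ (ρ.D_wt hε n)
  · rw [map_smul, ← D_succ, smul_smul, cs n hn]
  · rw [map_smul, L1D ρ hε, h1, map_smul, ← cs n hn]
    module
  · rw [map_smul, L2D ρ hε, h2, h1, map_smul, map_smul, ← cs n hn, ← cs (n + 1) (by omega)]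
    push_cast
    module
  · rw [map_smul, H1D ρ hF, h3, map_smul, ← cs n hn]
    module

theorem line2 (ρ : QRep V) {ν F β : ℂ} {v : ℤ → V} {N : ℤ}
    (hF : ∀ v, ρ.H 0 v = F • v)
    (h1 : ∀ n : ℤ, N ≤ n → ρ.L 1 (v (n + 1)) = (ν - (n + 1) + β) • v n)
    (h2 : ∀ n : ℤ, N ≤ n → ρ.L 2 (v (n + 2)) = (ν - (n + 2) + 2 * β) • v n)
    (h3 : ∀ n : ℤ, N ≤ n → ρ.H 1 (v (n + 1)) = F • v n) (k : ℕ) :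
    (∀ n : ℤ, N ≤ n → ρ.L (k + 1) (v (n + (k + 1))) =
      (ν - (n + (k + 1)) + (k + 1) * β) • v n) ∧
    (∀ n : ℤ, N ≤ n → ρ.H k (v (n + k)) = F • v n) := by
  constructor
  · induction k with
    | zero => intro n hn; simpa using h1 n hn
    | succ k ih =>
      intro n hn
      rcases Nat.eq_zero_or_pos k with rfl | hk
      · have := h2 n hn
        norm_num at this ⊢
        exact this
      · have e1 := ρ.LL 1 (k + 1) (by omega) (v (n + (k + 1) + 1))
        rw [h1 (n + (k + 1)) (by omega), show n + ((k : ℤ) + 1) + 1 = n + 1 + (k + 1) by ring,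
          ih (n + 1) (by omega), map_smul, map_smul, ih n hn, h1 n hn] at e1
        have hk0 : (k : ℂ) ≠ 0 := by exact_mod_cast hk.ne'
        push_cast at e1 ⊢
        rw [show (1 : ℤ) + (k + 1) = k + 1 + 1 by ring,
          show n + 1 + ((k : ℤ) + 1) = n + (k + 1 + 1) by ring] at e1
        have e2 : (k : ℂ) • ρ.L (k + 1 + 1) (v (n + (k + 1 + 1))) =
            (k : ℂ) • ((ν - (n + (k + 1 + 1)) + (k + 1 + 1) * β) • v n) := by
          have : (k : ℂ) + 1 - 1 = k := by ring
          rw [this] at e1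
          rw [← sub_eq_iff_eq_add'.mpr e1]
          module
        exact smul_right_injective V hk0 e2
  · induction k with
    | zero => intro n hn; simpa using hF (v n)
    | succ k ih =>
      intro n hn
      rcases Nat.eq_zero_or_pos k with rfl | hk
      · simpa using h3 n hn
      · have e1 := ρ.LH 1 k (v (n + k + 1))
        rw [h1 (n + k) (by omega), show n + (k : ℤ) + 1 = n + 1 + k by ring,
          ih (n + 1) (by omega), map_smul, map_smul, ih n hn, h1 n hn] at e1
        have hk0 : (k : ℂ) ≠ 0 := by exact_mod_cast hk.ne'
        push_cast at e1 ⊢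
        rw [show (1 : ℤ) + k = k + 1 by ring,
          show n + 1 + (k : ℤ) = n + (k + 1) by ring] at e1
        have e2 : (k : ℂ) • ρ.H (k + 1) (v (n + (k + 1))) = (k : ℂ) • (F • v n) := by
          rw [← sub_eq_iff_eq_add'.mpr e1]
          module
        exact smul_right_injective V hk0 e2

theorem Tail.line {ρ : QRep V} (hC : ρ.Cuspidal) {ν F : ℂ} (T : ρ.Tail ν)
    (hF : ∀ v, ρ.H 0 v = F • v) : ∃ (β : ℂ) (v : ℤ → V) (N : ℤ),
      (∀ n : ℤ, N ≤ n → v n ≠ 0 ∧ v n ∈ ρ.wt (ν - n)) ∧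
      ∀ k n : ℤ, N ≤ n → N ≤ n - k →
        ρ.L k (v n) = (ν - n + k * β) • v (n - k) ∧ ρ.H k (v n) = F • v (n - k) := by
  obtain ⟨β, v, N0, hv⟩ := T.line1 hC hF
  have hP := ρ.line2 hF (fun n hn => (hv n hn).2.2.2.1) (fun n hn => (hv n hn).2.2.2.2.1)
    (fun n hn => (hv n hn).2.2.2.2.2)
  have hpL : ∀ k n : ℤ, 0 < k → N0 ≤ n - k → ρ.L k (v n) = (ν - n + k * β) • v (n - k) := by
    intro k n hk hn
    obtain ⟨j, rfl⟩ : ∃ j : ℕ, k = j + 1 := ⟨(k - 1).toNat, by omega⟩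
    have := (hP j).1 _ hn
    rw [sub_add_cancel] at this
    rw [this]
    congr 1
    push_cast
    ring
  have hpH : ∀ k n : ℤ, 0 ≤ k → N0 ≤ n - k → ρ.H k (v n) = F • v (n - k) := by
    intro k n hk hn
    obtain ⟨j, rfl⟩ : ∃ j : ℕ, k = j := ⟨k.toNat, by omega⟩
    have := (hP j).2 _ hn
    rwa [sub_add_cancel] at this
  have hm1 : ∀ n : ℤ, N0 ≤ n → ρ.L (-1) (v n) = (ν - n - β) • v (n + 1) :=
    fun n hn => (hv n hn).2.2.1
  have hw : ∀ n : ℤ, N0 ≤ n → v n ∈ ρ.wt (ν - n) := fun n hn => (hv n hn).2.1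
  -- the operator `L (-2)`
  obtain ⟨N1, hN1⟩ := T.y_zero hC β 2 (by norm_num)
  obtain ⟨N2, hN2⟩ := T.y_zero hC β 1 (by norm_num)
  let N := max (max N1 N2) (N0 + 10)
  have b0 : N0 + 10 ≤ N := le_max_right _ _
  have b1 : N1 ≤ N := (le_max_left _ _).trans (le_max_left _ _)
  have b2 : N2 ≤ N := (le_max_right _ _).trans (le_max_left _ _)
  clear_value N
  have hm2 : ∀ n : ℤ, N ≤ n → ρ.L (-2) (v n) = (ν - n - 2 * β) • v (n + 2) := by
    let y : ℤ → V := fun n => ρ.L (-2) (v n) - (ν - n - 2 * β) • v (n + 2)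
    have y1 : ∀ n : ℤ, N0 + 3 ≤ n → ρ.L 1 (y n) = (ν - n + β) • y (n - 1) := by
      intro n hn
      have e1 := ρ.LL 1 (-2) (by norm_num) (v n)
      rw [hpL 1 n (by norm_num) (by omega), show (1 : ℤ) + -2 = -1 by norm_num,
        hm1 n (by omega), map_smul] at e1
      simp only [y]
      rw [map_sub, map_smul, e1, hpL 1 (n + 2) (by norm_num) (by omega),
        show n + 2 - 1 = n + 1 by ring, show n - 1 + 2 = n + 1 by ring]
      push_cast
      module
    have y3 : ∀ n : ℤ, N0 + 4 ≤ n → ρ.L 3 (y n) = (ν - n + 3 * β) • y (n - 3) := by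
      intro n hn
      have e1 := ρ.LL 3 (-2) (by norm_num) (v n)
      rw [hpL 3 n (by norm_num) (by omega), show (3 : ℤ) + -2 = 1 by norm_num,
        hpL 1 n (by norm_num) (by omega), map_smul] at e1
      simp only [y]
      rw [map_sub, map_smul, e1, hpL 3 (n + 2) (by norm_num) (by omega),
        show n + 2 - 3 = n - 1 by ring, show n - 3 + 2 = n - 1 by ring]
      push_cast
      module
    intro n hn
    have := hN1 n (by omega) (y n) (Submodule.sub_mem _
      (ρ.L_wt' (hw n (by omega)) (-2) (by push_cast; ring))
      (Submodule.smul_mem _ _ (by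
        convert hw (n + 2) (by omega) using 2
        push_cast; ring))) (by
      rw [y1 n (by omega), map_smul, y1 (n - 1) (by omega), map_smul, map_smul,
        y1 (n - 1 - 1) (by omega), y3 n (by omega), show n - 1 - 1 - 1 = n - 3 by ring]
      push_cast
      module)
    exact sub_eq_zero.mp this
  have hH1 : ∀ n : ℤ, N ≤ n → ρ.H (-1) (v n) = F • v (n + 1) := by
    let y : ℤ → V := fun n => ρ.H (-1) (v n) - F • v (n + 1)
    have y1 : ∀ n : ℤ, N0 + 3 ≤ n → ρ.L 1 (y n) = (ν - n + β) • y (n - 1) := by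
      intro n hn
      have e1 := ρ.LH 1 (-1) (v n)
      rw [hpL 1 n (by norm_num) (by omega), show (1 : ℤ) + -1 = 0 by norm_num,
        hF, map_smul] at e1
      simp only [y]
      rw [map_sub, map_smul, e1, hpL 1 (n + 1) (by norm_num) (by omega),
        show n + 1 - 1 = n by ring, show n - 1 + 1 = n by ring]
      push_cast
      module
    have y3 : ∀ n : ℤ, N0 + 4 ≤ n → ρ.L 3 (y n) = (ν - n + 3 * β) • y (n - 3) := by
      intro n hn
      have e1 := ρ.LH 3 (-1) (v n)
      rw [hpL 3 n (by norm_num) (by omega), show (3 : ℤ) + -1 = 2 by norm_num,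
        hpH 2 n (by norm_num) (by omega), map_smul] at e1
      simp only [y]
      rw [map_sub, map_smul, e1, hpL 3 (n + 1) (by norm_num) (by omega),
        show n + 1 - 3 = n - 2 by ring, show n - 3 + 1 = n - 2 by ring]
      push_cast
      module
    intro n hn
    have := hN2 n (by omega) (y n) (Submodule.sub_mem _
      (ρ.H_wt' (hw n (by omega)) (-1) (by push_cast; ring))
      (Submodule.smul_mem _ _ (by
        convert hw (n + 1) (by omega) using 2
        push_cast; ring))) (by
      rw [y1 n (by omega), map_smul, y1 (n - 1) (by omega), map_smul, map_smul,
        y1 (n - 1 - 1) (by omega), y3 n (by omega), show n - 1 - 1 - 1 = n - 3 by ring]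
      push_cast
      module)
    exact sub_eq_zero.mp this
  have hnL : ∀ (k : ℕ) (n : ℤ), N ≤ n →
      ρ.L (-(k + 1)) (v n) = (ν - n - (k + 1) * β) • v (n + (k + 1)) := by
    intro k
    induction k with
    | zero => intro n hn; simpa using hm1 n (by omega)
    | succ k ih =>
      intro n hn
      rcases Nat.eq_zero_or_pos k with rfl | hk
      · have := hm2 n hn
        norm_num at this ⊢
        exact this
      · have e1 := ρ.LL (-1) (-(k + 1)) (by omega) (v n)
        rw [ih n hn, hm1 n (by omega), map_smul, map_smul, hm1 _ (by omega),
          ih (n + 1) (by omega), show n + 1 + ((k : ℤ) + 1) = n + (k + 1) + 1 by ring,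
          show (-1 : ℤ) + (-(k + 1)) = -(k + 1 + 1) by ring] at e1
        have hk0 : (-k : ℂ) ≠ 0 := neg_ne_zero.mpr (by exact_mod_cast hk.ne')
        push_cast at e1 ⊢
        have e2 : (-k : ℂ) • ρ.L (-(k + 1 + 1)) (v n) =
            (-k : ℂ) • ((ν - n - (k + 1 + 1) * β) • v (n + (k + 1 + 1))) := by
          have : -((k : ℂ) + 1) - -1 = -k := by ring
          rw [this] at e1
          rw [← sub_eq_iff_eq_add'.mpr e1, show n + ((k : ℤ) + 1) + 1 = n + (k + 1 + 1) by ring]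
          module
        exact smul_right_injective V hk0 e2
  have hnH : ∀ (k : ℕ) (n : ℤ), N ≤ n →
      ρ.H (-(k + 1)) (v n) = F • v (n + (k + 1)) := by
    intro k
    induction k with
    | zero => intro n hn; simpa using hH1 n hn
    | succ k ih =>
      intro n hn
      have e1 := ρ.LH (-1) (-(k + 1)) (v n)
      rw [ih n hn, hm1 n (by omega), map_smul, map_smul, hm1 _ (by omega),
        ih (n + 1) (by omega), show n + 1 + ((k : ℤ) + 1) = n + (k + 1) + 1 by ring,
        show (-1 : ℤ) + (-(k + 1)) = -(k + 1 + 1) by ring] at e1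
      have hk0 : (-((k : ℂ) + 1)) ≠ 0 := neg_ne_zero.mpr (by exact_mod_cast Nat.succ_ne_zero k)
      push_cast at e1 ⊢
      have e2 : (-((k : ℂ) + 1)) • ρ.H (-(k + 1 + 1)) (v n) =
          (-((k : ℂ) + 1)) • (F • v (n + (k + 1 + 1))) := by
        rw [← sub_eq_iff_eq_add'.mpr e1, show n + ((k : ℤ) + 1) + 1 = n + (k + 1 + 1) by ring]
        module
      exact smul_right_injective V hk0 e2
  refine ⟨β, v, N, fun n hn => ⟨(hv n (by omega)).1, hw n (by omega)⟩, fun k n hn hk => ?_⟩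
  rcases lt_trichotomy k 0 with h | rfl | h
  · obtain ⟨j, rfl⟩ : ∃ j : ℕ, k = -(j + 1) := ⟨(-k - 1).toNat, by omega⟩
    rw [hnL j n hn, hnH j n hn, sub_neg_eq_add]
    refine ⟨?_, rfl⟩
    congr 1
    push_cast
    ring
  · refine ⟨?_, by simpa using hF (v n)⟩
    rw [(ρ.mem_wt).mp (hw n (by omega))]
    simp
  · exact ⟨hpL k n h (by omega), hpH k n h.le (by omega)⟩

end QRep

section FLemma

theorem f_large (μ β : ℂ) (hμ : μ ≠ 0) : ∃ A : ℤ, ∀ a : ℤ, A ≤ a → μ - a * β ≠ 0 ∧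
    μ ^ 2 - (3 + 2 * β) * μ * a + (β - 1) * (β - 2) * a ^ 2 ≠ 0 := by
  let p : Polynomial ℂ := (Polynomial.C μ - Polynomial.C β * Polynomial.X) *
    (Polynomial.C (μ ^ 2) - Polynomial.C ((3 + 2 * β) * μ) * Polynomial.X +
      Polynomial.C ((β - 1) * (β - 2)) * Polynomial.X ^ 2)
  have hp : p ≠ 0 := by
    intro h
    have := congrArg (Polynomial.eval 0) h
    simp [p] at this
    exact hμ this
  have hfin : {x : ℂ | p.IsRoot x}.Finite := Polynomial.finite_setOfPred_isRoot hp
  have h2 : ((fun a : ℤ => (a : ℂ)) ⁻¹' {x : ℂ | p.IsRoot x}).Finite :=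
    hfin.preimage (Int.cast_injective.injOn)
  obtain ⟨B, hB⟩ := h2.bddAbove
  refine ⟨B + 1, fun a ha => ?_⟩
  have : ¬ p.IsRoot (a : ℂ) := fun h => by
    have := hB (show a ∈ _ from h)
    omega
  rw [Polynomial.IsRoot.def] at this
  simp only [p, Polynomial.eval_mul, Polynomial.eval_add, Polynomial.eval_sub, Polynomial.eval_C,
    Polynomial.eval_X, Polynomial.eval_pow] at this
  constructor
  · intro h
    apply this
    rw [show μ - β * (a : ℂ) = 0 by rw [← h]; ring, zero_mul]
  · intro h
    apply this
    rw [h, mul_zero]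

theorem f_lemma (f : ℤ → ℂ) (μ β : ℂ) (r : ℤ) (hμ : μ ≠ 0)
    (h : ∀ i k : ℤ, r ≤ i → r ≤ k →
      f k * (μ - k - i * β) - f i * (μ - i - k * β) = (i - k) * f (i + k)) :
    ∃ (γ : ℂ) (R : ℤ), ∀ k : ℤ, R ≤ k → f k = γ * (μ - k * β) := by
  obtain ⟨A0, hA0⟩ := f_large μ β hμ
  let A := max A0 (max r 1)
  have a0 : A0 ≤ A := le_max_left _ _
  have a1 : r ≤ A := (le_max_left _ _).trans (le_max_right _ _)
  have a2 : 1 ≤ A := (le_max_right _ _).trans (le_max_right _ _)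
  clear_value A
  have s2 : ∀ a : ℤ, A ≤ a → (μ - a * β) * f (2 * a) = (μ - 2 * a * β) * f a := by
    intro a ha
    have e3 := h a (2 * a) (by omega) (by omega)
    have e4 := h a (3 * a) (by omega) (by omega)
    have e5 := h a (4 * a) (by omega) (by omega)
    have e6 := h (2 * a) (3 * a) (by omega) (by omega)
    rw [show a + 2 * a = 3 * a by ring] at e3
    rw [show a + 3 * a = 4 * a by ring] at e4
    rw [show a + 4 * a = 5 * a by ring] at e5
    rw [show 2 * a + 3 * a = 5 * a by ring] at e6
    push_cast at e3 e4 e5 e6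
    have hZ := (hA0 a (by omega)).2
    rw [← sub_eq_zero]
    refine (mul_eq_zero.mp ?_).resolve_left hZ
    linear_combination (a : ℂ) * (2 * a * (e5 - 3 * e6) - (μ - 4 * a - a * β) * e4)
      + ((μ - 4 * a - a * β) * (μ - 3 * a - a * β) + 6 * a * (μ - 3 * a - 2 * a * β)) * e3
  have s3 : ∀ a : ℤ, A ≤ a → ∀ j : ℕ,
      (μ - a * β) * f ((j + 1) * a) = f a * (μ - (j + 1) * a * β) := by
    intro a ha j
    induction j with
    | zero => simp; ring
    | succ j ih =>
      rcases Nat.eq_zero_or_pos j with rfl | hj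
      · have := s2 a ha
        norm_num
        rw [this]; ring
      · have hpos : a ≤ ((j : ℤ) + 1) * a := by nlinarith
        have e := h a ((j + 1) * a) (by omega) (by omega)
        rw [show a + ((j : ℤ) + 1) * a = (j + 1 + 1) * a by ring] at e
        push_cast at e ⊢
        have hne : (j : ℂ) * a ≠ 0 := by
          have h1 : a ≠ 0 := by omega
          have h2 : j ≠ 0 := by omega
          exact mul_ne_zero (by exact_mod_cast h2) (by exact_mod_cast h1)
        refine mul_left_cancel₀ hne ?_
        linear_combination (μ - a * β) * e - (μ - (j + 1) * a - a * β) * ih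
  refine ⟨f A / (μ - A * β), A, fun k hk => ?_⟩
  have n1 := (hA0 A (by omega)).1
  have n2 := (hA0 k (by omega)).1
  have n3 := (hA0 (k * A) (by nlinarith)).1
  have e1 := s3 A le_rfl (k - 1).toNat
  have e2 := s3 k hk (A - 1).toNat
  have c1 : (((k - 1).toNat : ℤ) + 1) = k := by omega
  have c2 : (((A - 1).toNat : ℤ) + 1) = A := by omega
  have d1 : (((k - 1).toNat : ℂ) + 1) = k := by exact_mod_cast congrArg (Int.cast (R := ℂ)) c1
  have d2 : (((A - 1).toNat : ℂ) + 1) = A := by exact_mod_cast congrArg (Int.cast (R := ℂ)) c2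
  rw [c1, d1] at e1
  rw [c2, d2, mul_comm A k] at e2
  push_cast at n3
  field_simp
  refine mul_left_cancel₀ n3 ?_
  linear_combination (μ - k * β) * e1 - (μ - A * β) * e2

end FLemma

theorem rank_le_one_of_dep {V : Type} [AddCommGroup V] [Module ℂ V] (E : Submodule ℂ V)
    (P : V → ℂ → Prop) (h1 : ∀ w ∈ E, ∃ γ, P w γ)
    (h2 : ∀ w ∈ E, ∀ w' ∈ E, ∀ γ γ', P w γ → P w' γ' → γ' • w = γ • w')
    (h3 : ∀ w ∈ E, P w 0 → w = 0) : Module.rank ℂ E ≤ 1 := by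
  rw [rank_le_one_iff]
  by_cases h : ∃ w ∈ E, w ≠ 0
  · obtain ⟨w, hw, hw0⟩ := h
    obtain ⟨γ, hγ⟩ := h1 w hw
    have hγ0 : γ ≠ 0 := fun h => hw0 (h3 w hw (h ▸ hγ))
    refine ⟨⟨w, hw⟩, fun x => ?_⟩
    obtain ⟨δ, hδ⟩ := h1 x x.2
    refine ⟨δ / γ, Subtype.ext ?_⟩
    have := h2 w hw x x.2 γ δ hγ hδ
    rw [Submodule.coe_smul, div_eq_inv_mul, mul_smul]
    show γ⁻¹ • δ • w = x
    rw [this, smul_smul, inv_mul_cancel₀ hγ0, one_smul]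
  · refine ⟨0, fun x => ⟨0, Subtype.ext ?_⟩⟩
    by_contra hx
    exact h ⟨x, x.2, fun h0 => hx (by simp [h0])⟩

namespace QRep

variable {V : Type} [AddCommGroup V] [Module ℂ V]

/-- A half line of vectors on which the operators act as on an intermediate series module. -/
structure Line (ρ : QRep V) (ν F β : ℂ) (v : ℤ → V) (N : ℤ) : Prop where
  ne : ∀ n : ℤ, N ≤ n → v n ≠ 0
  wt : ∀ n : ℤ, N ≤ n → v n ∈ ρ.wt (ν - n)
  L : ∀ k n : ℤ, N ≤ n → N ≤ n - k → ρ.L k (v n) = (ν - n + k * β) • v (n - k)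
  H : ∀ k n : ℤ, N ≤ n → N ≤ n - k → ρ.H k (v n) = F • v (n - k)

/-- The span of the vectors far down the line. -/
def Sp (v : ℤ → V) (N s : ℤ) : Submodule ℂ V := Submodule.span ℂ (Set.image v {n | N ≤ n ∧ s ≤ n})

theorem Sp_mono (v : ℤ → V) (N : ℤ) {s t : ℤ} (h : s ≤ t) : Sp v N t ≤ Sp v N s :=
  Submodule.span_mono (Set.image_mono fun _ hn => ⟨hn.1, h.trans hn.2⟩)

theorem mem_Sp {v : ℤ → V} {N s n : ℤ} (h1 : N ≤ n) (h2 : s ≤ n) : v n ∈ Sp v N s :=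
  Submodule.subset_span ⟨n, ⟨h1, h2⟩, rfl⟩

theorem Line.L_Sp {ρ : QRep V} {ν F β : ℂ} {v : ℤ → V} {N : ℤ} (ℓ : ρ.Line ν F β v N)
    {s j : ℤ} (h : N ≤ s - j) {x : V} (hx : x ∈ Sp v N s) : ρ.L j x ∈ Sp v N (s - j) := by
  have : Sp v N s ≤ (Sp v N (s - j)).comap (ρ.L j) := by
    refine Submodule.span_le.mpr ?_
    rintro _ ⟨n, ⟨h1, h2⟩, rfl⟩
    show ρ.L j (v n) ∈ Sp v N (s - j)
    rw [ℓ.L j n h1 (by omega)]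
    exact Submodule.smul_mem _ _ (mem_Sp (by omega) (by omega))
  exact this hx

theorem Line.H_Sp {ρ : QRep V} {ν F β : ℂ} {v : ℤ → V} {N : ℤ} (ℓ : ρ.Line ν F β v N)
    {s j : ℤ} (h : N ≤ s - j) {x : V} (hx : x ∈ Sp v N s) : ρ.H j x ∈ Sp v N (s - j) := by
  have : Sp v N s ≤ (Sp v N (s - j)).comap (ρ.H j) := by
    refine Submodule.span_le.mpr ?_
    rintro _ ⟨n, ⟨h1, h2⟩, rfl⟩
    show ρ.H j (v n) ∈ Sp v N (s - j)
    rw [ℓ.H j n h1 (by omega)]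
    exact Submodule.smul_mem _ _ (mem_Sp (by omega) (by omega))
  exact this hx

theorem wt_indep (ρ : QRep V) {τ : ℂ} {x : V} (h1 : x ∈ ρ.wt τ)
    (h2 : x ∈ ⨆ (σ : ℂ) (_ : σ ≠ τ), ρ.wt σ) : x = 0 :=
  (Submodule.disjoint_def.mp ((Module.End.eigenspaces_iSupIndep (ρ.L 0)) τ)) x h1 h2

theorem Line.Sp_wt {ρ : QRep V} {ν F β : ℂ} {v : ℤ → V} {N : ℤ} (ℓ : ρ.Line ν F β v N)
    {s : ℤ} {τ : ℂ} {x : V} (hx : x ∈ Sp v N s) (hw : x ∈ ρ.wt τ) :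
    x ∈ Submodule.span ℂ (Set.image v {n | N ≤ n ∧ ν - n = τ}) := by
  have h1 : Sp v N s ≤ Submodule.span ℂ (Set.image v {n | N ≤ n ∧ ν - n = τ}) ⊔
      ⨆ (σ : ℂ) (_ : σ ≠ τ), ρ.wt σ := by
    refine Submodule.span_le.mpr ?_
    rintro _ ⟨n, ⟨h1, h2⟩, rfl⟩
    by_cases h : ν - n = τ
    · exact Submodule.mem_sup_left (Submodule.subset_span ⟨n, ⟨h1, h⟩, rfl⟩)
    · refine Submodule.mem_sup_right ?_
      exact (le_iSup₂ (f := fun (σ : ℂ) (_ : σ ≠ τ) => ρ.wt σ) (ν - n) h) (ℓ.wt n h1)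
  obtain ⟨a, ha, b, hb, rfl⟩ := Submodule.mem_sup.mp (h1 hx)
  have ha' : a ∈ ρ.wt τ := by
    have : Submodule.span ℂ (Set.image v {n | N ≤ n ∧ ν - n = τ}) ≤ ρ.wt τ := by
      refine Submodule.span_le.mpr ?_
      rintro _ ⟨n, ⟨h1, h2⟩, rfl⟩
      exact h2 ▸ ℓ.wt n h1
    exact this ha
  have hb' : b ∈ ρ.wt τ := by
    have := Submodule.sub_mem _ hw ha'
    rwa [add_sub_cancel_left] at this
  rw [ρ.wt_indep hb' hb, add_zero]
  exact ha

/-- Vectors eventually sent into the line. -/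
def Vp (ρ : QRep V) (v : ℤ → V) (N : ℤ) : Submodule ℂ V where
  carrier := {w | ∃ r : ℤ, ∀ k : ℤ, r ≤ k →
    ρ.L (-k) w ∈ Sp v N (k - r) ∧ ρ.H (-k) w ∈ Sp v N (k - r)}
  zero_mem' := ⟨0, fun k _ => by simp⟩
  add_mem' := by
    rintro a b ⟨r, hr⟩ ⟨s, hs⟩
    refine ⟨max r s, fun k hk => ?_⟩
    have h1 : r ≤ max r s := le_max_left _ _
    have h2 : s ≤ max r s := le_max_right _ _
    obtain ⟨a1, a2⟩ := hr k (by omega)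
    obtain ⟨b1, b2⟩ := hs k (by omega)
    rw [map_add, map_add]
    exact ⟨add_mem (Sp_mono v N (by omega) a1) (Sp_mono v N (by omega) b1),
      add_mem (Sp_mono v N (by omega) a2) (Sp_mono v N (by omega) b2)⟩
  smul_mem' := by
    rintro c a ⟨r, hr⟩
    refine ⟨r, fun k hk => ?_⟩
    rw [map_smul, map_smul]
    exact ⟨Submodule.smul_mem _ _ (hr k hk).1, Submodule.smul_mem _ _ (hr k hk).2⟩

theorem Line.Vp_top {ρ : QRep V} {ν F β : ℂ} {v : ℤ → V} {N : ℤ} (ℓ : ρ.Line ν F β v N)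
    (h2 : ρ.Simple2) : ρ.Vp v N = ⊤ := by
  have hN : v N ∈ ρ.Vp v N := by
    refine ⟨|N|, fun k hk => ?_⟩
    have := neg_abs_le N
    have := abs_nonneg N
    rw [ℓ.L _ N le_rfl (by omega), ℓ.H _ N le_rfl (by omega)]
    exact ⟨Submodule.smul_mem _ _ (mem_Sp (by omega) (by omega)),
      Submodule.smul_mem _ _ (mem_Sp (by omega) (by omega))⟩
  refine (h2 (ρ.Vp v N) ?_ ?_).resolve_left fun h => ?_
  · rintro j w ⟨r, hr⟩
    refine ⟨|r| + |j| + |N| + 1, fun k hk => ?_⟩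
    have b1 := neg_abs_le r
    have b2 := le_abs_self r
    have b3 := neg_abs_le j
    have b4 := le_abs_self j
    have b5 := le_abs_self N
    have b6 := abs_nonneg N
    have l1 := ρ.LL (-k) j (by omega) w
    have l2 := ρ.HL j (-k) w
    rw [show -k + j = -(k - j) by ring] at l1
    rw [show j + -k = -(k - j) by ring] at l2
    rw [l1, l2]
    have k1 := hr k (by omega)
    have k2 := hr (k - j) (by omega)
    constructor
    · exact add_mem (Sp_mono v N (by omega) (ℓ.L_Sp (j := j) (by omega) k1.1))
        (Submodule.smul_mem _ _ (Sp_mono v N (by omega) k2.1))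
    · exact sub_mem (Sp_mono v N (by omega) (ℓ.L_Sp (j := j) (by omega) k1.2))
        (Submodule.smul_mem _ _ (Sp_mono v N (by omega) k2.2))
  · rintro j w ⟨r, hr⟩
    refine ⟨|r| + |j| + |N| + 1, fun k hk => ?_⟩
    have b1 := neg_abs_le r
    have b2 := le_abs_self r
    have b3 := neg_abs_le j
    have b4 := le_abs_self j
    have b5 := le_abs_self N
    have b6 := abs_nonneg N
    have l1 := ρ.LH (-k) j w
    have l2 := ρ.HH (-k) j (by omega) w
    rw [show -k + j = -(k - j) by ring] at l1
    rw [l1, l2]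
    have k1 := hr k (by omega)
    have k2 := hr (k - j) (by omega)
    constructor
    · exact add_mem (Sp_mono v N (by omega) (ℓ.H_Sp (j := j) (by omega) k1.1))
        (Submodule.smul_mem _ _ (Sp_mono v N (by omega) k2.2))
    · exact Sp_mono v N (by omega) (ℓ.H_Sp (j := j) (by omega) k1.2)
  · rw [h] at hN
    exact ℓ.ne N le_rfl ((Submodule.mem_bot ℂ).mp hN)

/-- Coefficients. -/
theorem Line.coef {ρ : QRep V} {ν F β : ℂ} {v : ℤ → V} {N : ℤ} (ℓ : ρ.Line ν F β v N)
    (h2 : ρ.Simple2) {m : ℤ} {w : V} (hw : w ∈ ρ.wt (ν - m)) :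
    ∃ (f g : ℤ → ℂ) (r : ℤ), 1 ≤ r ∧ ∀ k : ℤ, r ≤ k → N ≤ m + k ∧
      ρ.L (-k) w = f k • v (m + k) ∧ ρ.H (-k) w = g k • v (m + k) := by
  have hm : w ∈ ρ.Vp v N := by rw [ℓ.Vp_top h2]; trivial
  obtain ⟨r, hr⟩ := hm
  have key : ∀ k : ℤ, ∀ x ∈ Sp v N (k - r), x ∈ ρ.wt (ν - m - k) →
      ∃ c : ℂ, x = c • v (m + k) := by
    intro k x hx hxw
    have := ℓ.Sp_wt hx hxw
    have hle : Submodule.span ℂ (Set.image v {n | N ≤ n ∧ ν - n = ν - m - k}) ≤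
        Submodule.span ℂ {v (m + k)} := by
      refine Submodule.span_mono ?_
      rintro _ ⟨n, ⟨h1, h2⟩, rfl⟩
      have : (n : ℂ) = ((m + k : ℤ) : ℂ) := by push_cast; linear_combination -h2
      have : n = m + k := by exact_mod_cast this
      rw [this]
      rfl
    obtain ⟨c, hc⟩ := Submodule.mem_span_singleton.mp (hle this)
    exact ⟨c, hc.symm⟩
  have hex : ∀ k : ℤ, ∃ a b : ℂ, r ≤ k → ρ.L (-k) w = a • v (m + k) ∧
      ρ.H (-k) w = b • v (m + k) := by
    intro k
    by_cases hk : r ≤ k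
    · obtain ⟨a, ha⟩ := key k _ (hr k hk).1 (ρ.L_wt' hw (-k) (by push_cast; ring))
      obtain ⟨b, hb⟩ := key k _ (hr k hk).2 (ρ.H_wt' hw (-k) (by push_cast; ring))
      exact ⟨a, b, fun _ => ⟨ha, hb⟩⟩
    · exact ⟨0, 0, fun h => absurd h hk⟩
  choose f g hfg using hex
  refine ⟨f, g, |r| + |N| + |m| + 1, ?_, fun k hk => ⟨?_, hfg k ?_⟩⟩
  · have := abs_nonneg r
    have := abs_nonneg N
    have := abs_nonneg m
    omega
  · have := abs_nonneg r
    have := le_abs_self N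
    have := neg_abs_le m
    omega
  · have := le_abs_self r
    have := abs_nonneg N
    have := abs_nonneg m
    omega

theorem Line.off {ρ : QRep V} {ν F β : ℂ} {v : ℤ → V} {N : ℤ} (ℓ : ρ.Line ν F β v N)
    (h2 : ρ.Simple2) (hK : ∀ w, (∃ r : ℤ, ∀ k : ℤ, r ≤ k → ρ.L (-k) w = 0 ∧ ρ.H (-k) w = 0) → w = 0)
    {μ : ℂ} (hμ : ∀ m : ℤ, μ ≠ ν - m) {w : V} (hw : w ∈ ρ.wt μ) : w = 0 := by
  have hm : w ∈ ρ.Vp v N := by rw [ℓ.Vp_top h2]; trivial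
  obtain ⟨r, hr⟩ := hm
  have key : ∀ k : ℤ, ∀ x ∈ Sp v N (k - r), x ∈ ρ.wt (μ - k) → x = 0 := by
    intro k x hx hxw
    have := ℓ.Sp_wt hx hxw
    have he : {n : ℤ | N ≤ n ∧ ν - n = μ - k} = ∅ := by
      ext n
      simp only [Set.mem_ofPred_eq, Set.mem_empty_iff_false, iff_false, not_and]
      intro _ h
      exact hμ (n - k) (by push_cast; linear_combination -h)
    rw [he, Set.image_empty, Submodule.span_empty] at this
    exact (Submodule.mem_bot ℂ).mp this
  exact hK w ⟨r, fun k hk => ⟨key k _ (hr k hk).1 (ρ.L_wt' hw (-k) (by push_cast; ring)),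
    key k _ (hr k hk).2 (ρ.H_wt' hw (-k) (by push_cast; ring))⟩⟩

end QRep

namespace QRep

variable {V : Type} [AddCommGroup V] [Module ℂ V]

/-- Vectors killed by `H (-k)` for large `k`. -/
def KH (ρ : QRep V) : Submodule ℂ V where
  carrier := {w | ∃ r : ℤ, ∀ k : ℤ, r ≤ k → ρ.H (-k) w = 0}
  zero_mem' := ⟨0, fun k _ => by simp⟩
  add_mem' := by
    rintro a b ⟨r, hr⟩ ⟨s, hs⟩
    refine ⟨max r s, fun k hk => ?_⟩
    rw [map_add, hr k ((le_max_left _ _).trans hk), hs k ((le_max_right _ _).trans hk), add_zero]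
  smul_mem' := by
    rintro c a ⟨r, hr⟩
    exact ⟨r, fun k hk => by rw [map_smul, hr k hk, smul_zero]⟩

theorem KH_cases {ρ : QRep V} (h2 : ρ.Simple2) : ρ.KH = ⊥ ∨ ρ.KH = ⊤ := by
  refine h2 _ ?_ ?_
  · rintro j w ⟨r, hr⟩
    refine ⟨max r (r + j), fun k hk => ?_⟩
    have h1 : r ≤ k := (le_max_left _ _).trans hk
    have h2 : r + j ≤ k := (le_max_right _ _).trans hk
    rw [HL, hr k h1, show j + -k = -(k - j) by ring, hr (k - j) (by omega)]
    simp
  · rintro j w ⟨r, hr⟩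
    refine ⟨max r (j + 1), fun k hk => ?_⟩
    have h1 : r ≤ k := (le_max_left _ _).trans hk
    have h2 : j + 1 ≤ k := (le_max_right _ _).trans hk
    rw [ρ.HH (-k) j (by omega), hr k h1, map_zero]

theorem Line.rank_of_F {ρ : QRep V} {ν F β : ℂ} {v : ℤ → V} {N : ℤ} (ℓ : ρ.Line ν F β v N)
    (h2 : ρ.Simple2) (hF : F ≠ 0) (m : ℤ) : Module.rank ℂ (ρ.wt (ν - m)) ≤ 1 := by
  have hK : ρ.KH = ⊥ := by
    refine (KH_cases h2).resolve_right fun h => ?_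
    have : v N ∈ ρ.KH := by rw [h]; trivial
    obtain ⟨r, hr⟩ := this
    have h3 := hr (|r|) (le_abs_self r)
    have h4 := abs_nonneg r
    rw [ℓ.H _ N le_rfl (by omega)] at h3
    exact smul_ne_zero hF (ℓ.ne (N - -|r|) (by omega)) h3
  have hK' : ∀ w, (∃ r : ℤ, ∀ k : ℤ, r ≤ k → ρ.H (-k) w = 0) → w = 0 := by
    intro w hw
    have : w ∈ ρ.KH := hw
    rw [hK] at this
    exact (Submodule.mem_bot ℂ).mp this
  refine rank_le_one_of_dep _
    (fun w γ => ∃ r : ℤ, ∀ k : ℤ, r ≤ k → ρ.H (-k) w = γ • v (m + k)) ?_ ?_ ?_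
  · intro w hw
    obtain ⟨f, g, r, hr1, hr⟩ := ℓ.coef h2 hw
    refine ⟨g r, r, fun k hk => ?_⟩
    have e := ρ.HH (-k) (-r) (by omega) w
    obtain ⟨k1, -, k2⟩ := hr k hk
    obtain ⟨r1, -, r2⟩ := hr r le_rfl
    rw [k2, r2, map_smul, map_smul, ℓ.H _ _ r1 (by omega), ℓ.H _ _ k1 (by omega),
      show m + r - -k = m + k + r by ring, show m + k - -r = m + k + r by ring,
      smul_smul, smul_smul, ← sub_eq_zero, ← sub_smul] at e
    have := (smul_eq_zero.mp e).resolve_right (ℓ.ne _ (by omega))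
    rw [k2]
    congr 1
    refine mul_right_cancel₀ hF ?_
    linear_combination -this
  · rintro w hw w' hw' γ γ' ⟨r, hr⟩ ⟨s, hs⟩
    rw [← sub_eq_zero]
    refine hK' _ ⟨max r s, fun k hk => ?_⟩
    rw [map_sub, map_smul, map_smul, hr k ((le_max_left _ _).trans hk),
      hs k ((le_max_right _ _).trans hk)]
    module
  · rintro w hw ⟨r, hr⟩
    exact hK' w ⟨r, fun k hk => by rw [hr k hk, zero_smul]⟩

theorem Line.H_zero {ρ : QRep V} {ν β : ℂ} {v : ℤ → V} {N : ℤ} (ℓ : ρ.Line ν 0 β v N)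
    (h2 : ρ.Simple2)
    (hK : ∀ w, (∃ r : ℤ, ∀ k : ℤ, r ≤ k → ρ.L (-k) w = 0 ∧ ρ.H (-k) w = 0) → w = 0) :
    ∀ k w, ρ.H k w = 0 := by
  let W : Submodule ℂ V := ⨅ k, LinearMap.ker (ρ.H k)
  have hW : ∀ x, x ∈ W ↔ ∀ k, ρ.H k x = 0 := by intro x; simp [W]
  have hN : v N ∈ W := by
    rw [hW]
    intro k
    refine hK _ ⟨|k| + 1, fun i hi => ?_⟩
    have b1 := le_abs_self k
    have b2 := abs_nonneg k
    rw [ρ.LH, ρ.HH (-i) k (by omega), ℓ.L _ N le_rfl (by omega), ℓ.H (-i) N le_rfl (by omega),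
      ℓ.H (-i + k) N le_rfl (by omega), map_smul, ℓ.H k _ (by omega) (by omega)]
    simp
  have : W = ⊤ := by
    refine (h2 W ?_ ?_).resolve_left fun h => ?_
    · intro j w hw
      rw [hW] at hw ⊢
      intro k
      rw [HL, hw, hw]
      simp
    · intro j w hw
      rw [hW] at hw ⊢
      intro k
      rw [hw, map_zero]
    · rw [h] at hN
      exact ℓ.ne N le_rfl ((Submodule.mem_bot ℂ).mp hN)
  intro k w
  exact (hW w).mp (this ▸ Submodule.mem_top) k

theorem Line.coef_mu {ρ : QRep V} {ν F β : ℂ} {v : ℤ → V} {N : ℤ} (ℓ : ρ.Line ν F β v N)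
    (h2 : ρ.Simple2) {m : ℤ} (hm : ν - m ≠ 0) {w : V} (hw : w ∈ ρ.wt (ν - m)) :
    ∃ (γ : ℂ) (r : ℤ), 1 ≤ r ∧ ∀ k : ℤ, r ≤ k → N ≤ m + k ∧
      ρ.L (-k) w = (γ * (ν - m - k * β)) • v (m + k) := by
  obtain ⟨f, g, r, hr1, hr⟩ := ℓ.coef h2 hw
  obtain ⟨γ, R, hR⟩ := f_lemma f (ν - m) β r hm (by
    intro i k hi hk
    have e := ρ.LL (-i) (-k) (by omega) w
    obtain ⟨k1, k2, -⟩ := hr k hk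
    obtain ⟨i1, i2, -⟩ := hr i hi
    obtain ⟨j1, j2, -⟩ := hr (i + k) (by omega)
    rw [show -i + -k = -(i + k) by ring, k2, i2, j2, map_smul, map_smul, ℓ.L _ _ i1 (by omega),
      ℓ.L _ _ k1 (by omega), show m + i - -k = m + (i + k) by ring,
      show m + k - -i = m + (i + k) by ring, ← sub_eq_zero] at e
    push_cast at e
    have e2 : (f k * (ν - m - k - i * β) - f i * (ν - m - i - k * β) - (i - k) * f (i + k)) •
        v (m + (i + k)) = 0 := by
      rw [← e]
      module
    exact sub_eq_zero.mp ((smul_eq_zero.mp e2).resolve_right (ℓ.ne _ j1)))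
  refine ⟨γ, max r R, hr1.trans (le_max_left _ _), fun k hk => ?_⟩
  have h1 : r ≤ k := (le_max_left _ _).trans hk
  have h2 : R ≤ k := (le_max_right _ _).trans hk
  refine ⟨(hr k h1).1, ?_⟩
  rw [(hr k h1).2.1, hR k h2]

theorem Line.rank_mu {ρ : QRep V} {ν F β : ℂ} {v : ℤ → V} {N : ℤ} (ℓ : ρ.Line ν F β v N)
    (h2 : ρ.Simple2) (hH : ∀ k w, ρ.H k w = 0)
    (hK : ∀ w, (∃ r : ℤ, ∀ k : ℤ, r ≤ k → ρ.L (-k) w = 0 ∧ ρ.H (-k) w = 0) → w = 0)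
    {m : ℤ} (hm : ν - m ≠ 0) : Module.rank ℂ (ρ.wt (ν - m)) ≤ 1 := by
  refine rank_le_one_of_dep _
    (fun w γ => ∃ r : ℤ, ∀ k : ℤ, r ≤ k →
      ρ.L (-k) w = (γ * (ν - m - k * β)) • v (m + k)) ?_ ?_ ?_
  · intro w hw
    obtain ⟨γ, r, -, hr⟩ := ℓ.coef_mu h2 hm hw
    exact ⟨γ, r, fun k hk => (hr k hk).2⟩
  · rintro w hw w' hw' γ γ' ⟨r, hr⟩ ⟨s, hs⟩
    rw [← sub_eq_zero]
    refine hK _ ⟨max r s, fun k hk => ⟨?_, hH _ _⟩⟩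
    rw [map_sub, map_smul, map_smul, hr k ((le_max_left _ _).trans hk),
      hs k ((le_max_right _ _).trans hk)]
    module
  · rintro w hw ⟨r, hr⟩
    exact hK w ⟨r, fun k hk => ⟨by rw [hr k hk, zero_mul, zero_smul], hH _ _⟩⟩

/-- Weight-zero vectors with linear coefficients. -/
def U0 (ρ : QRep V) (v : ℤ → V) (m : ℤ) : Submodule ℂ V where
  carrier := {w | w ∈ ρ.wt 0 ∧ ∃ (γ : ℂ) (r : ℤ), ∀ k : ℤ, r ≤ k →
    ρ.L (-k) w = (γ * k) • v (m + k)}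
  zero_mem' := ⟨zero_mem _, 0, 0, fun k _ => by simp⟩
  add_mem' := by
    rintro a b ⟨ha, γ, r, hr⟩ ⟨hb, δ, s, hs⟩
    refine ⟨add_mem ha hb, γ + δ, max r s, fun k hk => ?_⟩
    rw [map_add, hr k ((le_max_left _ _).trans hk), hs k ((le_max_right _ _).trans hk)]
    module
  smul_mem' := by
    rintro c a ⟨ha, γ, r, hr⟩
    refine ⟨Submodule.smul_mem _ _ ha, c * γ, r, fun k hk => ?_⟩
    rw [map_smul, hr k hk]
    module

theorem Line.rank_zero {ρ : QRep V} {ν F β : ℂ} {v : ℤ → V} {N : ℤ} (ℓ : ρ.Line ν F β v N)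
    (h2 : ρ.Simple2) (hH : ∀ k w, ρ.H k w = 0)
    (hK : ∀ w, (∃ r : ℤ, ∀ k : ℤ, r ≤ k → ρ.L (-k) w = 0 ∧ ρ.H (-k) w = 0) → w = 0)
    {m : ℤ} (hm : ν = m) : Module.rank ℂ (ρ.wt 0) ≤ 1 := by
  let S : Submodule ℂ V := ⨆ (σ : ℂ) (_ : σ ≠ 0), ρ.wt σ
  have hS : ∀ σ : ℂ, σ ≠ 0 → ρ.wt σ ≤ S := fun σ h =>
    le_iSup₂ (f := fun (σ : ℂ) (_ : σ ≠ 0) => ρ.wt σ) σ h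
  let U := S ⊔ ρ.U0 v m
  have hU : U = ⊤ := by
    refine (h2 U ?_ ?_).resolve_left fun h => ?_
    · intro j
      have : U ≤ U.comap (ρ.L j) := by
        refine sup_le (iSup₂_le fun σ hσ => ?_) ?_
        · intro w hw
          show ρ.L j w ∈ U
          by_cases hj : σ + j = 0
          · refine Submodule.mem_sup_right ⟨ρ.L_wt' hw j hj.symm, ?_⟩
            have hσm : σ = ν - (m + j : ℤ) := by
              push_cast
              rw [hm]
              linear_combination hj
            rw [hσm] at hw hσ
            obtain ⟨γ, r, hr1, hr⟩ := ℓ.coef_mu h2 hσ hw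
            refine ⟨γ * j * β * (1 - β), |r| + |j| + |N| + |m| + 1, fun k hk => ?_⟩
            have b1 := le_abs_self r
            have b2 := le_abs_self j
            have b3 := neg_abs_le j
            have b4 := le_abs_self N
            have b5 := neg_abs_le m
            have b6 := abs_nonneg r
            have b7 := abs_nonneg N
            have b8 := abs_nonneg m
            obtain ⟨k1, k2⟩ := hr k (by omega)
            obtain ⟨j1, j2⟩ := hr (k - j) (by omega)
            rw [ρ.LL (-k) j (by omega), show -k + j = -(k - j) by ring, k2, j2, map_smul,
              ℓ.L j _ k1 (by omega), show m + j + k - j = m + k by ring,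
              show m + j + (k - j) = m + k by ring, hm]
            push_cast
            module
          · exact Submodule.mem_sup_left (hS _ hj (ρ.L_wt hw j))
        · rintro w ⟨hw, -⟩
          show ρ.L j w ∈ U
          by_cases hj : j = 0
          · rw [hj, (ρ.mem_wt).mp hw, zero_smul]
            exact zero_mem _
          · refine Submodule.mem_sup_left (hS (0 + j) ?_ (ρ.L_wt hw j))
            rw [zero_add]
            exact_mod_cast hj
      exact fun w hw => this hw
    · intro j w _
      rw [hH]
      exact zero_mem _
    · have b1 := le_abs_self N
      have b2 := le_abs_self m
      have b3 := abs_nonneg N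
      have b4 := abs_nonneg m
      have hn : N ≤ |N| + |m| + 1 := by omega
      have : v (|N| + |m| + 1) ∈ U := by
        refine Submodule.mem_sup_left (hS _ ?_ (ℓ.wt _ hn))
        rw [hm]
        intro h0
        have : m = |N| + |m| + 1 := by exact_mod_cast sub_eq_zero.mp h0
        omega
      rw [h] at this
      exact ℓ.ne _ hn ((Submodule.mem_bot ℂ).mp this)
  refine rank_le_one_of_dep _
    (fun w γ => ∃ r : ℤ, ∀ k : ℤ, r ≤ k → ρ.L (-k) w = (γ * k) • v (m + k)) ?_ ?_ ?_
  · intro w hw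
    have : w ∈ U := by rw [hU]; trivial
    obtain ⟨a, ha, b, hb, rfl⟩ := Submodule.mem_sup.mp this
    have ha' : a ∈ ρ.wt 0 := by
      have := Submodule.sub_mem _ hw hb.1
      rwa [add_sub_cancel_right] at this
    rw [ρ.wt_indep ha' ha, zero_add]
    exact hb.2
  · rintro w hw w' hw' γ γ' ⟨r, hr⟩ ⟨s, hs⟩
    rw [← sub_eq_zero]
    refine hK _ ⟨max r s, fun k hk => ⟨?_, hH _ _⟩⟩
    rw [map_sub, map_smul, map_smul, hr k ((le_max_left _ _).trans hk),
      hs k ((le_max_right _ _).trans hk)]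
    module
  · rintro w hw ⟨r, hr⟩
    exact hK w ⟨r, fun k hk => ⟨by rw [hr k hk, zero_mul, zero_smul], hH _ _⟩⟩

theorem Tail.final {ρ : QRep V} {ν : ℂ} (hS : ρ.IsSimple) (hC : ρ.Cuspidal) (T : ρ.Tail ν) :
    (∀ (j : ℤ) (v : V), ρ.Q j v = 0) ∧ ∀ μ : ℂ, Module.rank ℂ (ρ.wt μ) ≤ 1 := by
  have hQ := T.Q_eq_zero hS hC
  refine ⟨hQ, fun μ => ?_⟩
  have h2 := T.simple2 hS hC
  obtain ⟨F, hF⟩ := T.H0_scalar hS hC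
  obtain ⟨β, v, N, hv, hLH⟩ := T.line hC hF
  have ℓ : ρ.Line ν F β v N := ⟨fun n hn => (hv n hn).1, fun n hn => (hv n hn).2,
    fun k n h h' => (hLH k n h h').1, fun k n h h' => (hLH k n h h').2⟩
  have hK : ∀ w, (∃ r : ℤ, ∀ k : ℤ, r ≤ k → ρ.L (-k) w = 0 ∧ ρ.H (-k) w = 0) → w = 0 := by
    rintro w ⟨r, hr⟩
    have : w ∈ ρ.Km := mem_Km.mpr ⟨r, mem_Kr.mpr fun k hk => ⟨(hr k hk).1, (hr k hk).2, hQ _ _⟩⟩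
    rw [T.Km_eq_bot hS hC] at this
    exact (Submodule.mem_bot ℂ).mp this
  by_cases hμ : ∃ m : ℤ, μ = ν - m
  · obtain ⟨m, rfl⟩ := hμ
    by_cases hF0 : F = 0
    · subst hF0
      have hH := ℓ.H_zero h2 hK
      by_cases hm : ν - m = 0
      · rw [hm]
        exact ℓ.rank_zero h2 hH hK (sub_eq_zero.mp hm)
      · exact ℓ.rank_mu h2 hH hK hm
    · exact ℓ.rank_of_F h2 hF0 m
  · have hbot : ρ.wt μ = ⊥ := by
      rw [Submodule.eq_bot_iff]
      exact fun w hw => ℓ.off h2 hK (fun m h => hμ ⟨m, h⟩) hw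
    rw [hbot]
    simp

end QRep

/-- Proposition 3.4 of the paper. If `V` is a (nontrivial) simple
cuspidal weight `𝔮`-module, then the odd operators `Q_j` act by zero and every
weight space of `V` is at most one-dimensional. -/
theorem stmt7 {V : Type} [AddCommGroup V] [Module ℂ V] (ρ : QRep V)
    (hsimple : ρ.IsSimple) (hcusp : ρ.Cuspidal) :
    (∀ (j : ℤ) (v : V), ρ.Q j v = 0) ∧
      ∀ μ : ℂ, Module.rank ℂ ↥(ρ.wt μ) ≤ 1 := by
  obtain ⟨μ, h | h⟩ := QRep.step0 hsimple hcusp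
  · obtain ⟨ν, T⟩ := QRep.exists_tail hcusp h
    exact T.final hsimple hcusp
  · have h' : {n : ℕ | ρ.flip.wt (-μ - n) ≠ ⊥}.Infinite := by
      have he : ∀ n : ℕ, ρ.flip.wt (-μ - n) = ρ.wt (μ + n) := fun n => by
        rw [QRep.flip_wt]
        congr 1
        ring
      simpa only [he] using h
    obtain ⟨ν, T⟩ := QRep.exists_tail (QRep.flip_cusp hcusp) h'
    obtain ⟨hQ, hr⟩ := T.final (QRep.flip_simple hsimple) (QRep.flip_cusp hcusp)
    refine ⟨fun j v => ?_, fun τ => ?_⟩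
    · have h1 := hQ (-j) v
      simpa only [QRep.flip, neg_neg] using h1
    · have h1 := hr (-τ)
      rwa [QRep.flip_wt, neg_neg] at h1
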